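/- There exist universal constants C, C', c > 0 and ρ ∈ (0,1) such that the following holds. Let x ∈ ℝ^n, let a₁, …, a_m be independent standard Gaussian vectors a_ℓ ∼ N(0, I_n), and let y_ℓ = |a_ℓ^T x|². Suppose m ≥ C n log n. Consider the Wirtinger flow iteration z_{k+1} = z_k − (α_k/m) Σ_{ℓ=1}^m (|a_ℓ^T z_k|² − y_ℓ)(a_ℓ^T z_k) a_ℓ with a suitable constant stepsize α_k = α/‖z₀‖₂², initialized by the spectral method: z₀ is a top eigenvector of (1/m) Σ_ℓ y_ℓ a_ℓ a_ℓ^T rescaled so that ‖z₀‖₂² = (1/m) Σ_ℓ y_ℓ. Then with probability at least 1 − C' n^{−c}, the iterates converge linearly to x up to global sign: dist(z_k, x) ≤ ρ^k dist(z₀, x) for all k ≥ 0, where dist(z, x) = min(‖z − x‖₂, ‖z + x‖₂), and dist(z₀, x) ≤ (1/8)‖x‖₂. -/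

import Mathlib

noncomputable section

open scoped BigOperators ENNReal NNReal
open Matrix MeasureTheory ProbabilityTheory

/-- Euclidean (ℓ₂) norm of a real vector. -/
def l2norm {m : ℕ} (y : Fin m → ℝ) : ℝ :=
  Real.sqrt (∑ i, (y i) ^ 2)

/-- Distance up to global sign. -/
def signDist {n : ℕ} (z x : Fin n → ℝ) : ℝ :=
  min (l2norm (z - x)) (l2norm (z + x))

/-- The law of `m` independent standard Gaussian vectors `a_ℓ ∼ N(0, I_n)`. -/
def gaussianVectors (n m : ℕ) : Measure (Fin m → Fin n → ℝ) :=
  Measure.pi fun _ : Fin m => Measure.pi fun _ : Fin n => gaussianReal 0 1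

/-!
For a gradient step at `z` to contract towards the unit signal `x`, it suffices that `z` is close
to `x` and *incoherent* with the sample, `|⟨a_ℓ, z - x⟩| ≲ √(log m)` for all `ℓ`: there the Hessian
of the loss is well conditioned. Contraction alone does not preserve incoherence, since `z_k`
depends on every `a_ℓ`. One therefore compares the flow with the flow run on the sample with `a_ℓ`
left out: this one is independent of `a_ℓ`, so that it is incoherent with `a_ℓ` with high
probability, and by contraction it stays very close to the original flow. Both facts propagate
together for `m` steps, after which `‖z_k - x‖` is so small that incoherence is automatic.

A top eigenvector is not an explicit function of the sample, so for independence the spectral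
initialization is replaced by many steps of the power method started at `x`, which differ from it
by a negligible error.
-/

namespace WirtingerFlow

open scoped RealInnerProductSpace
open InnerProductSpace (rankOne)

section Spiked

variable {V : Type*} [NormedAddCommGroup V] [InnerProductSpace ℝ V]

lemma abs_inner_apply_self_le (T : V →L[ℝ] V) (u : V) : |⟪T u, u⟫| ≤ ‖T‖ * ‖u‖ ^ 2 :=
  calc |⟪T u, u⟫| ≤ ‖T u‖ * ‖u‖ := abs_real_inner_le_norm _ _
    _ ≤ ‖T‖ * ‖u‖ * ‖u‖ := by gcongr; exact T.le_opNorm u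
    _ = ‖T‖ * ‖u‖ ^ 2 := by ring

lemma opNorm_le_of_abs_inner_le {T : V →L[ℝ] V} (hT : T.IsSymmetric) {C : ℝ} (hC : 0 ≤ C)
    (h : ∀ u, |⟪T u, u⟫| ≤ C * ‖u‖ ^ 2) : ‖T‖ ≤ C := by
  rw [T.norm_eq_iSup_rayleighQuotient hT]
  refine ciSup_le fun u => ?_
  rw [ContinuousLinearMap.rayleighQuotient, abs_div, abs_of_nonneg (sq_nonneg ‖u‖)]
  exact div_le_of_le_mul₀ (sq_nonneg _) hC (h u)

lemma opNorm_le_of_abs_inner_le_of_norm_eq_one {T : V →L[ℝ] V} (hT : T.IsSymmetric) {C : ℝ}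
    (hC : 0 ≤ C) (h : ∀ u, ‖u‖ = 1 → |⟪T u, u⟫| ≤ C) : ‖T‖ ≤ C := by
  refine opNorm_le_of_abs_inner_le hT hC fun u => ?_
  rcases eq_or_ne u 0 with rfl | hu
  · simp
  have hu' := h (‖u‖⁻¹ • u) (norm_smul_inv_norm (𝕜 := ℝ) hu)
  rw [map_smul, real_inner_smul_left, real_inner_smul_right, ← mul_assoc, ← mul_inv, abs_mul,
    abs_of_nonneg (by positivity), ← sq, inv_mul_le_iff₀ (by positivity)] at hu'
  rwa [mul_comm]

/-- The operator `1 + 2 x xᵀ`. For a unit vector `x` and a standard Gaussian `a` it is the mean of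
`⟨a, x⟩² a aᵀ`, hence the limit of the matrix used by the spectral initialization. -/
def spikedId (x : V) : V →L[ℝ] V := ContinuousLinearMap.id ℝ V + (2 : ℝ) • rankOne ℝ x x

lemma spikedId_apply (x u : V) : spikedId x u = u + (2 * ⟪x, u⟫) • x := by
  simp [spikedId, smul_smul]

lemma isSymmetric_spikedId (x : V) : (spikedId x : V →ₗ[ℝ] V).IsSymmetric := fun u w => by
  simp only [ContinuousLinearMap.coe_coe, spikedId_apply, inner_add_left, inner_add_right,
    real_inner_smul_left, real_inner_smul_right, real_inner_comm u x]
  ring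

lemma inner_spikedId_self (x u : V) : ⟪spikedId x u, u⟫ = ‖u‖ ^ 2 + 2 * ⟪x, u⟫ ^ 2 := by
  rw [spikedId_apply, inner_add_left, real_inner_smul_left, real_inner_self_eq_norm_sq]
  ring

lemma inner_sq_le_norm_sq {x : V} (hx : ‖x‖ = 1) (u : V) : ⟪x, u⟫ ^ 2 ≤ ‖u‖ ^ 2 := by
  have h := abs_real_inner_le_norm x u
  rw [hx, one_mul] at h
  exact sq_le_sq' (abs_le.1 h).1 (abs_le.1 h).2

variable {T : V →L[ℝ] V} {x : V} {ε : ℝ}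

lemma norm_apply_sub_spikedId_le (hT : ‖T - spikedId x‖ ≤ ε) (u : V) :
    ‖T u - (u + (2 * ⟪x, u⟫) • x)‖ ≤ ε * ‖u‖ := by
  rw [← spikedId_apply]
  exact (T - spikedId x).le_of_opNorm_le hT u

lemma abs_inner_apply_sub_spikedId_le (hT : ‖T - spikedId x‖ ≤ ε) (u : V) :
    |⟪T u, u⟫ - (‖u‖ ^ 2 + 2 * ⟪x, u⟫ ^ 2)| ≤ ε * ‖u‖ ^ 2 := by
  rw [← inner_spikedId_self, ← inner_sub_left]
  exact (abs_inner_apply_self_le (T - spikedId x) u).trans (by gcongr)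

lemma abs_inner_apply_sub_three_le (hx : ‖x‖ = 1) (hT : ‖T - spikedId x‖ ≤ ε) {u : V}
    (hu : ⟪x, u⟫ = 1) : |⟪x, T u⟫ - 3| ≤ ε * ‖u‖ := by
  have h := abs_real_inner_le_norm x (T u - (u + (2 * ⟪x, u⟫) • x))
  rw [hx, one_mul, inner_sub_right, inner_add_right, inner_smul_right, hu,
    real_inner_self_eq_norm_sq, hx] at h
  norm_num at h
  simpa [hu] using h.trans (by simpa [hu] using norm_apply_sub_spikedId_le hT u)

end Spiked

section PowerIteration

variable {V : Type*} [NormedAddCommGroup V] [InnerProductSpace ℝ V]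

/-- One step of the power method for `T`, normalized so that the result has inner product `1`
with `x`. -/
def powerStep (T : V →L[ℝ] V) (x u : V) : V := ⟪x, T u⟫⁻¹ • T u

/-- The power method for `T` started at `x`. Unlike a top eigenvector, it is an explicit
(measurable) function of `T`. -/
def powerIter (T : V →L[ℝ] V) (x : V) (k : ℕ) : V := (powerStep T x)^[k] x

lemma powerIter_succ (T : V →L[ℝ] V) (x : V) (k : ℕ) :
    powerIter T x (k + 1) = powerStep T x (powerIter T x k) :=
  Function.iterate_succ_apply' _ _ _

variable {T : V →L[ℝ] V} {x u v : V}

lemma inner_apply_mem_Icc (hx : ‖x‖ = 1) (hT : ‖T - spikedId x‖ ≤ 1 / 20) (hu : ⟪x, u⟫ = 1)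
    (hun : ‖u‖ ≤ 2) : ⟪x, T u⟫ ∈ Set.Icc (29 / 10 : ℝ) 4 := by
  have h := abs_le.1 (abs_inner_apply_sub_three_le hx hT hu)
  exact ⟨by linarith [h.1], by linarith [h.2]⟩

lemma norm_apply_le (hx : ‖x‖ = 1) (hT : ‖T - spikedId x‖ ≤ 1 / 20) (hu : ⟪x, u⟫ = 1)
    (hun : ‖u‖ ≤ 2) : ‖T u‖ ≤ 41 / 10 := by
  have h₁ := norm_apply_sub_spikedId_le hT u
  have h₂ : ‖u + (2 * ⟪x, u⟫) • x‖ ≤ ‖u‖ + 2 := by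
    simpa [hu, hx, norm_smul] using norm_add_le u ((2 * ⟪x, u⟫) • x)
  linarith [norm_sub_norm_le (T u) (u + (2 * ⟪x, u⟫) • x)]

lemma inner_powerStep (hx : ‖x‖ = 1) (hT : ‖T - spikedId x‖ ≤ 1 / 20) (hu : ⟪x, u⟫ = 1)
    (hun : ‖u‖ ≤ 2) : ⟪x, powerStep T x u⟫ = 1 := by
  rw [powerStep, inner_smul_right]
  exact inv_mul_cancel₀ (by linarith [(inner_apply_mem_Icc hx hT hu hun).1])

/-- Differences of vectors with the same inner product with `x` are orthogonal to `x`, where `T` is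
close to the identity, whereas the normalizing factor `⟪x, T u⟫` is close to `3`. -/
lemma norm_powerStep_sub_powerStep_le (hx : ‖x‖ = 1) (hT : ‖T - spikedId x‖ ≤ 1 / 20)
    (hu : ⟪x, u⟫ = 1) (hv : ⟪x, v⟫ = 1) (hun : ‖u‖ ≤ 2) (hvn : ‖v‖ ≤ 2) :
    ‖powerStep T x u - powerStep T x v‖ ≤ 1 / 2 * ‖u - v‖ := by
  have hβ := (inner_apply_mem_Icc hx hT hu hun).1
  have hγ := (inner_apply_mem_Icc hx hT hv hvn).1
  rw [powerStep, powerStep]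
  set β := ⟪x, T u⟫
  set γ := ⟪x, T v⟫
  have hβ0 : 0 < β := by linarith
  have hγ0 : 0 < γ := by linarith
  have horth : ⟪x, u - v⟫ = 0 := by rw [inner_sub_right, hu, hv, sub_self]
  have hT_diff : ‖T (u - v) - (u - v)‖ ≤ 1 / 20 * ‖u - v‖ := by
    simpa [horth] using norm_apply_sub_spikedId_le hT (u - v)
  have hT_norm : ‖T (u - v)‖ ≤ 21 / 20 * ‖u - v‖ := by
    linarith [norm_sub_norm_le (T (u - v)) (u - v)]
  have hγβ : |γ - β| ≤ 1 / 20 * ‖u - v‖ := by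
    have h := abs_real_inner_le_norm x (T (u - v) - (u - v))
    rw [hx, one_mul, inner_sub_right, horth, sub_zero, map_sub, inner_sub_right, abs_sub_comm,
      ← map_sub] at h
    exact h.trans hT_diff
  have hβ_inv : β⁻¹ ≤ 10 / 29 := by rw [inv_le_comm₀ hβ0 (by norm_num)]; linarith
  have hγ_inv : γ⁻¹ ≤ 10 / 29 := by rw [inv_le_comm₀ hγ0 (by norm_num)]; linarith
  have h_inv : |β⁻¹ - γ⁻¹| ≤ 10 / 29 * (10 / 29) * (1 / 20 * ‖u - v‖) := by
    have h : β⁻¹ - γ⁻¹ = β⁻¹ * γ⁻¹ * (γ - β) := by field_simp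
    rw [h, abs_mul, abs_of_nonneg (by positivity : 0 ≤ β⁻¹ * γ⁻¹)]
    gcongr
  calc ‖β⁻¹ • T u - γ⁻¹ • T v‖ = ‖β⁻¹ • T (u - v) + (β⁻¹ - γ⁻¹) • T v‖ := by
        rw [map_sub]; congr 1; module
    _ ≤ ‖β⁻¹ • T (u - v)‖ + ‖(β⁻¹ - γ⁻¹) • T v‖ := norm_add_le _ _
    _ = β⁻¹ * ‖T (u - v)‖ + |β⁻¹ - γ⁻¹| * ‖T v‖ := by
        rw [norm_smul, norm_smul, Real.norm_of_nonneg (by positivity), Real.norm_eq_abs]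
    _ ≤ 10 / 29 * (21 / 20 * ‖u - v‖) + 10 / 29 * (10 / 29) * (1 / 20 * ‖u - v‖) * (41 / 10) := by
        gcongr
        exact norm_apply_le hx hT hv hvn
    _ ≤ 1 / 2 * ‖u - v‖ := by linarith [norm_nonneg (u - v)]

lemma norm_powerStep_self_sub_le (hx : ‖x‖ = 1) (hT : ‖T - spikedId x‖ ≤ 1 / 20) :
    ‖powerStep T x x - x‖ ≤ 1 / 2 := by
  have hxx : ⟪x, x⟫ = 1 := by rw [real_inner_self_eq_norm_sq, hx, one_pow]
  have hβ := (inner_apply_mem_Icc hx hT hxx (by linarith)).1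
  have hβ3 := abs_inner_apply_sub_three_le hx hT hxx
  have hTx := norm_apply_sub_spikedId_le hT x
  rw [hx, mul_one] at hβ3 hTx
  rw [powerStep]
  set β := ⟪x, T x⟫
  have hβ0 : 0 < β := by linarith
  have hβ_inv : β⁻¹ ≤ 10 / 29 := by rw [inv_le_comm₀ hβ0 (by norm_num)]; linarith
  calc ‖β⁻¹ • T x - x‖ = ‖β⁻¹ • ((T x - (x + (2 * ⟪x, x⟫) • x)) + (3 - β) • x)‖ := by
        rw [hxx]; congr 1; match_scalars <;> field_simp; ring
    _ ≤ β⁻¹ * (‖T x - (x + (2 * ⟪x, x⟫) • x)‖ + |3 - β|) := by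
        rw [norm_smul, Real.norm_of_nonneg (by positivity)]
        gcongr
        refine (norm_add_le _ _).trans_eq ?_
        rw [norm_smul, hx, mul_one, Real.norm_eq_abs]
    _ ≤ 10 / 29 * (1 / 20 + 1 / 20) := by
        gcongr
        rwa [abs_sub_comm]
    _ ≤ 1 / 2 := by norm_num

lemma inner_powerIter_and_norm_sub_le (hx : ‖x‖ = 1) (hT : ‖T - spikedId x‖ ≤ 1 / 20) (k : ℕ) :
    ⟪x, powerIter T x k⟫ = 1 ∧ ‖powerIter T x k - x‖ ≤ 1 := by
  have hxx : ⟪x, x⟫ = 1 := by rw [real_inner_self_eq_norm_sq, hx, one_pow]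
  induction k with
  | zero => simp [powerIter, hx]
  | succ k ih =>
    have hk : ‖powerIter T x k‖ ≤ 2 := by linarith [norm_sub_norm_le (powerIter T x k) x, ih.2]
    rw [powerIter_succ]
    refine ⟨inner_powerStep hx hT ih.1 hk, ?_⟩
    have hstep := norm_powerStep_sub_powerStep_le hx hT ih.1 hxx hk (by linarith)
    have hself := norm_powerStep_self_sub_le hx hT
    linarith [ih.2, norm_sub_le_norm_sub_add_norm_sub (powerStep T x (powerIter T x k))
      (powerStep T x x) x]

lemma inner_powerIter (hx : ‖x‖ = 1) (hT : ‖T - spikedId x‖ ≤ 1 / 20) (k : ℕ) :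
    ⟪x, powerIter T x k⟫ = 1 :=
  (inner_powerIter_and_norm_sub_le hx hT k).1

lemma norm_powerIter_le (hx : ‖x‖ = 1) (hT : ‖T - spikedId x‖ ≤ 1 / 20) (k : ℕ) :
    ‖powerIter T x k‖ ≤ 2 := by
  linarith [(inner_powerIter_and_norm_sub_le hx hT k).2, norm_sub_norm_le (powerIter T x k) x]

lemma one_le_norm_powerIter (hx : ‖x‖ = 1) (hT : ‖T - spikedId x‖ ≤ 1 / 20) (k : ℕ) :
    1 ≤ ‖powerIter T x k‖ := by
  simpa [inner_powerIter hx hT k, hx] using real_inner_le_norm x (powerIter T x k)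

lemma norm_powerIter_succ_sub_le (hx : ‖x‖ = 1) (hT : ‖T - spikedId x‖ ≤ 1 / 20) (k : ℕ) :
    ‖powerIter T x (k + 1) - powerIter T x k‖ ≤ (1 / 2) ^ k := by
  induction k with
  | zero => simpa [powerIter] using (inner_powerIter_and_norm_sub_le hx hT 1).2
  | succ k ih =>
    have h := norm_powerStep_sub_powerStep_le hx hT (inner_powerIter hx hT (k + 1))
      (inner_powerIter hx hT k) (norm_powerIter_le hx hT (k + 1)) (norm_powerIter_le hx hT k)
    rw [← powerIter_succ, ← powerIter_succ] at h
    rw [pow_succ]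
    linarith

lemma norm_powerIter_residual_le (hx : ‖x‖ = 1) (hT : ‖T - spikedId x‖ ≤ 1 / 20) (k : ℕ) :
    ‖T (powerIter T x k) - ⟪x, T (powerIter T x k)⟫ • powerIter T x k‖ ≤ 4 * (1 / 2) ^ k := by
  have hstep := norm_powerIter_succ_sub_le hx hT k
  obtain ⟨hβ, hβ4⟩ := inner_apply_mem_Icc hx hT (inner_powerIter hx hT k)
    (norm_powerIter_le hx hT k)
  rw [powerIter_succ, powerStep] at hstep
  set p := powerIter T x k
  set β := ⟪x, T p⟫
  have hβ0 : 0 < β := by linarith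
  calc ‖T p - β • p‖ = β * ‖β⁻¹ • T p - p‖ := by
        rw [← Real.norm_of_nonneg hβ0.le, ← norm_smul, Real.norm_of_nonneg hβ0.le, smul_sub,
          smul_smul, mul_inv_cancel₀ hβ0.ne', one_smul]
    _ ≤ 4 * (1 / 2) ^ k := by gcongr

end PowerIteration

section Eigenvectors

variable {V : Type*} [NormedAddCommGroup V] [InnerProductSpace ℝ V]

lemma norm_sub_inner_smul_sq {x v : V} (hx : ‖x‖ = 1) (hv : ‖v‖ = 1) :
    ‖v - ⟪x, v⟫ • x‖ ^ 2 = 1 - ⟪x, v⟫ ^ 2 := by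
  rw [norm_sub_sq_real, norm_smul, inner_smul_right, real_inner_comm x v, hx, hv,
    Real.norm_eq_abs, mul_one, sq_abs]
  ring

lemma norm_sub_le_two_mul_norm_sub_inner_smul {x v : V} (hx : ‖x‖ = 1) (hv : ‖v‖ = 1)
    (hxv : 0 ≤ ⟪x, v⟫) : ‖v - x‖ ≤ 2 * ‖v - ⟪x, v⟫ • x‖ := by
  have hxv1 : ⟪x, v⟫ ≤ 1 := by simpa [hx, hv] using real_inner_le_norm x v
  refine abs_le_of_sq_le_sq' ?_ (by positivity) |>.2
  rw [mul_pow, norm_sub_inner_smul_sq hx hv, norm_sub_sq_real, real_inner_comm x v, hx, hv]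
  nlinarith

variable {T : V →L[ℝ] V} {x v : V} {ε lam : ℝ}

lemma norm_eigenvector_sub_le (hx : ‖x‖ = 1) (hT : ‖T - spikedId x‖ ≤ ε) (hv : ‖v‖ = 1)
    (hxv : 0 ≤ ⟪x, v⟫) (hlam : 5 / 2 ≤ lam) (hTv : T v = lam • v) : ‖v - x‖ ≤ 2 * ε := by
  refine (norm_sub_le_two_mul_norm_sub_inner_smul hx hv hxv).trans ?_
  have hxx : ⟪x, x⟫ = 1 := by rw [real_inner_self_eq_norm_sq, hx, one_pow]
  have hvv : ⟪v, v⟫ = 1 := by rw [real_inner_self_eq_norm_sq, hv, one_pow]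
  have hclose := norm_apply_sub_spikedId_le hT v
  rw [hTv, hv, mul_one] at hclose
  have hsq := norm_sub_inner_smul_sq hx hv
  set s := ⟪x, v⟫ with hs
  set p := v - s • x with hp
  have hkey : (lam - 1) * ‖p‖ ^ 2 ≤ ε * ‖p‖ :=
    calc (lam - 1) * ‖p‖ ^ 2 = ⟪lam • v - (v + (2 * s) • x), p⟫ := by
          rw [hsq, hp]
          simp only [inner_sub_left, inner_sub_right, inner_add_left, real_inner_smul_left,
            inner_smul_right, hxx, hvv, real_inner_comm x v, ← hs]
          ring
      _ ≤ ‖lam • v - (v + (2 * s) • x)‖ * ‖p‖ := real_inner_le_norm _ _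
      _ ≤ ε * ‖p‖ := by gcongr
  by_contra! hlt
  nlinarith [norm_nonneg p, (norm_nonneg _).trans hclose]

/-- Orthogonally to the eigenvector `v`, the form of `T` is at most about `1`, well below `lam'`;
hence a unit vector with residual `R` at `lam'` has a component of size at most `R` there. -/
lemma norm_eigenvector_sub_le_of_residual_le {w : V} {lam' R : ℝ} (hε : ε ≤ 1 / 100)
    (hx : ‖x‖ = 1) (hT : ‖T - spikedId x‖ ≤ ε) (hv : ‖v‖ = 1) (hxv : 0 ≤ ⟪x, v⟫)
    (hlam : 5 / 2 ≤ lam) (hTv : T v = lam • v) (hlam' : 5 / 2 ≤ lam') (hw : ‖w‖ = 1)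
    (hvw : 0 ≤ ⟪v, w⟫) (hR : ‖T w - lam' • w‖ ≤ R) :
    ‖w - v‖ ≤ 2 * R := by
  refine (norm_sub_le_two_mul_norm_sub_inner_smul hv hw hvw).trans ?_
  have hvx := norm_eigenvector_sub_le hx hT hv hxv hlam hTv
  set c := ⟪v, w⟫ with hc
  set q := w - c • v with hq
  have hvq : ⟪v, q⟫ = 0 := by
    rw [hq, inner_sub_right, inner_smul_right, real_inner_self_eq_norm_sq, hv, ← hc]; ring
  have hwq : w = c • v + q := by rw [hq]; abel
  have hTwq : ⟪T w, q⟫ = ⟪T q, q⟫ := by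
    rw [hwq, map_add, map_smul, hTv, inner_add_left, real_inner_smul_left, real_inner_smul_left,
      hvq]
    ring
  have hwq' : ⟪w, q⟫ = ‖q‖ ^ 2 := by
    rw [hwq, inner_add_left, real_inner_smul_left, hvq, real_inner_self_eq_norm_sq]; ring
  have hres : lam' * ‖q‖ ^ 2 - ⟪T q, q⟫ ≤ R * ‖q‖ :=
    calc lam' * ‖q‖ ^ 2 - ⟪T q, q⟫ = ⟪lam' • w - T w, q⟫ := by
          rw [inner_sub_left, real_inner_smul_left, hwq', hTwq]
      _ ≤ ‖lam' • w - T w‖ * ‖q‖ := real_inner_le_norm _ _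
      _ ≤ R * ‖q‖ := by rw [norm_sub_rev]; gcongr
  have hxq : |⟪x, q⟫| ≤ 1 / 50 * ‖q‖ :=
    calc |⟪x, q⟫| = |⟪v - x, q⟫| := by rw [inner_sub_left, hvq, zero_sub, abs_neg]
      _ ≤ ‖v - x‖ * ‖q‖ := abs_real_inner_le_norm _ _
      _ ≤ 1 / 50 * ‖q‖ := by gcongr; linarith
  have hxq_sq : ⟪x, q⟫ ^ 2 ≤ 1 / 2500 * ‖q‖ ^ 2 := by
    rw [← sq_abs]
    calc |⟪x, q⟫| ^ 2 ≤ (1 / 50 * ‖q‖) ^ 2 := by gcongr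
      _ = 1 / 2500 * ‖q‖ ^ 2 := by ring
  have hform := (abs_le.1 (abs_inner_apply_sub_spikedId_le hT q)).2
  have hqq : ‖q‖ ^ 2 ≤ R * ‖q‖ := by nlinarith [sq_nonneg ‖q‖]
  by_contra! hlt
  nlinarith [norm_nonneg q, (norm_nonneg _).trans hR]

lemma five_halves_le_of_eigenvalue_le [FiniteDimensional ℝ V] (hε : ε ≤ 1 / 2)
    (hTsymm : (T : V →ₗ[ℝ] V).IsSymmetric) (hx : ‖x‖ = 1) (hT : ‖T - spikedId x‖ ≤ ε)
    (hlam : ∀ (μ : ℝ) (w : V), w ≠ 0 → T w = μ • w → μ ≤ lam) : 5 / 2 ≤ lam := by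
  have hx0 : x ≠ 0 := by rintro rfl; simp at hx
  have : Nontrivial V := ⟨x, 0, hx0⟩
  obtain ⟨v, hv⟩ := hTsymm.hasEigenvalue_iSup_of_finiteDimensional.exists_hasEigenvector
  refine le_trans ?_ (hlam _ v hv.2 hv.apply_eq_smul)
  have hbdd : BddAbove (Set.range fun y : {y : V // y ≠ 0} =>
      RCLike.re ⟪(T : V →ₗ[ℝ] V) y, y⟫ / ‖(y : V)‖ ^ 2) :=
    ⟨‖T‖, by rintro _ ⟨y, rfl⟩; exact (le_abs_self _).trans (T.rayleighQuotient_le_norm y)⟩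
  refine le_trans ?_ (le_ciSup hbdd ⟨x, hx0⟩)
  have hform := (abs_le.1 (abs_inner_apply_sub_spikedId_le hT x)).1
  simp only [real_inner_self_eq_norm_sq, hx] at hform
  simp only [RCLike.re_to_real, ContinuousLinearMap.coe_coe, hx]
  linarith

end Eigenvectors

section SampleOperators

variable {V : Type*} [NormedAddCommGroup V] [InnerProductSpace ℝ V] {m : ℕ}

/-- The weighted second moment operator `m⁻¹ ∑ c_ℓ a_ℓ a_ℓᵀ` of the sample `a`, as a linear function
of the weights `c`. -/
def sampleCov (a : Fin m → V) : (Fin m → ℝ) →ₗ[ℝ] V →L[ℝ] V :=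
  (m : ℝ)⁻¹ • Fintype.linearCombination ℝ fun ℓ => rankOne ℝ (a ℓ) (a ℓ)

/-- The operator `m⁻¹ ∑ y_ℓ a_ℓ a_ℓᵀ` with `y_ℓ = ⟨a_ℓ, x⟩²`, whose top eigenvector initializes
Wirtinger flow. -/
def spectralOp (a : Fin m → V) (x : V) : V →L[ℝ] V := sampleCov a fun ℓ => ⟪a ℓ, x⟫ ^ 2

/-- Half of the gradient at `z` of the phase retrieval loss with signal `x`, the normalization used
in the Wirtinger flow iteration. -/
def lossGradient (a : Fin m → V) (x z : V) : V :=
  sampleCov a (fun ℓ => ⟪a ℓ, z⟫ ^ 2 - ⟪a ℓ, x⟫ ^ 2) z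

/-- The mean `m⁻¹ ∑ y_ℓ` of the measurements `y_ℓ = ⟨a_ℓ, x⟩²`, an estimate of `‖x‖²`. -/
def meanIntensity (a : Fin m → V) (x : V) : ℝ := (m : ℝ)⁻¹ * ∑ ℓ, ⟪a ℓ, x⟫ ^ 2

/-- One step of Wirtinger flow with stepsize `α / ‖z₀‖²`, where `‖z₀‖² = m⁻¹ ∑ y_ℓ`. -/
def wirtingerStep (α : ℝ) (a : Fin m → V) (x z : V) : V :=
  z - (α / meanIntensity a x) • lossGradient a x z

lemma sampleCov_eq_smul_sum (a : Fin m → V) (c : Fin m → ℝ) :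
    sampleCov a c = (m : ℝ)⁻¹ • ∑ ℓ, c ℓ • rankOne ℝ (a ℓ) (a ℓ) := by
  rw [sampleCov, LinearMap.smul_apply, Fintype.linearCombination_apply]

lemma sampleCov_apply (a : Fin m → V) (c : Fin m → ℝ) (u : V) :
    sampleCov a c u = (m : ℝ)⁻¹ • ∑ ℓ, (c ℓ * ⟪a ℓ, u⟫) • a ℓ := by
  simp [sampleCov_eq_smul_sum, smul_smul]

lemma inner_sampleCov (a : Fin m → V) (c : Fin m → ℝ) (u w : V) :
    ⟪sampleCov a c u, w⟫ = (m : ℝ)⁻¹ * ∑ ℓ, c ℓ * ⟪a ℓ, u⟫ * ⟪a ℓ, w⟫ := by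
  simp only [sampleCov_apply, real_inner_smul_left, sum_inner]

lemma inner_sampleCov_self (a : Fin m → V) (c : Fin m → ℝ) (u : V) :
    ⟪sampleCov a c u, u⟫ = (m : ℝ)⁻¹ * ∑ ℓ, c ℓ * ⟪a ℓ, u⟫ ^ 2 := by
  simp only [inner_sampleCov, mul_assoc, sq]

lemma isSymmetric_sampleCov (a : Fin m → V) (c : Fin m → ℝ) :
    (sampleCov a c : V →ₗ[ℝ] V).IsSymmetric := fun u w => by
  simp only [ContinuousLinearMap.coe_coe]
  rw [real_inner_comm (sampleCov a c w) u, inner_sampleCov, inner_sampleCov]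
  simp only [mul_right_comm]

lemma isSymmetric_spectralOp (a : Fin m → V) (x : V) :
    (spectralOp a x : V →ₗ[ℝ] V).IsSymmetric :=
  isSymmetric_sampleCov a _

lemma inner_spectralOp_self (a : Fin m → V) (x u : V) :
    ⟪spectralOp a x u, u⟫ = (m : ℝ)⁻¹ * ∑ ℓ, ⟪a ℓ, x⟫ ^ 2 * ⟪a ℓ, u⟫ ^ 2 :=
  inner_sampleCov_self a _ u

lemma inner_sampleCov_self_mono (a : Fin m → V) {c c' : Fin m → ℝ} (h : ∀ ℓ, c ℓ ≤ c' ℓ) (u : V) :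
    ⟪sampleCov a c u, u⟫ ≤ ⟪sampleCov a c' u, u⟫ := by
  rw [inner_sampleCov_self, inner_sampleCov_self]
  gcongr with ℓ
  exact h ℓ

lemma norm_sampleCov_le_of_abs_le (a : Fin m → V) {c c' : Fin m → ℝ} (h : ∀ ℓ, |c ℓ| ≤ c' ℓ) :
    ‖sampleCov a c‖ ≤ ‖sampleCov a c'‖ := by
  refine opNorm_le_of_abs_inner_le (isSymmetric_sampleCov a c) (norm_nonneg _) fun u => ?_
  refine le_trans ?_ ((le_abs_self _).trans (abs_inner_apply_self_le (sampleCov a c') u))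
  have hneg := inner_sampleCov_self_mono a (c := -c) (c' := c')
    (fun ℓ => (neg_le_abs _).trans (h ℓ)) u
  rw [map_neg, _root_.neg_apply, inner_neg_left] at hneg
  exact abs_le'.2 ⟨inner_sampleCov_self_mono a (fun ℓ => (le_abs_self _).trans (h ℓ)) u, hneg⟩

@[simp]
lemma spectralOp_zero (a : Fin m → V) : spectralOp a 0 = 0 := by
  simp [spectralOp, sampleCov_eq_smul_sum]

@[simp]
lemma lossGradient_self (a : Fin m → V) (x : V) : lossGradient a x x = 0 := by
  simp [lossGradient, sampleCov_apply]

end SampleOperators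

section Descent

variable {V : Type*} [NormedAddCommGroup V] [InnerProductSpace ℝ V] {m : ℕ}

/-- The weights of the secant operator of the loss gradient between `z` and `z'`; see
`lossGradient_sub_lossGradient`. -/
def secantWeight (a : Fin m → V) (x z z' : V) (ℓ : Fin m) : ℝ :=
  ⟪a ℓ, z⟫ ^ 2 + ⟪a ℓ, z⟫ * ⟪a ℓ, z'⟫ + ⟪a ℓ, z'⟫ ^ 2 - ⟪a ℓ, x⟫ ^ 2

lemma lossGradient_sub_lossGradient (a : Fin m → V) (x z z' : V) :
    lossGradient a x z - lossGradient a x z' = sampleCov a (secantWeight a x z z') (z - z') := by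
  simp only [lossGradient, sampleCov_apply, ← smul_sub, ← Finset.sum_sub_distrib, ← sub_smul]
  congr 1
  refine Finset.sum_congr rfl fun ℓ _ => ?_
  rw [secantWeight, inner_sub_right]
  congr 1
  ring

lemma le_secantWeight (a : Fin m → V) (x z z' : V) (ℓ : Fin m) :
    19 / 10 * ⟪a ℓ, x⟫ ^ 2 - 47 * ⟪a ℓ, z - x⟫ ^ 2 - 47 * ⟪a ℓ, z' - x⟫ ^ 2 ≤
      secantWeight a x z z' ℓ := by
  rw [secantWeight, inner_sub_right, inner_sub_right]
  generalize ⟪a ℓ, x⟫ = g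
  generalize ⟪a ℓ, z⟫ = p
  generalize ⟪a ℓ, z'⟫ = q
  nlinarith [sq_nonneg (g + 15 * (p + q - 2 * g)), sq_nonneg (p - q), sq_nonneg (p + q - 2 * g)]

lemma abs_secantWeight_le (a : Fin m → V) (x z z' : V) (ℓ : Fin m) :
    |secantWeight a x z z' ℓ| ≤
      21 / 10 * ⟪a ℓ, x⟫ ^ 2 + 47 * ⟪a ℓ, z - x⟫ ^ 2 + 47 * ⟪a ℓ, z' - x⟫ ^ 2 := by
  have hlower := le_secantWeight a x z z' ℓ
  rw [abs_le]
  refine ⟨by linarith [sq_nonneg ⟪a ℓ, x⟫], ?_⟩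
  rw [secantWeight, inner_sub_right, inner_sub_right]
  generalize ⟪a ℓ, x⟫ = g
  generalize ⟪a ℓ, z⟫ = p
  generalize ⟪a ℓ, z'⟫ = q
  nlinarith [sq_nonneg (g - 15 * (p + q - 2 * g)), sq_nonneg (p - q), sq_nonneg (p + q - 2 * g)]

lemma norm_spikedId_le {x : V} (hx : ‖x‖ = 1) : ‖spikedId x‖ ≤ 3 := by
  refine opNorm_le_of_abs_inner_le (isSymmetric_spikedId x) (by norm_num) fun u => ?_
  rw [inner_spikedId_self, abs_of_nonneg (by positivity)]
  linarith [inner_sq_le_norm_sq hx u]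

variable {a : Fin m → V} {x z z' : V} {ε η : ℝ}

lemma norm_sampleCov_secantWeight_le (hε : ε ≤ 1 / 100) (hx : ‖x‖ = 1)
    (hA : ‖spectralOp a x - spikedId x‖ ≤ ε) (hz : ‖spectralOp a (z - x)‖ ≤ 1 / 1000)
    (hz' : ‖spectralOp a (z' - x)‖ ≤ 1 / 1000) : ‖sampleCov a (secantWeight a x z z')‖ ≤ 7 := by
  refine (norm_sampleCov_le_of_abs_le a (abs_secantWeight_le a x z z')).trans ?_
  have hsplit : sampleCov a (fun ℓ => 21 / 10 * ⟪a ℓ, x⟫ ^ 2 + 47 * ⟪a ℓ, z - x⟫ ^ 2 +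
      47 * ⟪a ℓ, z' - x⟫ ^ 2) = (21 / 10 : ℝ) • spectralOp a x + (47 : ℝ) • spectralOp a (z - x) +
        (47 : ℝ) • spectralOp a (z' - x) := by
    simp only [spectralOp, ← map_smul, ← map_add]
    rfl
  have hAx : ‖spectralOp a x‖ ≤ 3 + 1 / 100 := by
    linarith [norm_sub_norm_le (spectralOp a x) (spikedId x), norm_spikedId_le hx]
  rw [hsplit]
  refine (norm_add₃_le).trans ?_
  simp only [norm_smul, Real.norm_of_nonneg (by norm_num : (0 : ℝ) ≤ 21 / 10),
    Real.norm_of_nonneg (by norm_num : (0 : ℝ) ≤ 47)]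
  linarith

lemma norm_sq_le_inner_sampleCov_secantWeight (hε : ε ≤ 1 / 100)
    (hA : ‖spectralOp a x - spikedId x‖ ≤ ε) (hz : ‖spectralOp a (z - x)‖ ≤ 1 / 1000)
    (hz' : ‖spectralOp a (z' - x)‖ ≤ 1 / 1000) (u : V) :
    ‖u‖ ^ 2 ≤ ⟪sampleCov a (secantWeight a x z z') u, u⟫ := by
  refine le_trans ?_ (inner_sampleCov_self_mono a (le_secantWeight a x z z') u)
  have hsplit : sampleCov a (fun ℓ => 19 / 10 * ⟪a ℓ, x⟫ ^ 2 - 47 * ⟪a ℓ, z - x⟫ ^ 2 -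
      47 * ⟪a ℓ, z' - x⟫ ^ 2) = (19 / 10 : ℝ) • spectralOp a x - (47 : ℝ) • spectralOp a (z - x) -
        (47 : ℝ) • spectralOp a (z' - x) := by
    simp only [spectralOp, ← map_smul, ← map_sub]
    rfl
  have hform := (abs_le.1 (abs_inner_apply_sub_spikedId_le hA u)).1
  have hform_z := (le_abs_self _).trans (abs_inner_apply_self_le (spectralOp a (z - x)) u)
  have hform_z' := (le_abs_self _).trans (abs_inner_apply_self_le (spectralOp a (z' - x)) u)
  simp only [hsplit, _root_.sub_apply, _root_.smul_apply, inner_sub_left, real_inner_smul_left]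
  nlinarith [sq_nonneg ‖u‖, sq_nonneg ⟪x, u⟫]

lemma norm_lossGradient_le (hε : ε ≤ 1 / 100) (hx : ‖x‖ = 1)
    (hA : ‖spectralOp a x - spikedId x‖ ≤ ε) (hz : ‖spectralOp a (z - x)‖ ≤ 1 / 1000) :
    ‖lossGradient a x z‖ ≤ 7 * ‖z - x‖ := by
  have hsec : lossGradient a x z = sampleCov a (secantWeight a x z x) (z - x) := by
    rw [← lossGradient_sub_lossGradient, lossGradient_self, sub_zero]
  rw [hsec]
  exact ContinuousLinearMap.le_of_opNorm_le _
    (norm_sampleCov_secantWeight_le hε hx hA hz (by simp)) _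

lemma norm_sub_sub_smul_lossGradient_le (hε : ε ≤ 1 / 100) (hx : ‖x‖ = 1)
    (hA : ‖spectralOp a x - spikedId x‖ ≤ ε) (hz : ‖spectralOp a (z - x)‖ ≤ 1 / 1000)
    (hz' : ‖spectralOp a (z' - x)‖ ≤ 1 / 1000) (hη : 0 ≤ η) (hη' : η ≤ 1 / 50) :
    ‖(z - z') - η • (lossGradient a x z - lossGradient a x z')‖ ≤ (1 - η / 2) * ‖z - z'‖ := by
  rw [lossGradient_sub_lossGradient]
  set d := z - z'
  set g := sampleCov a (secantWeight a x z z') d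
  have hdg : η * ‖d‖ ^ 2 ≤ η * ⟪d, g⟫ := by
    rw [real_inner_comm]
    gcongr
    exact norm_sq_le_inner_sampleCov_secantWeight hε hA hz hz' d
  have hgg : η ^ 2 * ‖g‖ ^ 2 ≤ η * (1 / 50) * (7 * ‖d‖) ^ 2 := by
    have hg := ContinuousLinearMap.le_of_opNorm_le _
      (norm_sampleCov_secantWeight_le hε hx hA hz hz') d
    rw [sq η]
    gcongr
  refine abs_le_of_sq_le_sq' ?_ (by nlinarith [norm_nonneg d]) |>.2
  rw [norm_sub_sq_real, inner_smul_right, norm_smul, Real.norm_of_nonneg hη]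
  nlinarith [mul_nonneg (sq_nonneg η) (sq_nonneg ‖d‖)]

end Descent

section LeaveOneOut

variable {V : Type*} [NormedAddCommGroup V] {m : ℕ}

/-- The sample with its `ℓ`-th vector replaced by `0`. It keeps its size `m`, so that all averages
are still normalized by `m⁻¹`. -/
def leaveOneOut (a : Fin m → V) (ℓ : Fin m) : Fin m → V := Function.update a ℓ 0

lemma sum_leaveOneOut {W : Type*} [AddCommGroup W] (a : Fin m → V) (ℓ : Fin m) (F : V → W)
    (hF : F 0 = 0) : ∑ j, F (leaveOneOut a ℓ j) = ∑ j, F (a j) - F (a ℓ) := by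
  rw [eq_sub_iff_add_eq, ← Finset.sum_erase_add _ _ (Finset.mem_univ ℓ),
    ← Finset.sum_erase_add _ _ (Finset.mem_univ ℓ)]
  simp only [leaveOneOut, Function.update_self, hF, add_zero]
  congr 1
  refine Finset.sum_congr rfl fun j hj => ?_
  rw [Function.update_of_ne (Finset.ne_of_mem_erase hj)]

variable [InnerProductSpace ℝ V]

/-- A version of the rescaled spectral initialization that depends explicitly on the sample:
the top eigenvector is replaced by `m` steps of the power method. -/
def spectralProxy (a : Fin m → V) (x : V) : V :=
  (√(meanIntensity a x) / ‖powerIter (spectralOp a x) x m‖) • powerIter (spectralOp a x) x m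

/-- Wirtinger flow started at `spectralProxy`. -/
def proxyFlow (α : ℝ) (a : Fin m → V) (x : V) (k : ℕ) : V :=
  (wirtingerStep α a x)^[k] (spectralProxy a x)

lemma proxyFlow_succ (α : ℝ) (a : Fin m → V) (x : V) (k : ℕ) :
    proxyFlow α a x (k + 1) = wirtingerStep α a x (proxyFlow α a x k) :=
  Function.iterate_succ_apply' _ _ _

lemma sampleCov_leaveOneOut (a : Fin m → V) (ℓ : Fin m) (f : V → ℝ) :
    sampleCov (leaveOneOut a ℓ) (fun j => f (leaveOneOut a ℓ j)) =
      sampleCov a (fun j => f (a j)) - ((m : ℝ)⁻¹ * f (a ℓ)) • rankOne ℝ (a ℓ) (a ℓ) := by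
  rw [sampleCov_eq_smul_sum, sampleCov_eq_smul_sum, mul_smul, ← smul_sub,
    sum_leaveOneOut a ℓ (fun b => f b • rankOne ℝ b b) (by simp)]

lemma spectralOp_leaveOneOut (a : Fin m → V) (ℓ : Fin m) (x : V) :
    spectralOp (leaveOneOut a ℓ) x =
      spectralOp a x - ((m : ℝ)⁻¹ * ⟪a ℓ, x⟫ ^ 2) • rankOne ℝ (a ℓ) (a ℓ) :=
  sampleCov_leaveOneOut a ℓ fun b => ⟪b, x⟫ ^ 2

lemma lossGradient_leaveOneOut (a : Fin m → V) (ℓ : Fin m) (x z : V) :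
    lossGradient (leaveOneOut a ℓ) x z = lossGradient a x z -
      ((m : ℝ)⁻¹ * (⟪a ℓ, z⟫ ^ 2 - ⟪a ℓ, x⟫ ^ 2)) • (⟪a ℓ, z⟫ • a ℓ) := by
  rw [lossGradient, sampleCov_leaveOneOut a ℓ fun b => ⟪b, z⟫ ^ 2 - ⟪b, x⟫ ^ 2]
  simp only [lossGradient, _root_.sub_apply, _root_.smul_apply, InnerProductSpace.rankOne_apply]

lemma meanIntensity_leaveOneOut (a : Fin m → V) (ℓ : Fin m) (x : V) :
    meanIntensity (leaveOneOut a ℓ) x = meanIntensity a x - (m : ℝ)⁻¹ * ⟪a ℓ, x⟫ ^ 2 := by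
  rw [meanIntensity, meanIntensity, ← mul_sub, sum_leaveOneOut a ℓ (fun b => ⟪b, x⟫ ^ 2) (by simp)]

end LeaveOneOut

/-- Relations between the sample size `m`, the incoherence bound `S` on `|⟨a_ℓ, x⟩|`, the bound `T`
on `‖a_ℓ‖` and the radius `δ` of the basin under which the leave-one-out argument closes. -/
structure Regime (m : ℕ) (S T δ : ℝ) : Prop where
  one_le_incoherence : 1 ≤ S
  incoherence_le : S ≤ T
  radius_pos : 0 < δ
  radius_le : δ ≤ 1 / 8
  sq_mul_sq_le : 20000 * (S ^ 2 * T ^ 2) ≤ δ * m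
  pow_mul_le : (799 / 800) ^ m * T ≤ 1

/-- The effect of a single measurement on one step of Wirtinger flow; the flow and its
leave-one-out versions stay within `1000` times this scale of each other. -/
def looScale (m : ℕ) (S T : ℝ) : ℝ := S ^ 3 * T / m

namespace Regime

variable {m : ℕ} {S T δ : ℝ}

lemma one_le_norm_bound (R : Regime m S T δ) : 1 ≤ T :=
  R.one_le_incoherence.trans R.incoherence_le

lemma sampleSize_pos (R : Regime m S T δ) : (0 : ℝ) < m := by
  have hST : 1 ≤ S ^ 2 * T ^ 2 := one_le_mul_of_one_le_of_one_le
    (one_le_pow₀ R.one_le_incoherence) (one_le_pow₀ R.one_le_norm_bound)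
  have h := R.sq_mul_sq_le
  exact pos_of_mul_pos_right (by linarith) R.radius_pos.le

lemma sq_mul_sq_div_le (R : Regime m S T δ) : S ^ 2 * T ^ 2 / m ≤ δ / 20000 := by
  rw [div_le_iff₀ R.sampleSize_pos]
  linarith [R.sq_mul_sq_le]

lemma looScale_nonneg (R : Regime m S T δ) : 0 ≤ looScale m S T := by
  have hS := R.one_le_incoherence
  have hT := R.one_le_norm_bound
  rw [looScale]
  positivity

lemma sq_div_le_looScale (R : Regime m S T δ) : S ^ 2 / m ≤ looScale m S T := by
  have hS := R.one_le_incoherence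
  rw [looScale]
  gcongr
  calc S ^ 2 ≤ S ^ 2 * (S * T) :=
        le_mul_of_one_le_right (sq_nonneg S)
          (one_le_mul_of_one_le_of_one_le hS R.one_le_norm_bound)
    _ = S ^ 3 * T := by ring

lemma inv_le_looScale (R : Regime m S T δ) : (m : ℝ)⁻¹ ≤ looScale m S T := by
  refine le_trans ?_ R.sq_div_le_looScale
  rw [← one_div]
  gcongr
  exact one_le_pow₀ R.one_le_incoherence

lemma mul_looScale_le (R : Regime m S T δ) : T * (1000 * looScale m S T) ≤ S / 20 := by
  have hS := R.one_le_incoherence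
  calc T * (1000 * looScale m S T) = 1000 * S * (S ^ 2 * T ^ 2 / m) := by rw [looScale]; ring
    _ ≤ 1000 * S * (1 / 20000) :=
      mul_le_mul_of_nonneg_left (by linarith [R.sq_mul_sq_div_le, R.radius_le]) (by positivity)
    _ = S / 20 := by ring

lemma looScale_le (R : Regime m S T δ) : 1000 * looScale m S T ≤ δ / 20 := by
  have hS := R.one_le_incoherence
  have hle : looScale m S T ≤ S ^ 2 * T ^ 2 / m := by
    have hT := R.one_le_norm_bound
    refine div_le_div_of_nonneg_right ?_ (Nat.cast_nonneg m)
    calc S ^ 3 * T = S ^ 2 * (S * T) := by ring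
      _ ≤ S ^ 2 * (T * T) := by gcongr; exact R.incoherence_le
      _ = S ^ 2 * T ^ 2 := by ring
  linarith [R.sq_mul_sq_div_le]

end Regime

section Deterministic

variable {V : Type*} [NormedAddCommGroup V] [InnerProductSpace ℝ V] {m : ℕ}

/-- The deterministic properties of the sample `a` that make Wirtinger flow converge to the unit
signal `x`. The last two fields say that the leave-one-out flows and power iterates are incoherent
with the measurement left out; they hold with high probability by independence. -/
structure GoodSample (a : Fin m → V) (x : V) (S T δ : ℝ) : Prop where
  norm_spectralOp_sub_le : ‖spectralOp a x - spikedId x‖ ≤ δ / 16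
  abs_meanIntensity_sub_one_le : |meanIntensity a x - 1| ≤ δ / 16
  abs_inner_le : ∀ ℓ, |⟪a ℓ, x⟫| ≤ S
  norm_le : ∀ ℓ, ‖a ℓ‖ ≤ T
  norm_spectralOp_le : ∀ h, ‖h‖ ≤ δ → (∀ ℓ, |⟪a ℓ, h⟫| ≤ 3 * S) → ‖spectralOp a h‖ ≤ 1 / 1000
  abs_inner_proxyFlow_le : ∀ ℓ, ∀ k ≤ m, |⟪a ℓ, proxyFlow (1 / 200) (leaveOneOut a ℓ) x k - x⟫| ≤
    S * ‖proxyFlow (1 / 200) (leaveOneOut a ℓ) x k - x‖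
  abs_inner_powerIter_le : ∀ ℓ, |⟪a ℓ, powerIter (spectralOp (leaveOneOut a ℓ) x) x m⟫| ≤
    S * ‖powerIter (spectralOp (leaveOneOut a ℓ) x) x m‖

/-- The spectral initialization: a top eigenvector `z` of `spectralOp a x`, scaled so that `‖z‖²` is
the mean of the measurements. -/
structure IsSpectralInit (a : Fin m → V) (x z : V) : Prop where
  exists_top_eigenvalue : ∃ lam : ℝ, spectralOp a x z = lam • z ∧
    ∀ (μ : ℝ) (w : V), w ≠ 0 → spectralOp a x w = μ • w → μ ≤ lam
  norm_sq_eq : ‖z‖ ^ 2 = meanIntensity a x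

lemma abs_sq_sub_sq_mul_le {g p S : ℝ} (hg : |g| ≤ S) (hp : |p - g| ≤ S) :
    |(p ^ 2 - g ^ 2) * p| ≤ 6 * S ^ 3 := by
  have hS : 0 ≤ S := (abs_nonneg g).trans hg
  have hp2 : |p| ≤ 2 * S := by
    calc |p| = |(p - g) + g| := by rw [sub_add_cancel]
      _ ≤ |p - g| + |g| := abs_add_le _ _
      _ ≤ 2 * S := by linarith
  have hpg : |p + g| ≤ 3 * S := (abs_add_le p g).trans (by linarith)
  calc |(p ^ 2 - g ^ 2) * p| = |p - g| * |p + g| * |p| := by rw [← abs_mul, ← abs_mul]; ring_nf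
    _ ≤ S * (3 * S) * (2 * S) := by gcongr
    _ = 6 * S ^ 3 := by ring

namespace GoodSample

variable {a : Fin m → V} {x : V} {S T δ : ℝ}

lemma meanIntensity_mem_Icc (R : Regime m S T δ) (G : GoodSample a x S T δ) :
    meanIntensity a x ∈ Set.Icc (99 / 100) (101 / 100) := by
  obtain ⟨hl, hu⟩ := abs_le.1 G.abs_meanIntensity_sub_one_le
  have hδ := R.radius_le
  exact ⟨by linarith, by linarith⟩

lemma meanIntensity_sub_leaveOneOut_mem_Icc (R : Regime m S T δ) (G : GoodSample a x S T δ)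
    (ℓ : Fin m) :
    meanIntensity a x - meanIntensity (leaveOneOut a ℓ) x ∈ Set.Icc 0 (looScale m S T) := by
  rw [meanIntensity_leaveOneOut, sub_sub_cancel]
  refine ⟨by positivity, le_trans ?_ R.sq_div_le_looScale⟩
  rw [div_eq_inv_mul, ← sq_abs]
  gcongr
  exact G.abs_inner_le ℓ

lemma le_meanIntensity_leaveOneOut (R : Regime m S T δ) (G : GoodSample a x S T δ) (ℓ : Fin m) :
    98 / 100 ≤ meanIntensity (leaveOneOut a ℓ) x := by
  linarith [(G.meanIntensity_mem_Icc R).1, (G.meanIntensity_sub_leaveOneOut_mem_Icc R ℓ).2,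
    R.looScale_le, R.radius_le]

lemma norm_spectralOp_leaveOneOut_sub_le (R : Regime m S T δ) (G : GoodSample a x S T δ)
    (ℓ : Fin m) : ‖spectralOp (leaveOneOut a ℓ) x - spikedId x‖ ≤ 1 / 20 := by
  have hS := R.one_le_incoherence
  have hremoved : ‖((m : ℝ)⁻¹ * ⟪a ℓ, x⟫ ^ 2) • rankOne ℝ (a ℓ) (a ℓ)‖ ≤ δ / 20000 := by
    rw [norm_smul, InnerProductSpace.norm_rankOne, Real.norm_of_nonneg (by positivity), ← sq_abs]
    calc (m : ℝ)⁻¹ * |⟪a ℓ, x⟫| ^ 2 * (‖a ℓ‖ * ‖a ℓ‖) ≤ (m : ℝ)⁻¹ * S ^ 2 * (T * T) := by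
          have hT := R.one_le_norm_bound
          gcongr <;> first | exact G.abs_inner_le ℓ | exact G.norm_le ℓ
      _ = S ^ 2 * T ^ 2 / m := by ring
      _ ≤ δ / 20000 := R.sq_mul_sq_div_le
  rw [spectralOp_leaveOneOut, sub_right_comm]
  refine (norm_sub_le _ _).trans ?_
  linarith [G.norm_spectralOp_sub_le, R.radius_le]

lemma norm_wirtingerStep_sub_le (R : Regime m S T δ) (G : GoodSample a x S T δ) (hx : ‖x‖ = 1)
    {z : V} (hz : ‖spectralOp a (z - x)‖ ≤ 1 / 1000) :
    ‖wirtingerStep (1 / 200) a x z - x‖ ≤ 799 / 800 * ‖z - x‖ := by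
  obtain ⟨hσl, hσu⟩ := G.meanIntensity_mem_Icc R
  have hη : 1 / 200 / meanIntensity a x ≤ 1 / 50 := by
    rw [div_le_iff₀ (by linarith)]
    linarith
  have hη' : 1 / 400 ≤ 1 / 200 / meanIntensity a x := by
    rw [le_div_iff₀ (by linarith)]
    linarith
  have hcontr := norm_sub_sub_smul_lossGradient_le (by linarith [R.radius_le]) hx
    G.norm_spectralOp_sub_le hz (z' := x) (by simp) (by linarith) hη
  rw [lossGradient_self, sub_zero] at hcontr
  rw [wirtingerStep, sub_right_comm]
  refine hcontr.trans ?_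
  gcongr
  linarith

lemma norm_lossGradient_sub_leaveOneOut_le (R : Regime m S T δ) (G : GoodSample a x S T δ)
    {ℓ : Fin m} {z : V} (hz : |⟪a ℓ, z - x⟫| ≤ S) :
    ‖lossGradient a x z - lossGradient (leaveOneOut a ℓ) x z‖ ≤ 6 * looScale m S T := by
  have hS := R.one_le_incoherence
  rw [lossGradient_leaveOneOut, sub_sub_cancel, smul_smul, mul_assoc, norm_smul, norm_mul,
    Real.norm_of_nonneg (by positivity : (0 : ℝ) ≤ (m : ℝ)⁻¹), Real.norm_eq_abs, mul_assoc]
  rw [inner_sub_right] at hz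
  calc (m : ℝ)⁻¹ * (|(⟪a ℓ, z⟫ ^ 2 - ⟪a ℓ, x⟫ ^ 2) * ⟪a ℓ, z⟫| * ‖a ℓ‖)
      ≤ (m : ℝ)⁻¹ * (6 * S ^ 3 * T) := by
        gcongr
        · exact abs_sq_sub_sq_mul_le (G.abs_inner_le ℓ) hz
        · exact G.norm_le ℓ
    _ = 6 * looScale m S T := by rw [looScale]; ring

lemma abs_stepsize_sub_leaveOneOut_le (R : Regime m S T δ) (G : GoodSample a x S T δ)
    (ℓ : Fin m) :
    |1 / 200 / meanIntensity (leaveOneOut a ℓ) x - 1 / 200 / meanIntensity a x| ≤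
      1 / 150 * looScale m S T := by
  have hσ := (G.meanIntensity_mem_Icc R).1
  have hσ' := G.le_meanIntensity_leaveOneOut R ℓ
  obtain ⟨hnonneg, hle⟩ := G.meanIntensity_sub_leaveOneOut_mem_Icc R ℓ
  generalize meanIntensity a x = σ at *
  generalize meanIntensity (leaveOneOut a ℓ) x = σ' at *
  have hσσ' : 97 / 100 ≤ σ * σ' := by nlinarith
  have hdiff : 1 / 200 / σ' - 1 / 200 / σ = 1 / 200 * ((σ - σ') / (σ * σ')) := by
    have h0 : σ ≠ 0 := by linarith
    have h0' : σ' ≠ 0 := by linarith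
    field_simp
  rw [hdiff, abs_of_nonneg (by positivity)]
  have hquot : (σ - σ') / (σ * σ') ≤ looScale m S T / (97 / 100) := by
    gcongr
    exact R.looScale_nonneg
  linarith [R.looScale_nonneg]

lemma norm_wirtingerStep_sub_leaveOneOut_le (R : Regime m S T δ) (G : GoodSample a x S T δ)
    (hx : ‖x‖ = 1) {ℓ : Fin m} {z z' : V} (hz : ‖spectralOp a (z - x)‖ ≤ 1 / 1000)
    (hz' : ‖spectralOp a (z' - x)‖ ≤ 1 / 1000) (hz'δ : ‖z' - x‖ ≤ δ)
    (hincoh : |⟪a ℓ, z' - x⟫| ≤ S) (hzz' : ‖z - z'‖ ≤ 1000 * looScale m S T) :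
    ‖wirtingerStep (1 / 200) a x z - wirtingerStep (1 / 200) (leaveOneOut a ℓ) x z'‖ ≤
      1000 * looScale m S T := by
  obtain ⟨hσl, hσu⟩ := G.meanIntensity_mem_Icc R
  have hσ' := G.le_meanIntensity_leaveOneOut R ℓ
  have hstepdiff := G.abs_stepsize_sub_leaveOneOut_le R ℓ
  have hremoved := G.norm_lossGradient_sub_leaveOneOut_le R hincoh
  have hδ := R.radius_le
  have hQ := R.looScale_nonneg
  have hgrad := norm_lossGradient_le (by linarith) hx G.norm_spectralOp_sub_le hz'
  set η := 1 / 200 / meanIntensity a x with hη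
  set η' := 1 / 200 / meanIntensity (leaveOneOut a ℓ) x with hη'
  have hηl : 1 / 400 ≤ η := by rw [hη, le_div_iff₀ (by linarith)]; linarith
  have hηu : η ≤ 1 / 50 := by rw [hη, div_le_iff₀ (by linarith)]; linarith
  have hη'u : η' ≤ 1 / 150 := by rw [hη', div_le_iff₀ (by linarith)]; linarith
  have hη'0 : 0 ≤ η' := by positivity
  have hcontr := norm_sub_sub_smul_lossGradient_le (by linarith) hx
    G.norm_spectralOp_sub_le hz hz' (by linarith) hηu
  have hsplit : wirtingerStep (1 / 200) a x z - wirtingerStep (1 / 200) (leaveOneOut a ℓ) x z' =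
      ((z - z') - η • (lossGradient a x z - lossGradient a x z')) +
        (η' - η) • lossGradient a x z' -
          η' • (lossGradient a x z' - lossGradient (leaveOneOut a ℓ) x z') := by
    rw [wirtingerStep, wirtingerStep, ← hη, ← hη']
    module
  calc _ ≤ (1 - η / 2) * ‖z - z'‖ + |η' - η| * ‖lossGradient a x z'‖ +
        η' * ‖lossGradient a x z' - lossGradient (leaveOneOut a ℓ) x z'‖ := by
        rw [hsplit]
        refine (norm_sub_le _ _).trans ((add_le_add_left (norm_add_le _ _) _).trans ?_)
        rw [norm_smul, norm_smul, Real.norm_eq_abs, Real.norm_of_nonneg hη'0]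
        gcongr
    _ ≤ (1 - 1 / 400 / 2) * (1000 * looScale m S T) + 1 / 150 * looScale m S T * 7 +
        1 / 150 * (6 * looScale m S T) := by
        gcongr
        linarith
    _ ≤ 1000 * looScale m S T := by linarith

end GoodSample

end Deterministic

section SpectralInitialization

variable {V : Type*} [NormedAddCommGroup V] [InnerProductSpace ℝ V] {m : ℕ} {a : Fin m → V}
  {x v z : V} {S T δ lam : ℝ}

lemma IsSpectralInit.exists_unit_eigenvector (h : IsSpectralInit a x z) (hz : z ≠ 0)
    (hxz : 0 ≤ ⟪x, z⟫) :
    ∃ (lam : ℝ) (v : V), ‖v‖ = 1 ∧ z = ‖z‖ • v ∧ 0 ≤ ⟪x, v⟫ ∧ spectralOp a x v = lam • v ∧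
      ∀ (μ : ℝ) (w : V), w ≠ 0 → spectralOp a x w = μ • w → μ ≤ lam := by
  obtain ⟨lam, heig, htop⟩ := h.exists_top_eigenvalue
  refine ⟨lam, ‖z‖⁻¹ • z, norm_smul_inv_norm hz, ?_, ?_, ?_, htop⟩
  · rw [smul_inv_smul₀ (norm_ne_zero_iff.2 hz)]
  · rw [real_inner_smul_right]
    positivity
  · rw [map_smul, heig, smul_comm]

lemma norm_smul_sub_le {σ ε : ℝ} (hv : ‖v‖ = 1) (hvx : ‖v - x‖ ≤ 2 * ε) (hσ : |σ - 1| ≤ ε) :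
    ‖σ • v - x‖ ≤ 3 * ε := by
  calc ‖σ • v - x‖ = ‖(v - x) + (σ - 1) • v‖ := by congr 1; module
    _ ≤ ‖v - x‖ + |σ - 1| := by
      simpa only [norm_smul, hv, mul_one, Real.norm_eq_abs] using
        norm_add_le (v - x) ((σ - 1) • v)
    _ ≤ 3 * ε := by linarith

lemma abs_sub_sqrt_le {σ s Q : ℝ} (hσ : 1 / 2 ≤ σ) (hs : 1 / 4 ≤ s) (h0 : 0 ≤ σ ^ 2 - s)
    (hQ : σ ^ 2 - s ≤ Q) : |σ - √s| ≤ Q := by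
  have hτ : 1 / 2 ≤ √s := Real.le_sqrt_of_sq_le (by linarith)
  have hle : √s ≤ σ := Real.sqrt_le_iff.2 ⟨by linarith, by linarith⟩
  rw [abs_of_nonneg (by linarith)]
  nlinarith [Real.sq_sqrt (by linarith : 0 ≤ s)]

lemma one_half_pow_le_inv (hm : (0 : ℝ) < m) : (1 / 2 : ℝ) ^ m ≤ (m : ℝ)⁻¹ := by
  rw [one_div, inv_pow]
  gcongr
  exact_mod_cast Nat.lt_two_pow_self.le

namespace GoodSample

/-- The operators of the two samples differ by a multiple of `rankOne ℝ (a ℓ) (a ℓ)`, which is small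
at a vector incoherent with `a ℓ`. -/
lemma norm_residual_leaveOneOut_le (R : Regime m S T δ) (G : GoodSample a x S T δ)
    (hx : ‖x‖ = 1) (ℓ : Fin m) :
    letI w := powerIter (spectralOp (leaveOneOut a ℓ) x) x m
    ‖spectralOp a x w - ⟪x, spectralOp (leaveOneOut a ℓ) x w⟫ • w‖ ≤
      5 * looScale m S T * ‖w‖ := by
  have hloo := G.norm_spectralOp_leaveOneOut_sub_le R ℓ
  have hres := norm_powerIter_residual_le hx hloo m
  have hone := one_le_norm_powerIter hx hloo m
  have hincoh := G.abs_inner_powerIter_le ℓ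
  have hQ := R.looScale_nonneg
  have hop := spectralOp_leaveOneOut a ℓ x
  set w := powerIter (spectralOp (leaveOneOut a ℓ) x) x m
  set β := ⟪x, spectralOp (leaveOneOut a ℓ) x w⟫
  have hremoved : ‖((m : ℝ)⁻¹ * ⟪a ℓ, x⟫ ^ 2) • ⟪a ℓ, w⟫ • a ℓ‖ ≤ looScale m S T * ‖w‖ := by
    have hS := R.one_le_incoherence
    rw [norm_smul, norm_smul, Real.norm_of_nonneg (by positivity), Real.norm_eq_abs, ← sq_abs]
    calc (m : ℝ)⁻¹ * |⟪a ℓ, x⟫| ^ 2 * (|⟪a ℓ, w⟫| * ‖a ℓ‖) ≤ (m : ℝ)⁻¹ * S ^ 2 * (S * ‖w‖ * T) := by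
          gcongr <;> first | exact G.abs_inner_le ℓ | exact G.norm_le ℓ
      _ = looScale m S T * ‖w‖ := by rw [looScale]; ring
  have hsplit : spectralOp a x w - β • w = (spectralOp (leaveOneOut a ℓ) x w - β • w) +
      ((m : ℝ)⁻¹ * ⟪a ℓ, x⟫ ^ 2) • ⟪a ℓ, w⟫ • a ℓ := by
    rw [hop]
    simp only [_root_.sub_apply, _root_.smul_apply, InnerProductSpace.rankOne_apply]
    abel
  calc ‖spectralOp a x w - β • w‖ ≤ 4 * looScale m S T + looScale m S T * ‖w‖ := by
        rw [hsplit]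
        refine (norm_add_le _ _).trans (add_le_add (hres.trans ?_) hremoved)
        gcongr
        exact (one_half_pow_le_inv R.sampleSize_pos).trans R.inv_le_looScale
    _ ≤ 5 * looScale m S T * ‖w‖ := by nlinarith

lemma norm_normalized_powerIter_sub_le (R : Regime m S T δ) (G : GoodSample a x S T δ)
    (hx : ‖x‖ = 1) (ℓ : Fin m) (hv : ‖v‖ = 1) (hxv : 0 ≤ ⟪x, v⟫) (hlam : 5 / 2 ≤ lam)
    (heig : spectralOp a x v = lam • v) :
    letI w := powerIter (spectralOp (leaveOneOut a ℓ) x) x m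
    ‖‖w‖⁻¹ • w - v‖ ≤ 10 * looScale m S T := by
  have hloo := G.norm_spectralOp_leaveOneOut_sub_le R ℓ
  have hone := one_le_norm_powerIter hx hloo m
  have htwo := norm_powerIter_le hx hloo m
  have hxw := inner_powerIter hx hloo m
  have hβ := (inner_apply_mem_Icc hx hloo hxw htwo).1
  have hres := G.norm_residual_leaveOneOut_le R hx ℓ
  have hδ := R.radius_le
  have hvx := norm_eigenvector_sub_le hx G.norm_spectralOp_sub_le hv hxv hlam heig
  set w := powerIter (spectralOp (leaveOneOut a ℓ) x) x m
  have hw0 : 0 < ‖w‖ := by linarith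
  have hvw : 0 ≤ ⟪v, w⟫ := by
    have hdiff := (abs_le.1 (abs_real_inner_le_norm (v - x) w)).1
    rw [inner_sub_left, hxw] at hdiff
    nlinarith
  have hres' : ‖spectralOp a x (‖w‖⁻¹ • w) - ⟪x, spectralOp (leaveOneOut a ℓ) x w⟫ • ‖w‖⁻¹ • w‖ ≤
      5 * looScale m S T := by
    rw [map_smul, smul_comm _ ‖w‖⁻¹, ← smul_sub, norm_smul, norm_inv, norm_norm,
      inv_mul_le_iff₀ hw0, mul_comm ‖w‖]
    exact hres
  have hunit : ‖‖w‖⁻¹ • w‖ = 1 := norm_smul_inv_norm (norm_pos_iff.1 hw0)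
  have hclose := norm_eigenvector_sub_le_of_residual_le (by linarith) hx
    G.norm_spectralOp_sub_le hv hxv hlam heig (by linarith) hunit
    (by rw [real_inner_smul_right]; positivity) hres'
  linarith

lemma norm_sub_spectralProxy_le (R : Regime m S T δ) (G : GoodSample a x S T δ)
    (hx : ‖x‖ = 1) (ℓ : Fin m) (hv : ‖v‖ = 1) (hxv : 0 ≤ ⟪x, v⟫) (hlam : 5 / 2 ≤ lam)
    (heig : spectralOp a x v = lam • v) {σ : ℝ} (hσ0 : 0 ≤ σ) (hσ : σ ^ 2 = meanIntensity a x) :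
    ‖σ • v - spectralProxy (leaveOneOut a ℓ) x‖ ≤ 1000 * looScale m S T := by
  have hσl := (G.meanIntensity_mem_Icc R).1
  have hdiff := G.meanIntensity_sub_leaveOneOut_mem_Icc R ℓ
  have hσ' := G.le_meanIntensity_leaveOneOut R ℓ
  rw [← hσ] at hσl hdiff
  have hscale := abs_sub_sqrt_le (by nlinarith) (by linarith) hdiff.1 hdiff.2
  have hdir := G.norm_normalized_powerIter_sub_le R hx ℓ hv hxv hlam heig
  have hτ : √(meanIntensity (leaveOneOut a ℓ) x) ≤ 2 := by
    rw [Real.sqrt_le_iff]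
    have hσu := (G.meanIntensity_mem_Icc R).2
    rw [← hσ] at hσu
    exact ⟨zero_le_two, by linarith [hdiff.1]⟩
  rw [spectralProxy]
  set τ := √(meanIntensity (leaveOneOut a ℓ) x)
  set w := powerIter (spectralOp (leaveOneOut a ℓ) x) x m
  calc ‖σ • v - (τ / ‖w‖) • w‖ = ‖(σ - τ) • v - τ • (‖w‖⁻¹ • w - v)‖ := by
        rw [div_eq_mul_inv, mul_smul]; congr 1; module
    _ ≤ |σ - τ| + τ * ‖‖w‖⁻¹ • w - v‖ := by
        refine (norm_sub_le _ _).trans_eq ?_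
        rw [norm_smul, norm_smul, hv, mul_one, Real.norm_eq_abs,
          Real.norm_of_nonneg (Real.sqrt_nonneg _)]
    _ ≤ looScale m S T + 2 * (10 * looScale m S T) := by gcongr
    _ ≤ 1000 * looScale m S T := by linarith [R.looScale_nonneg]

lemma norm_spectralInit_sub_le [FiniteDimensional ℝ V] (R : Regime m S T δ)
    (G : GoodSample a x S T δ) (hx : ‖x‖ = 1) (hz : IsSpectralInit a x z) (hxz : 0 ≤ ⟪x, z⟫) :
    ‖z - x‖ ≤ δ / 2 ∧
      ∀ ℓ, ‖z - spectralProxy (leaveOneOut a ℓ) x‖ ≤ 1000 * looScale m S T := by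
  have hδ := R.radius_le
  have hσ := hz.norm_sq_eq
  have hnorm := G.abs_meanIntensity_sub_one_le
  have hz0 : z ≠ 0 := by
    rintro rfl
    rw [← hσ, norm_zero] at hnorm
    norm_num at hnorm
    linarith
  obtain ⟨lam, v, hv, hzv, hxv, heig, htop⟩ := hz.exists_unit_eigenvector hz0 hxz
  have hlam := five_halves_le_of_eigenvalue_le (by linarith) (isSymmetric_spectralOp a x) hx
    G.norm_spectralOp_sub_le htop
  rw [hzv]
  refine ⟨?_, fun ℓ => G.norm_sub_spectralProxy_le R hx ℓ hv hxv hlam heig (norm_nonneg z) hσ⟩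
  have hvx := norm_eigenvector_sub_le hx G.norm_spectralOp_sub_le hv hxv hlam heig
  have hz1 : |‖z‖ - 1| ≤ δ / 16 := by
    rw [← hσ, abs_le] at hnorm
    rw [abs_le]
    constructor <;> nlinarith [norm_nonneg z]
  linarith [norm_smul_sub_le hv hvx hz1, R.radius_pos]

end GoodSample

end SpectralInitialization

section Convergence

variable {V : Type*} [NormedAddCommGroup V] [InnerProductSpace ℝ V] {m : ℕ} {a : Fin m → V}
  {x : V} {S T δ : ℝ}

namespace GoodSample

/-- Incoherence transfers from the leave-one-out flows to the flow itself, and back from the flow to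
each leave-one-out flow in all the other directions. -/
lemma norm_spectralOp_sub_le_of_leaveOneOut (R : Regime m S T δ) (G : GoodSample a x S T δ)
    {z : V} {t : Fin m → V} (hz : ‖z - x‖ ≤ δ / 2)
    (hzt : ∀ ℓ, ‖z - t ℓ‖ ≤ 1000 * looScale m S T)
    (ht : ∀ ℓ, |⟪a ℓ, t ℓ - x⟫| ≤ S * ‖t ℓ - x‖) :
    ‖spectralOp a (z - x)‖ ≤ 1 / 1000 ∧
      ∀ ℓ, ‖t ℓ - x‖ ≤ δ ∧ |⟪a ℓ, t ℓ - x⟫| ≤ S ∧ ‖spectralOp a (t ℓ - x)‖ ≤ 1 / 1000 := by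
  have hS := R.one_le_incoherence
  have hδ := R.radius_le
  have hδ0 := R.radius_pos
  have hsplit (ℓ) : t ℓ - x = (z - x) - (z - t ℓ) := (sub_sub_sub_cancel_left x (t ℓ) z).symm
  have htx (ℓ) : ‖t ℓ - x‖ ≤ δ := by
    rw [hsplit]
    linarith [norm_sub_le (z - x) (z - t ℓ), hzt ℓ, R.looScale_le]
  have hinner (j ℓ) : |⟪a j, z - t ℓ⟫| ≤ S / 20 := by
    refine (abs_real_inner_le_norm _ _).trans (le_trans ?_ R.mul_looScale_le)
    have hT := R.one_le_norm_bound
    gcongr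
    exacts [G.norm_le j, hzt ℓ]
  have hown (ℓ) : |⟪a ℓ, t ℓ - x⟫| ≤ S :=
    (ht ℓ).trans (mul_le_of_le_one_right (by linarith) ((htx ℓ).trans (by linarith)))
  have hzx (ℓ) : |⟪a ℓ, z - x⟫| ≤ 2 * S := by
    rw [← sub_add_sub_cancel z (t ℓ) x, inner_add_right]
    linarith [abs_add_le ⟪a ℓ, z - t ℓ⟫ ⟪a ℓ, t ℓ - x⟫, hinner ℓ ℓ, hown ℓ]
  refine ⟨G.norm_spectralOp_le _ (by linarith) fun ℓ => (hzx ℓ).trans (by linarith), fun ℓ =>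
    ⟨htx ℓ, hown ℓ, G.norm_spectralOp_le _ (htx ℓ) fun j => ?_⟩⟩
  rw [hsplit, inner_sub_right]
  linarith [abs_sub ⟪a j, z - x⟫ ⟪a j, z - t ℓ⟫, hzx j, hinner j ℓ]

variable {z : ℕ → V}

lemma norm_sub_le_pow_of_le [FiniteDimensional ℝ V] (R : Regime m S T δ)
    (G : GoodSample a x S T δ) (hx : ‖x‖ = 1) (hinit : IsSpectralInit a x (z 0))
    (hxz : 0 ≤ ⟪x, z 0⟫) (hz : ∀ k, z (k + 1) = wirtingerStep (1 / 200) a x (z k)) {k : ℕ}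
    (hk : k ≤ m) :
    ‖z k - x‖ ≤ (799 / 800) ^ k * ‖z 0 - x‖ ∧
      ∀ ℓ, ‖z k - proxyFlow (1 / 200) (leaveOneOut a ℓ) x k‖ ≤ 1000 * looScale m S T := by
  obtain ⟨hz0, hproxy⟩ := G.norm_spectralInit_sub_le R hx hinit hxz
  induction k with
  | zero => exact ⟨by simp, hproxy⟩
  | succ k ih =>
    obtain ⟨hzk, hloo⟩ := ih (by omega)
    have hzδ : ‖z k - x‖ ≤ δ / 2 := hzk.trans <|
      (mul_le_of_le_one_left (norm_nonneg _) (pow_le_one₀ (by norm_num) (by norm_num))).trans hz0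
    obtain ⟨hopz, ht⟩ := G.norm_spectralOp_sub_le_of_leaveOneOut R hzδ hloo
      fun ℓ => G.abs_inner_proxyFlow_le ℓ k (by omega)
    rw [hz]
    refine ⟨(G.norm_wirtingerStep_sub_le R hx hopz).trans ?_, fun ℓ => ?_⟩
    · rw [pow_succ', mul_assoc]
      gcongr
    · obtain ⟨htδ, hincoh, hopt⟩ := ht ℓ
      rw [proxyFlow_succ]
      exact G.norm_wirtingerStep_sub_leaveOneOut_le R hx hopz hopt htδ hincoh (hloo ℓ)

/-- After `m` steps the error is so small that incoherence is automatic, and the leave-one-out flows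
are no longer needed. -/
lemma norm_sub_le_pow [FiniteDimensional ℝ V] (R : Regime m S T δ)
    (G : GoodSample a x S T δ) (hx : ‖x‖ = 1) (hinit : IsSpectralInit a x (z 0))
    (hxz : 0 ≤ ⟪x, z 0⟫) (hz : ∀ k, z (k + 1) = wirtingerStep (1 / 200) a x (z k)) (k : ℕ) :
    ‖z k - x‖ ≤ (799 / 800) ^ k * ‖z 0 - x‖ := by
  rcases le_total k m with hk | hk
  · exact (G.norm_sub_le_pow_of_le R hx hinit hxz hz hk).1
  have hz0 := (G.norm_spectralInit_sub_le R hx hinit hxz).1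
  have hδ := R.radius_le
  induction k, hk using Nat.le_induction with
  | base => exact (G.norm_sub_le_pow_of_le R hx hinit hxz hz le_rfl).1
  | succ k hk ih =>
    have hzδ : ‖z k - x‖ ≤ δ := by
      have hle := mul_le_of_le_one_left (norm_nonneg (z 0 - x))
        (pow_le_one₀ (n := k) (by norm_num : (0 : ℝ) ≤ 799 / 800) (by norm_num))
      linarith [R.radius_pos]
    have hincoh (ℓ) : |⟪a ℓ, z k - x⟫| ≤ 3 * S := by
      have hT := R.one_le_norm_bound
      calc |⟪a ℓ, z k - x⟫| ≤ ‖a ℓ‖ * ‖z k - x‖ := abs_real_inner_le_norm _ _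
        _ ≤ T * ((799 / 800) ^ m * 1) := by
          gcongr
          · exact G.norm_le ℓ
          · refine ih.trans ?_
            gcongr ?_ * ?_
            · exact pow_le_pow_of_le_one (by norm_num) (by norm_num) hk
            · linarith
        _ ≤ 3 * S := by linarith [R.pow_mul_le, R.one_le_incoherence]
    rw [hz, pow_succ', mul_assoc]
    refine (G.norm_wirtingerStep_sub_le R hx (G.norm_spectralOp_le _ hzδ hincoh)).trans ?_
    gcongr

end GoodSample

end Convergence

section Tails

variable {V : Type*} [NormedAddCommGroup V] [InnerProductSpace ℝ V] {m : ℕ} {a : Fin m → V}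
  {K N S δ : ℝ}

/-- A bound, uniform over the unit ball, for the part of the measurements `⟨a_ℓ, u⟩` beyond each
dyadic level `2 · 2 ^ i`. -/
def HasTailBound (a : Fin m → V) (K N : ℝ) : Prop :=
  ∀ i ≤ m, ∀ u : V, ‖u‖ ≤ 1 →
    ∑ ℓ, max (|⟪a ℓ, u⟫| - 2 * 2 ^ i) 0 ^ 2 ≤ K * (N + m * Real.exp (-(4 ^ i / 4)))

lemma sq_le_four_mul_max_sub_sq {b s : ℝ} (hb : 0 ≤ b) (hs : 4 * b ≤ s) :
    s ^ 2 ≤ 4 * max (s - 2 * b) 0 ^ 2 := by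
  have hhalf : s / 2 ≤ max (s - 2 * b) 0 := le_max_of_le_left (by linarith)
  nlinarith

lemma pow_four_le_sum_layers (I : ℕ) {s : ℝ} (h0 : 0 ≤ s) (hs : s ≤ 4 * 2 ^ I) :
    s ^ 4 ≤ 256 + 256 * ∑ i ∈ Finset.range I, 4 ^ i * max (s - 2 * 2 ^ i) 0 ^ 2 := by
  induction I with
  | zero =>
    have h4 : s ^ 4 ≤ 4 ^ 4 := by gcongr; simpa using hs
    simpa using h4.trans_eq (by norm_num)
  | succ I ih =>
    rw [Finset.sum_range_succ]
    rcases le_total s (4 * 2 ^ I) with hsI | hsI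
    · have hlayer : 0 ≤ (4 : ℝ) ^ I * max (s - 2 * 2 ^ I) 0 ^ 2 := by positivity
      linarith [ih hsI]
    · have hsq : s ^ 2 ≤ 64 * 4 ^ I := by
        calc s ^ 2 ≤ (4 * 2 ^ (I + 1)) ^ 2 := by gcongr
          _ = 64 * 4 ^ I := by rw [show (4 : ℝ) ^ I = (2 ^ 2) ^ I by norm_num, ← pow_mul]; ring
      have hlayer : s ^ 4 ≤ 256 * (4 ^ I * max (s - 2 * 2 ^ I) 0 ^ 2) := by
        calc s ^ 4 = s ^ 2 * s ^ 2 := by ring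
          _ ≤ 64 * 4 ^ I * (4 * max (s - 2 * 2 ^ I) 0 ^ 2) := by
            gcongr
            exact sq_le_four_mul_max_sub_sq (by positivity) hsI
          _ = 256 * (4 ^ I * max (s - 2 * 2 ^ I) 0 ^ 2) := by ring
      have hsum : 0 ≤ ∑ i ∈ Finset.range I, (4 : ℝ) ^ i * max (s - 2 * 2 ^ i) 0 ^ 2 := by
        positivity
      linarith

lemma sum_four_pow_le (I : ℕ) : ∑ i ∈ Finset.range I, (4 : ℝ) ^ i ≤ 4 ^ I := by
  rw [geom_sum_eq (by norm_num)]
  have h : (0 : ℝ) ≤ 4 ^ I := by positivity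
  linarith

lemma mul_exp_neg_div_four_le {y : ℝ} (hy : 0 < y) : y * Real.exp (-(y / 4)) ≤ 32 * y⁻¹ := by
  rw [Real.exp_neg, ← div_eq_mul_inv, div_le_iff₀ (Real.exp_pos _)]
  calc y = 32 * y⁻¹ * (y ^ 2 / 32) := by field_simp
    _ ≤ 32 * y⁻¹ * Real.exp (y / 4) := by
      gcongr
      nlinarith [Real.quadratic_le_exp_of_nonneg (x := y / 4) (by positivity)]

lemma sum_four_pow_mul_exp_le (I : ℕ) :
    ∑ i ∈ Finset.range I, (4 : ℝ) ^ i * Real.exp (-(4 ^ i / 4)) ≤ 43 := by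
  calc ∑ i ∈ Finset.range I, (4 : ℝ) ^ i * Real.exp (-(4 ^ i / 4))
      ≤ ∑ i ∈ Finset.range I, 32 * (1 / 4) ^ i := by
        refine Finset.sum_le_sum fun i _ => ?_
        simpa only [one_div, inv_pow] using mul_exp_neg_div_four_le (y := 4 ^ i) (by positivity)
    _ ≤ 32 * ∑' i : ℕ, (1 / 4 : ℝ) ^ i := by
        rw [← Finset.mul_sum]
        gcongr
        exact (summable_geometric_of_lt_one (by norm_num) (by norm_num)).sum_le_tsum _
          fun i _ => by positivity
    _ ≤ 43 := by rw [tsum_geometric_of_lt_one (by norm_num) (by norm_num)]; norm_num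

lemma exists_le_four_pow_le {r : ℝ} (hr : 1 ≤ r) : ∃ J : ℕ, r ≤ 4 ^ J ∧ 4 ^ J ≤ 4 * r := by
  obtain ⟨k, hk, hk'⟩ := exists_nat_pow_near hr (by norm_num : (1 : ℝ) < 4)
  exact ⟨k + 1, hk'.le, by rw [pow_succ']; linarith⟩

lemma le_of_four_pow_le {I : ℕ} (h : (4 : ℝ) ^ I ≤ m) : I ≤ m := by
  have h' : 4 ^ I ≤ m := by exact_mod_cast h
  exact (Nat.lt_pow_self (by norm_num)).le.trans h'

/-- Below the level `4 * b` use AM-GM, above it the excess of `s` over `2 * b` is of order `s`. -/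
lemma mul_sq_le_add_max_sub_sq {r R s b : ℝ} (hδ : 0 < δ) (hr : 0 ≤ r) (hrR : r ≤ R) (hb : 0 ≤ b) :
    r * s ^ 2 ≤
      1 / (2 * δ ^ 2) * r ^ 2 + δ ^ 2 / 2 * min s (4 * b) ^ 4 + 4 * R * max (s - 2 * b) 0 ^ 2 := by
  have hR : 0 ≤ R := hr.trans hrR
  have hmax : 0 ≤ max (s - 2 * b) 0 ^ 2 := sq_nonneg _
  have hmin : 0 ≤ δ ^ 2 / 2 * min s (4 * b) ^ 4 := by positivity
  rcases le_total s (4 * b) with hsb | hsb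
  · have hamgm : 1 / (2 * δ ^ 2) * r ^ 2 + δ ^ 2 / 2 * s ^ 4 - r * s ^ 2 =
        (r / δ - δ * s ^ 2) ^ 2 / 2 := by field_simp; ring
    rw [min_eq_left hsb]
    nlinarith [sq_nonneg (r / δ - δ * s ^ 2), mul_nonneg hR hmax]
  · have hexcess : r * s ^ 2 ≤ R * (4 * max (s - 2 * b) 0 ^ 2) := by
      gcongr
      exact sq_le_four_mul_max_sub_sq hb hsb
    have hr2 : 0 ≤ 1 / (2 * δ ^ 2) * r ^ 2 := by positivity
    linarith

namespace HasTailBound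

lemma mean_min_pow_four_le (h : HasTailBound a K N) (hm : 0 < (m : ℝ)) (hK : 0 ≤ K) {I : ℕ}
    (hI : I ≤ m) (hIN : 4 ^ I * N ≤ m) (hN : 0 ≤ N) {u : V} (hu : ‖u‖ ≤ 1) :
    (m : ℝ)⁻¹ * ∑ ℓ, min |⟪a ℓ, u⟫| (4 * 2 ^ I) ^ 4 ≤ 256 + 256 * 44 * K := by
  have hlayers (ℓ) : min |⟪a ℓ, u⟫| (4 * 2 ^ I) ^ 4 ≤
      256 + 256 * ∑ i ∈ Finset.range I, 4 ^ i * max (|⟪a ℓ, u⟫| - 2 * 2 ^ i) 0 ^ 2 := by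
    refine (pow_four_le_sum_layers I (by positivity) (min_le_right _ _)).trans ?_
    gcongr
    exact min_le_left _ _
  have hN' : (∑ i ∈ Finset.range I, (4 : ℝ) ^ i) * N ≤ m :=
    (mul_le_mul_of_nonneg_right (sum_four_pow_le I) hN).trans hIN
  rw [inv_mul_le_iff₀ hm]
  calc ∑ ℓ, min |⟪a ℓ, u⟫| (4 * 2 ^ I) ^ 4
      ≤ m * 256 + 256 * ∑ i ∈ Finset.range I, 4 ^ i *
          ∑ ℓ, max (|⟪a ℓ, u⟫| - 2 * 2 ^ i) 0 ^ 2 := by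
        refine (Finset.sum_le_sum fun ℓ _ => hlayers ℓ).trans_eq ?_
        rw [Finset.sum_add_distrib, ← Finset.mul_sum, Finset.sum_comm]
        simp only [Finset.sum_const, Finset.card_univ, Fintype.card_fin, nsmul_eq_mul,
          Finset.mul_sum]
    _ ≤ m * 256 + 256 * ∑ i ∈ Finset.range I, 4 ^ i *
          (K * (N + m * Real.exp (-(4 ^ i / 4)))) := by
        gcongr with i hi
        exact h i ((Finset.mem_range.1 hi).le.trans hI) u hu
    _ = m * 256 + 256 * (K * ((∑ i ∈ Finset.range I, (4 : ℝ) ^ i) * N +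
          m * ∑ i ∈ Finset.range I, (4 : ℝ) ^ i * Real.exp (-(4 ^ i / 4)))) := by
        rw [Finset.sum_mul, Finset.mul_sum _ _ (m : ℝ), ← Finset.sum_add_distrib,
          Finset.mul_sum _ _ K]
        congr! 3 with i
        ring
    _ ≤ m * 256 + 256 * (K * (m + m * 43)) := by
        gcongr
        exact sum_four_pow_mul_exp_le I
    _ = m * (256 + 256 * 44 * K) := by ring

/-- Beyond a level `2 ^ J` with `4 ^ J` of order `log m`, the exponential term is negligible. -/
lemma exists_level (h : HasTailBound a K N) (hm : 0 < (m : ℝ)) (hK : 0 ≤ K)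
    (hlog : 1 ≤ Real.log m) (hlogN : Real.log m ≤ N) (hNm : 16 * (N * Real.log m) ≤ m) :
    ∃ J ≤ m, (4 : ℝ) ^ J ≤ 16 * Real.log m ∧ 4 ^ J * N ≤ m ∧ ∀ u : V, ‖u‖ ≤ 1 →
      ∑ ℓ, max (|⟪a ℓ, u⟫| - 2 * 2 ^ J) 0 ^ 2 ≤ 2 * K * N := by
  obtain ⟨J, hJ, hJ'⟩ := exists_le_four_pow_le (by linarith : 1 ≤ 4 * Real.log m)
  have hJ16 : (4 : ℝ) ^ J ≤ 16 * Real.log m := by linarith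
  have hJN : 4 ^ J * N ≤ m :=
    (mul_le_mul_of_nonneg_right hJ16 (by linarith)).trans (by linarith)
  have hJm : J ≤ m :=
    le_of_four_pow_le <| (le_mul_of_one_le_right (by positivity) (by linarith)).trans hJN
  have hexp : m * Real.exp (-(4 ^ J / 4)) ≤ 1 := by
    calc m * Real.exp (-(4 ^ J / 4)) ≤ m * Real.exp (-Real.log m) := by gcongr; linarith
      _ = 1 := by rw [Real.exp_neg, Real.exp_log hm, mul_inv_cancel₀ hm.ne']
  refine ⟨J, hJm, hJ16, hJN, fun u hu => (h J hJm u hu).trans ?_⟩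
  nlinarith

lemma norm_le (h : HasTailBound a K N) (hm : 0 < (m : ℝ)) (hK : 1 ≤ K)
    (hlog : 1 ≤ Real.log m) (hlogN : Real.log m ≤ N) (hNm : 16 * (N * Real.log m) ≤ m)
    (ℓ : Fin m) : ‖a ℓ‖ ≤ (8 + 2 * K) * √N := by
  obtain ⟨J, -, hJ, -, htail⟩ := h.exists_level hm (by linarith) hlog hlogN hNm
  rcases eq_or_ne (a ℓ) 0 with h0 | h0
  · rw [h0, norm_zero]
    positivity
  have hinner : |⟪a ℓ, ‖a ℓ‖⁻¹ • a ℓ⟫| = ‖a ℓ‖ := by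
    rw [real_inner_smul_right, real_inner_self_eq_norm_sq, sq, inv_mul_cancel_left₀
      (norm_ne_zero_iff.2 h0), abs_norm]
  have hsum := (Finset.single_le_sum (fun _ _ => sq_nonneg _) (Finset.mem_univ ℓ)).trans
    (htail (‖a ℓ‖⁻¹ • a ℓ) (norm_smul_inv_norm (𝕜 := ℝ) h0).le)
  rw [hinner] at hsum
  have hexcess : max (‖a ℓ‖ - 2 * 2 ^ J) 0 ≤ 2 * K * √N := by
    refine (abs_le_of_sq_le_sq' (hsum.trans ?_) (by positivity)).2
    rw [mul_pow, Real.sq_sqrt (by linarith)]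
    nlinarith
  have hlevel : (2 : ℝ) ^ J ≤ 4 * √N := by
    refine (abs_le_of_sq_le_sq' ?_ (by positivity)).2
    rw [mul_pow, Real.sq_sqrt (by linarith), ← pow_mul, mul_comm J, pow_mul]
    norm_num
    linarith
  linarith [le_max_left (‖a ℓ‖ - 2 * 2 ^ J) 0]

lemma mean_inner_pow_four_le (h : HasTailBound a K N) (hm : 0 < (m : ℝ)) (hK : 0 ≤ K) (hN : 1 ≤ N)
    (hδ : 0 < δ) (hδ1 : δ ≤ 1) (hS : 1 ≤ S) (hNm : 40 * (S ^ 2 * N) ≤ δ ^ 2 * m) {g : V}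
    (hg : ‖g‖ ≤ δ) (hgS : ∀ ℓ, |⟪a ℓ, g⟫| ≤ 3 * S) :
    (m : ℝ)⁻¹ * ∑ ℓ, ⟪a ℓ, g⟫ ^ 4 ≤ (256 + 256 * 44 * K) * δ ^ 4 := by
  have hSδ : 1 ≤ (S / δ) ^ 2 := one_le_pow₀ ((one_le_div₀ hδ).2 (hδ1.trans hS))
  obtain ⟨I, hI, hI'⟩ := exists_le_four_pow_le (by linarith : 1 ≤ 10 * (S / δ) ^ 2)
  have hIN : 4 ^ I * N ≤ m := by
    calc 4 ^ I * N ≤ 4 * (10 * (S / δ) ^ 2) * N := by gcongr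
      _ = 40 * (S ^ 2 * N) / δ ^ 2 := by ring
      _ ≤ m := by rw [div_le_iff₀ (by positivity)]; linarith
  have hIm : I ≤ m := le_of_four_pow_le <| (le_mul_of_one_le_right (by positivity) hN).trans hIN
  have htrunc (ℓ) : min |⟪a ℓ, δ⁻¹ • g⟫| (4 * 2 ^ I) ^ 4 = ⟪a ℓ, g⟫ ^ 4 / δ ^ 4 := by
    have habs : |⟪a ℓ, δ⁻¹ • g⟫| = |⟪a ℓ, g⟫| / δ := by
      rw [real_inner_smul_right, abs_mul, abs_inv, abs_of_pos hδ, inv_mul_eq_div]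
    have hle : |⟪a ℓ, g⟫| / δ ≤ 4 * 2 ^ I := by
      refine (div_le_div_of_nonneg_right (hgS ℓ) hδ.le).trans
        (abs_le_of_sq_le_sq' ?_ (by positivity)).2
      calc (3 * S / δ) ^ 2 = 9 * (S / δ) ^ 2 := by ring
        _ ≤ 16 * 4 ^ I := by linarith
        _ = (4 * 2 ^ I) ^ 2 := by rw [mul_pow, ← pow_mul, mul_comm I, pow_mul]; norm_num
    rw [habs, min_eq_left hle, div_pow, Even.pow_abs (by decide)]
  have hu : ‖δ⁻¹ • g‖ ≤ 1 := by
    rwa [norm_smul, norm_inv, Real.norm_of_nonneg hδ.le, inv_mul_le_iff₀ hδ, mul_one]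
  have hmean := h.mean_min_pow_four_le hm hK hIm hIN (by linarith) hu
  simp only [htrunc] at hmean
  rwa [← Finset.sum_div, ← mul_div_assoc, div_le_iff₀ (by positivity)] at hmean

lemma mean_inner_sq_mul_inner_sq_le (h : HasTailBound a K N) (hm : 0 < (m : ℝ)) (hK : 0 ≤ K)
    (hlog : 1 ≤ Real.log m) (hlogN : Real.log m ≤ N) (hlogm : 16 * (N * Real.log m) ≤ m)
    (hδ : 0 < δ) (hδ1 : δ ≤ 1) (hS : 1 ≤ S) (hNm : 40 * (S ^ 2 * N) ≤ δ ^ 2 * m) {g u : V}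
    (hg : ‖g‖ ≤ δ) (hgS : ∀ ℓ, |⟪a ℓ, g⟫| ≤ 3 * S) (hu : ‖u‖ ≤ 1) :
    (m : ℝ)⁻¹ * ∑ ℓ, ⟪a ℓ, g⟫ ^ 2 * ⟪a ℓ, u⟫ ^ 2 ≤
      (256 + 256 * 44 * K) * δ ^ 2 + 72 * K * (S ^ 2 * N) / m := by
  obtain ⟨J, hJm, -, hJN, htail⟩ := h.exists_level hm hK hlog hlogN hlogm
  have hpoint (ℓ) : ⟪a ℓ, g⟫ ^ 2 * ⟪a ℓ, u⟫ ^ 2 ≤ 1 / (2 * δ ^ 2) * ⟪a ℓ, g⟫ ^ 4 +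
      δ ^ 2 / 2 * min |⟪a ℓ, u⟫| (4 * 2 ^ J) ^ 4 +
      36 * S ^ 2 * max (|⟪a ℓ, u⟫| - 2 * 2 ^ J) 0 ^ 2 := by
    have hR : ⟪a ℓ, g⟫ ^ 2 ≤ 9 * S ^ 2 := by
      rw [← sq_abs]
      exact (pow_le_pow_left₀ (abs_nonneg _) (hgS ℓ) 2).trans_eq (by ring)
    refine (sq_abs ⟪a ℓ, u⟫ ▸ mul_sq_le_add_max_sub_sq hδ (sq_nonneg ⟪a ℓ, g⟫) hR
      (by positivity : (0 : ℝ) ≤ 2 ^ J)).trans_eq (by ring)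
  have hquartic := h.mean_inner_pow_four_le hm hK (hlog.trans hlogN) hδ hδ1 hS hNm hg hgS
  have htrunc := h.mean_min_pow_four_le hm hK hJm hJN (by linarith) hu
  calc (m : ℝ)⁻¹ * ∑ ℓ, ⟪a ℓ, g⟫ ^ 2 * ⟪a ℓ, u⟫ ^ 2
      ≤ 1 / (2 * δ ^ 2) * ((m : ℝ)⁻¹ * ∑ ℓ, ⟪a ℓ, g⟫ ^ 4) +
          δ ^ 2 / 2 * ((m : ℝ)⁻¹ * ∑ ℓ, min |⟪a ℓ, u⟫| (4 * 2 ^ J) ^ 4) +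
          36 * S ^ 2 * ((m : ℝ)⁻¹ * ∑ ℓ, max (|⟪a ℓ, u⟫| - 2 * 2 ^ J) 0 ^ 2) := by
        refine (mul_le_mul_of_nonneg_left (Finset.sum_le_sum fun ℓ _ => hpoint ℓ)
          (inv_nonneg.2 hm.le)).trans_eq ?_
        simp only [Finset.sum_add_distrib, ← Finset.mul_sum]
        ring
    _ ≤ 1 / (2 * δ ^ 2) * ((256 + 256 * 44 * K) * δ ^ 4) + δ ^ 2 / 2 * (256 + 256 * 44 * K) +
          36 * S ^ 2 * ((m : ℝ)⁻¹ * (2 * K * N)) := by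
        gcongr
        exact htail u hu
    _ = (256 + 256 * 44 * K) * δ ^ 2 + 72 * K * (S ^ 2 * N) / m := by field_simp; ring

lemma norm_spectralOp_le (h : HasTailBound a K N) (hm : 0 < (m : ℝ)) (hK : 0 ≤ K)
    (hlog : 1 ≤ Real.log m) (hlogN : Real.log m ≤ N) (hlogm : 16 * (N * Real.log m) ≤ m)
    (hδ : 0 < δ) (hδ1 : δ ≤ 1) (hS : 1 ≤ S) (hNm : 40 * (S ^ 2 * N) ≤ δ ^ 2 * m) {g : V}
    (hg : ‖g‖ ≤ δ) (hgS : ∀ ℓ, |⟪a ℓ, g⟫| ≤ 3 * S) :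
    ‖spectralOp a g‖ ≤ (256 + 256 * 44 * K) * δ ^ 2 + 72 * K * (S ^ 2 * N) / m := by
  have hN : 0 ≤ N := by linarith
  refine opNorm_le_of_abs_inner_le_of_norm_eq_one (isSymmetric_spectralOp a g) (by positivity)
    fun u hu => ?_
  rw [inner_spectralOp_self, abs_of_nonneg (by positivity)]
  exact h.mean_inner_sq_mul_inner_sq_le hm hK hlog hlogN hlogm hδ hδ1 hS hNm hg hgS hu.le

end HasTailBound

end Tails

section GaussianMoments

lemma gaussianPDFReal_zero_one (t : ℝ) :
    gaussianPDFReal 0 1 t = (√(2 * Real.pi))⁻¹ * Real.exp (-t ^ 2 / 2) := by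
  simp [gaussianPDFReal]

lemma integrable_gaussianReal_zero_one_iff {f : ℝ → ℝ} :
    Integrable f (gaussianReal 0 1) ↔ Integrable fun t => f t * Real.exp (-t ^ 2 / 2) := by
  rw [gaussianReal_of_var_ne_zero _ one_ne_zero, integrable_withDensity_iff_integrable_smul'
    (measurable_gaussianPDF _ _) (ae_of_all _ fun _ => gaussianPDF_lt_top)]
  simp only [toReal_gaussianPDF, gaussianPDFReal_zero_one, smul_eq_mul, mul_assoc]
  rw [integrable_const_mul_iff (IsUnit.mk0 _ (by positivity))]
  simp only [mul_comm]

lemma integral_gaussianReal_zero_one (f : ℝ → ℝ) :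
    ∫ t, f t ∂gaussianReal 0 1 = (√(2 * Real.pi))⁻¹ * ∫ t, f t * Real.exp (-t ^ 2 / 2) := by
  rw [integral_gaussianReal_eq_integral_smul one_ne_zero, ← integral_const_mul]
  simp only [gaussianPDFReal_zero_one, smul_eq_mul, mul_assoc, mul_comm]

lemma exp_sq_div_four_mul_exp (t : ℝ) :
    Real.exp (t ^ 2 / 4) * Real.exp (-t ^ 2 / 2) = Real.exp (-(1 / 4) * t ^ 2) := by
  rw [← Real.exp_add]
  ring_nf

lemma integrable_exp_sq_div_four_gaussianReal :
    Integrable (fun t : ℝ => Real.exp (t ^ 2 / 4)) (gaussianReal 0 1) := by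
  rw [integrable_gaussianReal_zero_one_iff]
  simp only [exp_sq_div_four_mul_exp]
  exact integrable_exp_neg_mul_sq (by norm_num)

lemma integral_exp_sq_div_four_gaussianReal_le :
    ∫ t, Real.exp (t ^ 2 / 4) ∂gaussianReal 0 1 ≤ 2 := by
  rw [integral_gaussianReal_zero_one]
  simp only [exp_sq_div_four_mul_exp]
  rw [integral_gaussian, inv_mul_le_iff₀ (by positivity), mul_comm]
  refine Real.sqrt_le_iff.2 ⟨by positivity, ?_⟩
  rw [mul_pow, Real.sq_sqrt (by positivity)]
  linarith [Real.pi_pos]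

lemma exp_mul_sq_div_four_le {r : ℝ} (hr : 0 ≤ r) (hr1 : r ≤ 1) (t : ℝ) :
    Real.exp ((r * t) ^ 2 / 4) ≤ Real.exp (t ^ 2 / 4) := by
  rw [mul_pow]
  gcongr
  exact mul_le_of_le_one_left (sq_nonneg _) (pow_le_one₀ hr hr1)

lemma integrable_pow_gaussianReal (k : ℕ) : Integrable (fun t : ℝ => t ^ k) (gaussianReal 0 1) := by
  rcases eq_or_ne k 0 with rfl | hk
  · simp
  · have h := (memLp_id_gaussianReal (μ := 0) (v := 1) (k : ℝ≥0)).integrable_norm_pow (p := k)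
      (by exact_mod_cast hk)
    exact h.mono' (by fun_prop) (ae_of_all _ fun t => by simp)

lemma integral_pow_add_two_gaussianReal (k : ℕ) :
    ∫ t, t ^ (k + 2) ∂gaussianReal 0 1 = (k + 1) * ∫ t, t ^ k ∂gaussianReal 0 1 := by
  have hint (j : ℕ) : Integrable fun t : ℝ => t ^ j * Real.exp (-t ^ 2 / 2) :=
    integrable_gaussianReal_zero_one_iff.1 (integrable_pow_gaussianReal j)
  have hderiv (t : ℝ) : HasDerivAt (fun t : ℝ => -Real.exp (-t ^ 2 / 2))
      (t * Real.exp (-t ^ 2 / 2)) t := by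
    have hsq : HasDerivAt (fun t : ℝ => -t ^ 2 / 2) (-t) t :=
      ((hasDerivAt_pow 2 t).fun_neg.div_const 2).congr_deriv (by norm_num; ring)
    exact hsq.exp.fun_neg.congr_deriv (by ring)
  have hparts := integral_mul_deriv_eq_deriv_mul_of_integrable (u := fun t : ℝ => t ^ (k + 1))
    (u' := fun t => (k + 1) * t ^ k) (v := fun t => -Real.exp (-t ^ 2 / 2))
    (v' := fun t => t * Real.exp (-t ^ 2 / 2))
    (fun t _ => (hasDerivAt_pow (k + 1) t).congr_deriv (by push_cast; simp))
    (fun t _ => hderiv t)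
    ((hint (k + 2)).congr (ae_of_all _ fun t => by simp only [Pi.mul_apply]; ring))
    (((hint k).const_mul (-(k + 1))).congr (ae_of_all _ fun t => by
      simp only [Pi.mul_apply]; ring))
    ((hint (k + 1)).neg.congr (ae_of_all _ fun t => by simp))
  have hstein : ∫ t : ℝ, t ^ (k + 2) * Real.exp (-t ^ 2 / 2) =
      (k + 1) * ∫ t : ℝ, t ^ k * Real.exp (-t ^ 2 / 2) := by
    calc ∫ t : ℝ, t ^ (k + 2) * Real.exp (-t ^ 2 / 2)
        = ∫ t : ℝ, t ^ (k + 1) * (t * Real.exp (-t ^ 2 / 2)) := by congr! 2; ring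
      _ = -∫ t : ℝ, (k + 1) * t ^ k * -Real.exp (-t ^ 2 / 2) := hparts
      _ = (k + 1) * ∫ t : ℝ, t ^ k * Real.exp (-t ^ 2 / 2) := by
        rw [← integral_neg, ← integral_const_mul]
        congr! 2
        ring
  rw [integral_gaussianReal_zero_one, integral_gaussianReal_zero_one, hstein]
  ring

end GaussianMoments

section GaussianVector

variable {V : Type*} [NormedAddCommGroup V] [InnerProductSpace ℝ V]

/-- The polarization that reduces mixed fourth moments to the moments of one linear form. -/
lemma inner_sq_mul_inner_sq_eq (a x u : V) : ⟪a, x⟫ ^ 2 * ⟪a, u⟫ ^ 2 =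
    12⁻¹ * ((⟪a, x + u⟫ ^ 4 + ⟪a, x - u⟫ ^ 4) - 2 * (⟪a, x⟫ ^ 4 + ⟪a, u⟫ ^ 4)) := by
  rw [inner_add_right, inner_sub_right]
  ring

variable [FiniteDimensional ℝ V] [MeasurableSpace V] [BorelSpace V]

lemma map_inner_stdGaussian (u : V) : (stdGaussian V).map (fun a => ⟪a, u⟫) =
    (gaussianReal 0 1).map (fun t => ‖u‖ * t) := by
  have h := IsGaussian.map_eq_gaussianReal (μ := stdGaussian V) (innerSL ℝ u)
  rw [variance_dual_stdGaussian, integral_strongDual_stdGaussian] at h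
  have hinner : (fun a : V => ⟪a, u⟫) = innerSL ℝ u := by
    ext a
    simp [real_inner_comm]
  rw [hinner, h, gaussianReal_map_const_mul]
  congr 1
  · simp
  · ext
    simp

lemma integrable_comp_inner_stdGaussian_iff {f : ℝ → ℝ} (hf : Measurable f) (u : V) :
    Integrable (fun a => f ⟪a, u⟫) (stdGaussian V) ↔
      Integrable (fun t => f (‖u‖ * t)) (gaussianReal 0 1) := by
  have hV := integrable_map_measure (μ := stdGaussian V) (f := fun a : V => ⟪a, u⟫) (g := f)
    hf.aestronglyMeasurable (by fun_prop)
  have hR := integrable_map_measure (μ := gaussianReal 0 1) (f := fun t => ‖u‖ * t) (g := f)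
    hf.aestronglyMeasurable (by fun_prop)
  rw [map_inner_stdGaussian] at hV
  exact hV.symm.trans hR

lemma integral_comp_inner_stdGaussian {f : ℝ → ℝ} (hf : Measurable f) (u : V) :
    ∫ a, f ⟪a, u⟫ ∂stdGaussian V = ∫ t, f (‖u‖ * t) ∂gaussianReal 0 1 := by
  rw [← integral_map (φ := fun a : V => ⟪a, u⟫) (by fun_prop) hf.aestronglyMeasurable,
    map_inner_stdGaussian, integral_map (by fun_prop) hf.aestronglyMeasurable]

lemma integrable_exp_inner_sq_div_four {u : V} (hu : ‖u‖ ≤ 1) :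
    Integrable (fun a => Real.exp (⟪a, u⟫ ^ 2 / 4)) (stdGaussian V) := by
  refine (integrable_comp_inner_stdGaussian_iff (f := fun s => Real.exp (s ^ 2 / 4))
    (by fun_prop) u).2 (integrable_exp_sq_div_four_gaussianReal.mono' (by fun_prop)
      (ae_of_all _ fun t => ?_))
  rw [Real.norm_of_nonneg (Real.exp_pos _).le]
  exact exp_mul_sq_div_four_le (norm_nonneg u) hu t

lemma integral_exp_inner_sq_div_four_le {u : V} (hu : ‖u‖ ≤ 1) :
    ∫ a, Real.exp (⟪a, u⟫ ^ 2 / 4) ∂stdGaussian V ≤ 2 := by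
  have hint := (integrable_comp_inner_stdGaussian_iff (f := fun s => Real.exp (s ^ 2 / 4))
    (by fun_prop) u).1 (integrable_exp_inner_sq_div_four hu)
  rw [integral_comp_inner_stdGaussian (f := fun s => Real.exp (s ^ 2 / 4)) (by fun_prop)]
  exact (integral_mono hint integrable_exp_sq_div_four_gaussianReal
    (exp_mul_sq_div_four_le (norm_nonneg u) hu)).trans integral_exp_sq_div_four_gaussianReal_le

lemma integrable_inner_pow (u : V) (k : ℕ) :
    Integrable (fun a => ⟪a, u⟫ ^ k) (stdGaussian V) := by
  refine (integrable_comp_inner_stdGaussian_iff (f := fun s => s ^ k) (by fun_prop) u).2 ?_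
  simp only [mul_pow]
  exact (integrable_pow_gaussianReal k).const_mul _

lemma integral_inner_pow (u : V) (k : ℕ) :
    ∫ a, ⟪a, u⟫ ^ k ∂stdGaussian V = ‖u‖ ^ k * ∫ t, t ^ k ∂gaussianReal 0 1 := by
  rw [integral_comp_inner_stdGaussian (f := fun s => s ^ k) (by fun_prop)]
  simp only [mul_pow]
  rw [integral_const_mul]

lemma integral_inner_pow_two (u : V) : ∫ a, ⟪a, u⟫ ^ 2 ∂stdGaussian V = ‖u‖ ^ 2 := by
  simp [integral_inner_pow, integral_pow_add_two_gaussianReal 0]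

lemma integral_inner_pow_four (u : V) : ∫ a, ⟪a, u⟫ ^ 4 ∂stdGaussian V = 3 * ‖u‖ ^ 4 := by
  rw [integral_inner_pow, integral_pow_add_two_gaussianReal 2, integral_pow_add_two_gaussianReal 0]
  norm_num [mul_comm]

lemma integral_inner_pow_eight (u : V) : ∫ a, ⟪a, u⟫ ^ 8 ∂stdGaussian V = 105 * ‖u‖ ^ 8 := by
  rw [integral_inner_pow, integral_pow_add_two_gaussianReal 6, integral_pow_add_two_gaussianReal 4,
    integral_pow_add_two_gaussianReal 2, integral_pow_add_two_gaussianReal 0]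
  norm_num [mul_comm]

lemma integrable_inner_sq_mul_inner_sq (x u : V) :
    Integrable (fun a => ⟪a, x⟫ ^ 2 * ⟪a, u⟫ ^ 2) (stdGaussian V) := by
  simp only [inner_sq_mul_inner_sq_eq]
  exact (((integrable_inner_pow _ 4).add (integrable_inner_pow _ 4)).sub
    (((integrable_inner_pow _ 4).add (integrable_inner_pow _ 4)).const_mul 2)).const_mul _

lemma integral_inner_sq_mul_inner_sq (x u : V) :
    ∫ a, ⟪a, x⟫ ^ 2 * ⟪a, u⟫ ^ 2 ∂stdGaussian V = ‖x‖ ^ 2 * ‖u‖ ^ 2 + 2 * ⟪x, u⟫ ^ 2 := by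
  have hint (y w : V) : Integrable (fun a => ⟪a, y⟫ ^ 4 + ⟪a, w⟫ ^ 4) (stdGaussian V) :=
    (integrable_inner_pow y 4).add (integrable_inner_pow w 4)
  have hpow (w : V) : ‖w‖ ^ 4 = (‖w‖ ^ 2) ^ 2 := by ring
  simp only [inner_sq_mul_inner_sq_eq]
  rw [integral_const_mul, integral_sub (hint _ _) ((hint _ _).const_mul 2), integral_const_mul,
    integral_add (integrable_inner_pow _ 4) (integrable_inner_pow _ 4),
    integral_add (integrable_inner_pow _ 4) (integrable_inner_pow _ 4)]
  simp only [integral_inner_pow_four, hpow, norm_add_sq_real, norm_sub_sq_real]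
  ring

lemma measureReal_lt_abs_inner_le (u : V) {t : ℝ} (ht : 0 ≤ t) :
    (stdGaussian V).real {a | t * ‖u‖ < |⟪a, u⟫|} ≤ 2 * Real.exp (-(t ^ 2 / 4)) := by
  rcases eq_or_ne u 0 with rfl | hu
  · simpa using (Real.exp_pos _).le
  have hu' : ‖‖u‖⁻¹ • u‖ ≤ 1 := (norm_smul_inv_norm (𝕜 := ℝ) hu).le
  have hmarkov := mul_meas_ge_le_integral_of_nonneg (ae_of_all _ fun a => (Real.exp_pos _).le)
    (integrable_exp_inner_sq_div_four hu') (Real.exp (t ^ 2 / 4))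
  have hsub : {a | t * ‖u‖ < |⟪a, u⟫|} ⊆
      {a | Real.exp (t ^ 2 / 4) ≤ Real.exp (⟪a, ‖u‖⁻¹ • u⟫ ^ 2 / 4)} := fun a ha => by
    have hle : t ≤ ‖u‖⁻¹ * |⟪a, u⟫| := by
      rw [le_inv_mul_iff₀ (norm_pos_iff.2 hu), mul_comm]
      exact le_of_lt ha
    rw [Set.mem_ofPred_eq, inner_smul_right, ← sq_abs (‖u‖⁻¹ * _), abs_mul,
      abs_of_nonneg (by positivity : 0 ≤ ‖u‖⁻¹)]
    gcongr
  refine (measureReal_mono hsub).trans ?_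
  rw [Real.exp_neg, ← div_eq_mul_inv, le_div_iff₀ (Real.exp_pos _), mul_comm]
  exact hmarkov.trans (integral_exp_inner_sq_div_four_le hu')

end GaussianVector

section Chernoff

variable {Ω : Type*} [MeasurableSpace Ω] {P : Measure Ω} [IsProbabilityMeasure P] {m : ℕ}

lemma measureReal_pi_le_sum_le {f : Ω → ℝ} (hf : Measurable f) {t q : ℝ} (ht : 0 ≤ t)
    (hint : Integrable (fun ω => Real.exp (t * f ω)) P) (hq : mgf f P t ≤ Real.exp q) (τ : ℝ) :
    (Measure.pi fun _ : Fin m => P).real {a | τ ≤ ∑ ℓ, f (a ℓ)} ≤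
      Real.exp (m * q - t * τ) := by
  have hmeas (ℓ : Fin m) : Measurable fun a : Fin m → Ω => f (a ℓ) :=
    hf.comp (measurable_pi_apply ℓ)
  have hpres (ℓ : Fin m) := measurePreserving_eval (fun _ : Fin m => P) ℓ
  have hindep := iIndepFun_pi (μ := fun _ : Fin m => P) (X := fun _ => f) fun _ => hf.aemeasurable
  have hmgf (ℓ : Fin m) : mgf (fun a => f (a ℓ)) (Measure.pi fun _ => P) t = mgf f P t := by
    have h := mgf_map (hpres ℓ).measurable.aemeasurable (X := f) (t := t)
      (by rw [(hpres ℓ).map_eq]; exact hint.aestronglyMeasurable)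
    rw [(hpres ℓ).map_eq] at h
    exact h.symm
  have hsum := measure_ge_le_exp_mul_mgf τ ht <| hindep.integrable_exp_mul_sum hmeas (t := t)
    (s := Finset.univ) fun ℓ _ => ((hpres ℓ).integrable_comp hint.aestronglyMeasurable).2 hint
  rw [hindep.mgf_sum hmeas, Finset.prod_congr rfl fun ℓ _ => hmgf ℓ, Finset.prod_const,
    Finset.card_univ, Fintype.card_fin] at hsum
  simp only [Finset.sum_apply] at hsum
  calc _ ≤ Real.exp (-t * τ) * mgf f P t ^ m := hsum
    _ ≤ Real.exp (-t * τ) * Real.exp q ^ m := by gcongr; exact mgf_nonneg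
    _ = Real.exp (m * q - t * τ) := by
      rw [← Real.exp_nat_mul, ← Real.exp_add]
      ring_nf

lemma exp_le_one_add_add_sq_mul_exp_abs (y : ℝ) :
    Real.exp y ≤ 1 + y + y ^ 2 * Real.exp |y| := by
  rcases le_or_gt |y| 1 with hy | hy
  · have h := abs_le.1 (Real.abs_exp_sub_one_sub_id_le hy)
    have hsq : y ^ 2 ≤ y ^ 2 * Real.exp |y| :=
      le_mul_of_one_le_right (sq_nonneg _) (Real.one_le_exp (abs_nonneg _))
    linarith [h.2]
  · rcases le_or_gt 0 y with h0 | h0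
    · rw [abs_of_nonneg h0] at hy ⊢
      have h := le_mul_of_one_le_left (Real.exp_pos y).le (one_le_pow₀ hy.le (n := 2))
      linarith
    · rw [abs_of_neg h0] at hy ⊢
      have hexp : Real.exp y ≤ 1 := Real.exp_le_one_iff.2 h0.le
      nlinarith [Real.add_one_le_exp (-y)]

variable {X : Ω → ℝ} {t M : ℝ}

lemma integrable_exp_mul_of_integrable_sq_mul_exp_abs (hX : Measurable X) (hint : Integrable X P)
    (hint2 : Integrable (fun ω => X ω ^ 2 * Real.exp |t * X ω|) P) :
    Integrable (fun ω => Real.exp (t * X ω)) P := by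
  refine (((integrable_const 1).add (hint.const_mul t)).add (hint2.const_mul (t ^ 2))).mono'
    (by fun_prop) (ae_of_all _ fun ω => ?_)
  rw [Real.norm_of_nonneg (Real.exp_pos _).le]
  refine (exp_le_one_add_add_sq_mul_exp_abs _).trans_eq ?_
  simp only [Pi.add_apply]
  ring

lemma mgf_sub_integral_le (hX : Measurable X) (hint : Integrable X P)
    (hint2 : Integrable (fun ω => X ω ^ 2 * Real.exp |t * X ω|) P)
    (hM : ∫ ω, X ω ^ 2 * Real.exp |t * X ω| ∂P ≤ M) :
    mgf (fun ω => X ω - ∫ ω, X ω ∂P) P t ≤ Real.exp (t ^ 2 * M) := by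
  set e := ∫ ω, X ω ∂P
  have hlin : Integrable (fun ω => 1 + t * X ω) P := (integrable_const 1).add (hint.const_mul t)
  have hmgf : mgf X P t ≤ 1 + t * e + t ^ 2 * M := by
    calc mgf X P t ≤ ∫ ω, (1 + t * X ω + t ^ 2 * (X ω ^ 2 * Real.exp |t * X ω|)) ∂P :=
          integral_mono (integrable_exp_mul_of_integrable_sq_mul_exp_abs hX hint hint2)
            (hlin.add (hint2.const_mul _)) fun ω =>
            (exp_le_one_add_add_sq_mul_exp_abs (t * X ω)).trans_eq (by ring)
      _ = 1 + t * e + t ^ 2 * ∫ ω, X ω ^ 2 * Real.exp |t * X ω| ∂P := by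
          rw [integral_add hlin (hint2.const_mul _), integral_add (integrable_const 1)
            (hint.const_mul t), integral_const_mul, integral_const_mul, integral_const,
            probReal_univ, one_smul]
      _ ≤ 1 + t * e + t ^ 2 * M := by gcongr
  calc mgf (fun ω => X ω - e) P t = mgf X P t * Real.exp (-(t * e)) := by
        simp only [sub_eq_add_neg, mgf_add_const, mul_neg]
    _ ≤ Real.exp (t * e + t ^ 2 * M) * Real.exp (-(t * e)) := by
        gcongr
        linarith [Real.add_one_le_exp (t * e + t ^ 2 * M)]
    _ = Real.exp (t ^ 2 * M) := by
        rw [← Real.exp_add]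
        ring_nf

/-- A form of Bernstein's inequality: the exponential moment in `hM` plays the role of the
variance. -/
lemma measureReal_pi_le_abs_mean_sub_le (hX : Measurable X) (hint : Integrable X P)
    (hint2 : Integrable (fun ω => X ω ^ 2 * Real.exp |t * X ω|) P)
    (hM : ∫ ω, X ω ^ 2 * Real.exp |t * X ω| ∂P ≤ M) (ht : 0 ≤ t) (hm : 0 < (m : ℝ)) (τ : ℝ) :
    (Measure.pi fun _ : Fin m => P).real {a | τ ≤ |(m : ℝ)⁻¹ * ∑ ℓ, X (a ℓ) - ∫ ω, X ω ∂P|} ≤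
      2 * Real.exp (m * (t ^ 2 * M - t * τ)) := by
  have hone {Y : Ω → ℝ} (hY : Measurable Y) (hYint : Integrable Y P)
      (hYint2 : Integrable (fun ω => Y ω ^ 2 * Real.exp |t * Y ω|) P)
      (hYM : ∫ ω, Y ω ^ 2 * Real.exp |t * Y ω| ∂P ≤ M) :
      (Measure.pi fun _ : Fin m => P).real {a | m * τ ≤ ∑ ℓ, (Y (a ℓ) - ∫ ω, Y ω ∂P)} ≤
        Real.exp (m * (t ^ 2 * M - t * τ)) := by
    refine (measureReal_pi_le_sum_le (hY.sub_const _) ht ?_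
      (mgf_sub_integral_le hY hYint hYint2 hYM) _).trans_eq (by ring_nf)
    simp only [mul_sub, Real.exp_sub]
    exact (integrable_exp_mul_of_integrable_sq_mul_exp_abs hY hYint hYint2).div_const _
  have hupper := hone hX hint hint2 hM
  have hlower := hone (Y := fun ω => -X ω) hX.neg hint.neg (by simpa using hint2)
    (by simpa using hM)
  have hsub : {a : Fin m → Ω | τ ≤ |(m : ℝ)⁻¹ * ∑ ℓ, X (a ℓ) - ∫ ω, X ω ∂P|} ⊆
      {a | m * τ ≤ ∑ ℓ, (X (a ℓ) - ∫ ω, X ω ∂P)} ∪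
        {a | m * τ ≤ ∑ ℓ, (-X (a ℓ) - ∫ ω, -X ω ∂P)} := fun a ha => by
    simp only [Set.mem_union, Set.mem_ofPred_eq, integral_neg, Finset.sum_sub_distrib,
      Finset.sum_neg_distrib, Finset.sum_const, Finset.card_univ, Fintype.card_fin, nsmul_eq_mul]
    have hscale := mul_le_mul_of_nonneg_left (Set.mem_ofPred_eq ▸ ha) hm.le
    rw [← abs_of_pos hm, ← abs_mul, abs_of_pos hm, mul_sub, mul_inv_cancel_left₀ hm.ne',
      le_abs] at hscale
    exact hscale.imp id fun h => by linarith
  calc _ ≤ _ := measureReal_mono hsub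
    _ ≤ _ := measureReal_union_le _ _
    _ ≤ 2 * Real.exp (m * (t ^ 2 * M - t * τ)) := by linarith

end Chernoff

section Independence

lemma measureReal_pi_le_of_forall_update {Ω : Type*} [MeasurableSpace Ω] {P : Measure Ω}
    [IsProbabilityMeasure P] {m : ℕ} {E : Set (Fin m → Ω)} (hE : MeasurableSet E) (ℓ : Fin m)
    {c : ℝ} (h : ∀ a, P.real {b | Function.update a ℓ b ∈ E} ≤ c) :
    (Measure.pi fun _ : Fin m => P).real E ≤ c := by
  obtain ⟨n, rfl⟩ : ∃ n, m = n + 1 := Nat.exists_eq_add_one.2 ℓ.pos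
  have hpres := (measurePreserving_piFinSuccAbove (fun _ : Fin (n + 1) => P) ℓ).symm
  obtain ⟨b₀⟩ := nonempty_of_isProbabilityMeasure P
  have hc : 0 ≤ c := measureReal_nonneg.trans (h fun _ => b₀)
  have hslice (r : Fin n → Ω) : P {b | ℓ.insertNth b r ∈ E} ≤ ENNReal.ofReal c := by
    rw [ENNReal.le_ofReal_iff_toReal_le (measure_ne_top _ _) hc]
    simpa only [Fin.update_insertNth, Measure.real] using h (ℓ.insertNth b₀ r)
  refine ENNReal.toReal_le_of_le_ofReal hc ?_
  rw [← hpres.measure_preimage hE.nullMeasurableSet, Measure.prod_apply_symm (hpres.measurable hE)]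
  exact (lintegral_mono hslice).trans_eq (by simp)

variable {V : Type*} [NormedAddCommGroup V] [InnerProductSpace ℝ V] [FiniteDimensional ℝ V]
  [MeasurableSpace V] [BorelSpace V] {m : ℕ}

lemma measureReal_lt_abs_inner_leaveOneOut_le {F : (Fin m → V) → V} (hF : Measurable F) (ℓ : Fin m)
    {t : ℝ} (ht : 0 ≤ t) :
    (Measure.pi fun _ : Fin m => stdGaussian V).real
      {a | t * ‖F (leaveOneOut a ℓ)‖ < |⟪a ℓ, F (leaveOneOut a ℓ)⟫|} ≤
        2 * Real.exp (-(t ^ 2 / 4)) := by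
  have hleave : Measurable fun a : Fin m → V => leaveOneOut a ℓ := by
    unfold leaveOneOut
    fun_prop
  have hmeas : MeasurableSet
      {a : Fin m → V | t * ‖F (leaveOneOut a ℓ)‖ < |⟪a ℓ, F (leaveOneOut a ℓ)⟫|} :=
    measurableSet_lt (by fun_prop)
      (Measurable.inner (𝕜 := ℝ) (measurable_pi_apply ℓ) (hF.comp hleave)).norm
  refine measureReal_pi_le_of_forall_update hmeas ℓ fun a => ?_
  simpa only [leaveOneOut, Set.mem_ofPred_eq, Function.update_idem, Function.update_self] using
    measureReal_lt_abs_inner_le (F (leaveOneOut a ℓ)) ht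

end Independence

section Net

variable {V : Type*} [NormedAddCommGroup V] [InnerProductSpace ℝ V]

/-- A `1/2`-net of the closed unit ball, with the covering property in the form in which it is
iterated: every vector of the ball is a net vector plus half of a vector of the ball. -/
structure IsHalfNet (s : Finset V) : Prop where
  norm_le_one : ∀ v ∈ s, ‖v‖ ≤ 1
  exists_eq_add : ∀ u : V, ‖u‖ ≤ 1 → ∃ v ∈ s, ∃ w : V, ‖w‖ ≤ 1 ∧ u = v + (1 / 2 : ℝ) • w

lemma card_le_five_pow_of_isSeparated [FiniteDimensional ℝ V] {s : Finset V}
    (hs : (s : Set V) ⊆ Metric.closedBall 0 1)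
    (hsep : Metric.IsSeparated (1 / 2 : ℝ≥0) (s : Set V)) : s.card ≤ 5 ^ Module.finrank ℝ V := by
  classical
  have hinj : Function.Injective fun v : V => (2 : ℝ) • v :=
    smul_right_injective V two_ne_zero
  rw [← Finset.card_image_of_injective s hinj]
  refine Besicovitch.card_le_of_separated _ (fun c hc => ?_) fun c hc d hd hcd => ?_
  · obtain ⟨v, hv, rfl⟩ := Finset.mem_image.1 hc
    have hv1 : ‖v‖ ≤ 1 := by simpa using hs hv
    rw [norm_smul, Real.norm_ofNat]
    linarith
  · obtain ⟨v, hv, rfl⟩ := Finset.mem_image.1 hc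
    obtain ⟨w, hw, rfl⟩ := Finset.mem_image.1 hd
    have hvw : ((1 / 2 : ℝ≥0) : ℝ≥0∞) < edist v w := hsep hv hw fun h => hcd (by rw [h])
    rw [edist_nndist, ENNReal.coe_lt_coe, ← NNReal.coe_lt_coe, coe_nndist, dist_eq_norm] at hvw
    rw [← smul_sub, norm_smul, Real.norm_ofNat]
    push_cast at hvw
    linarith

variable (V) in
lemma packingNumber_half_closedBall_le [FiniteDimensional ℝ V] :
    Metric.packingNumber (1 / 2) (Metric.closedBall (0 : V) 1) ≤
      (5 ^ Module.finrank ℝ V : ℕ) := by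
  refine iSup₂_le fun C hC => iSup_le fun hsep => ?_
  by_contra! hcard
  obtain ⟨t, htC, ht⟩ := Set.exists_subset_encard_eq (Order.add_one_le_of_lt hcard)
  have htfin : t.Finite := Set.finite_of_encard_eq_coe (k := 5 ^ Module.finrank ℝ V + 1) ht
  lift t to Finset V using htfin
  have hle := card_le_five_pow_of_isSeparated (htC.trans hC) (hsep.subset htC)
  rw [Set.encard_coe_eq_coe_finsetCard] at ht
  norm_cast at ht
  omega

variable (V) in
lemma exists_isHalfNet [FiniteDimensional ℝ V] :
    ∃ s : Finset V, s.card ≤ 5 ^ Module.finrank ℝ V ∧ IsHalfNet s := by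
  have hpack := packingNumber_half_closedBall_le V
  have htop : Metric.packingNumber (1 / 2) (Metric.closedBall (0 : V) 1) ≠ ⊤ :=
    ne_top_of_le_ne_top (ENat.natCast_ne_top _) hpack
  obtain ⟨s, hs⟩ : ∃ s : Finset V,
      (s : Set V) = Metric.maximalSeparatedSet (1 / 2) (Metric.closedBall (0 : V) 1) :=
    (Set.encard_ne_top_iff.1 (by rwa [Metric.encard_maximalSeparatedSet htop])).exists_finset_coe
  refine ⟨s, ?_, fun v hv => ?_, fun u hu => ?_⟩
  · rw [← Metric.encard_maximalSeparatedSet htop, ← hs, Set.encard_coe_eq_coe_finsetCard] at hpack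
    exact_mod_cast hpack
  · have hv' : v ∈ Metric.closedBall (0 : V) 1 :=
      Metric.maximalSeparatedSet_subset (hs ▸ Finset.mem_coe.2 hv)
    simpa using hv'
  · have hcover := Metric.isCover_iff_subset_iUnion_closedBall.1
      (Metric.isCover_maximalSeparatedSet htop) (show u ∈ _ by simpa using hu)
    obtain ⟨v, hv, huv⟩ := Set.mem_iUnion₂.1 hcover
    rw [Metric.mem_closedBall, dist_eq_norm] at huv
    push_cast at huv
    refine ⟨v, by rwa [← hs] at hv, (2 : ℝ) • (u - v), ?_, ?_⟩
    · rw [norm_smul, Real.norm_ofNat]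
      linarith
    · rw [smul_smul]
      norm_num

lemma five_pow_le_exp (n : ℕ) : ((5 ^ n : ℕ) : ℝ) ≤ Real.exp (2 * n) := by
  rw [mul_comm, Real.exp_nat_mul]
  push_cast
  gcongr
  linarith [Real.quadratic_le_exp_of_nonneg (x := 2) (by norm_num)]

variable (V) in
lemma exists_isHalfNet_card_le_exp [FiniteDimensional ℝ V] :
    ∃ s : Finset V, (s.card : ℝ) ≤ Real.exp (2 * Module.finrank ℝ V) ∧ IsHalfNet s := by
  obtain ⟨s, hcard, hs⟩ := exists_isHalfNet V
  exact ⟨s, le_trans (by exact_mod_cast hcard) (five_pow_le_exp _), hs⟩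

lemma measureReal_le_card_mul_of_subset_biUnion {Ω ι : Type*} [MeasurableSpace Ω] {P : Measure Ω}
    [IsFiniteMeasure P] {A : Set Ω} {s : Finset ι} {E : ι → Set Ω} (hA : A ⊆ ⋃ i ∈ s, E i) {b : ℝ}
    (h : ∀ i ∈ s, P.real (E i) ≤ b) : P.real A ≤ s.card * b := by
  calc P.real A ≤ P.real (⋃ i ∈ s, E i) := measureReal_mono hA (measure_ne_top _ _)
    _ ≤ ∑ i ∈ s, P.real (E i) := measureReal_biUnion_finset_le s E
    _ ≤ ∑ _i ∈ s, b := Finset.sum_le_sum h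
    _ = s.card * b := by rw [Finset.sum_const, nsmul_eq_mul]

end Net

section TailProbability

variable {V : Type*} [NormedAddCommGroup V] [InnerProductSpace ℝ V] {m : ℕ}

lemma IsHalfNet.sum_max_sq_le [FiniteDimensional ℝ V] {s : Finset V} (hs : IsHalfNet s)
    {a : Fin m → V} {t τ : ℝ} (h : ∀ v ∈ s, ∑ ℓ, max (|⟪a ℓ, v⟫| - t) 0 ^ 2 ≤ τ) {u : V}
    (hu : ‖u‖ ≤ 1) : ∑ ℓ, max (|⟪a ℓ, u⟫| - 2 * t) 0 ^ 2 ≤ 4 * τ := by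
  let Q (u : V) : ℝ := ∑ ℓ, max (|⟪a ℓ, u⟫| - 2 * t) 0 ^ 2
  obtain ⟨z, hz, hmax⟩ := (isCompact_closedBall (0 : V) 1).exists_isMaxOn ⟨0, by simp⟩
    (show Continuous Q by fun_prop).continuousOn
  have hQ (u : V) (hu : ‖u‖ ≤ 1) : Q u ≤ Q z := hmax (by simpa using hu)
  obtain ⟨v, hv, w, hw, rfl⟩ := hs.exists_eq_add z (by simpa using hz)
  have hpoint (ℓ : Fin m) : max (|⟪a ℓ, v + (1 / 2 : ℝ) • w⟫| - 2 * t) 0 ^ 2 ≤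
      2 * max (|⟪a ℓ, v⟫| - t) 0 ^ 2 + 1 / 2 * max (|⟪a ℓ, w⟫| - 2 * t) 0 ^ 2 := by
    set B := max (|⟪a ℓ, v⟫| - t) 0
    set C := max (|⟪a ℓ, w⟫| - 2 * t) 0
    have htri : |⟪a ℓ, v + (1 / 2 : ℝ) • w⟫| ≤ |⟪a ℓ, v⟫| + 1 / 2 * |⟪a ℓ, w⟫| := by
      rw [inner_add_right, inner_smul_right]
      refine (abs_add_le _ _).trans_eq ?_
      rw [abs_mul, abs_of_pos (one_half_pos (α := ℝ))]
    have hle : max (|⟪a ℓ, v + (1 / 2 : ℝ) • w⟫| - 2 * t) 0 ≤ B + 1 / 2 * C := by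
      refine max_le ?_ (by positivity)
      linarith [le_max_left (|⟪a ℓ, v⟫| - t) 0, le_max_left (|⟪a ℓ, w⟫| - 2 * t) 0]
    calc _ ≤ (B + 1 / 2 * C) ^ 2 := by gcongr
      _ ≤ 2 * B ^ 2 + 1 / 2 * C ^ 2 := by nlinarith [sq_nonneg (B - 1 / 2 * C)]
  have hsum : Q (v + (1 / 2 : ℝ) • w) ≤ 2 * ∑ ℓ, max (|⟪a ℓ, v⟫| - t) 0 ^ 2 + 1 / 2 * Q w := by
    rw [Finset.mul_sum, Finset.mul_sum, ← Finset.sum_add_distrib]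
    exact Finset.sum_le_sum fun ℓ _ => hpoint ℓ
  change Q u ≤ 4 * τ
  linarith [hQ u hu, hQ w hw, h v hv]

lemma IsHalfNet.hasTailBound [FiniteDimensional ℝ V] {s : Finset V} (hs : IsHalfNet s)
    {a : Fin m → V} {L : ℝ} (h : ∀ i ∈ Finset.range (m + 1), ∀ v ∈ s,
      ∑ ℓ, max (|⟪a ℓ, v⟫| - 2 ^ i) 0 ^ 2 ≤
        4 * (2 * (m * Real.exp (-((2 ^ i) ^ 2 / 4))) + (2 * Module.finrank ℝ V + 3 * L))) :
    HasTailBound a 48 (Module.finrank ℝ V + L) := by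
  intro i hi u hu
  refine (hs.sum_max_sq_le (h i (Finset.mem_range_succ_iff.2 hi)) hu).trans ?_
  have hpow : ((2 : ℝ) ^ i) ^ 2 = 4 ^ i := by
    rw [← pow_mul, mul_comm, pow_mul]
    norm_num
  rw [hpow]
  have hexp : 0 ≤ (m : ℝ) * Real.exp (-(4 ^ i / 4)) := by positivity
  linarith

variable [FiniteDimensional ℝ V] [MeasurableSpace V] [BorelSpace V]

lemma exp_max_sub_sq_div_four_le {t : ℝ} (ht : 0 ≤ t) (y : ℝ) :
    Real.exp (1 / 4 * max (|y| - t) 0 ^ 2) ≤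
      1 + Real.exp (-(t ^ 2 / 4)) * Real.exp (y ^ 2 / 4) := by
  rw [← Real.exp_add]
  rcases le_or_gt |y| t with h | h
  · rw [max_eq_right (by linarith)]
    simpa using (Real.exp_pos _).le
  · rw [max_eq_left (by linarith)]
    refine le_add_of_nonneg_of_le zero_le_one (Real.exp_le_exp.2 ?_)
    rw [← sq_abs y]
    nlinarith

lemma integrable_exp_max_sub_sq {v : V} (hv : ‖v‖ ≤ 1) {t : ℝ} (ht : 0 ≤ t) :
    Integrable (fun a => Real.exp (1 / 4 * max (|⟪a, v⟫| - t) 0 ^ 2)) (stdGaussian V) := by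
  refine ((integrable_const 1).add ((integrable_exp_inner_sq_div_four hv).const_mul
    (Real.exp (-(t ^ 2 / 4))))).mono' (by fun_prop) (ae_of_all _ fun a => ?_)
  rw [Real.norm_of_nonneg (Real.exp_pos _).le]
  exact exp_max_sub_sq_div_four_le ht _

lemma mgf_max_sub_sq_le {v : V} (hv : ‖v‖ ≤ 1) {t : ℝ} (ht : 0 ≤ t) :
    mgf (fun a => max (|⟪a, v⟫| - t) 0 ^ 2) (stdGaussian V) (1 / 4) ≤
      Real.exp (2 * Real.exp (-(t ^ 2 / 4))) := by
  have hint := integrable_exp_inner_sq_div_four hv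
  calc _ ≤ ∫ a, (1 + Real.exp (-(t ^ 2 / 4)) * Real.exp (⟪a, v⟫ ^ 2 / 4)) ∂stdGaussian V :=
        integral_mono (integrable_exp_max_sub_sq hv ht)
          ((integrable_const 1).add (hint.const_mul _)) fun a => exp_max_sub_sq_div_four_le ht _
    _ = 1 + Real.exp (-(t ^ 2 / 4)) * ∫ a, Real.exp (⟪a, v⟫ ^ 2 / 4) ∂stdGaussian V := by
        rw [integral_add (integrable_const 1) (hint.const_mul _), integral_const_mul,
          integral_const, probReal_univ, one_smul]
    _ ≤ 1 + Real.exp (-(t ^ 2 / 4)) * 2 := by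
        gcongr
        exact integral_exp_inner_sq_div_four_le hv
    _ ≤ _ := by linarith [Real.add_one_le_exp (2 * Real.exp (-(t ^ 2 / 4)))]

lemma measureReal_lt_sum_max_sq_le {v : V} (hv : ‖v‖ ≤ 1) {t : ℝ} (ht : 0 ≤ t) (σ : ℝ) :
    (Measure.pi fun _ : Fin m => stdGaussian V).real
      {a | 4 * (2 * (m * Real.exp (-(t ^ 2 / 4))) + σ) < ∑ ℓ, max (|⟪a ℓ, v⟫| - t) 0 ^ 2} ≤
        Real.exp (-σ) := by
  let τ : ℝ := 4 * (2 * (m * Real.exp (-(t ^ 2 / 4))) + σ)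
  calc _ ≤ (Measure.pi fun _ : Fin m => stdGaussian V).real
        {a | τ ≤ ∑ ℓ, max (|⟪a ℓ, v⟫| - t) 0 ^ 2} :=
        measureReal_mono (Set.ofPred_subset_ofPred.2 fun a ha => le_of_lt ha)
    _ ≤ _ := measureReal_pi_le_sum_le (by fun_prop) (by norm_num) (integrable_exp_max_sub_sq hv ht)
        (mgf_max_sub_sq_le hv ht) τ
    _ = Real.exp (-σ) := by
        simp only [τ]
        ring_nf

lemma measureReal_not_hasTailBound_le (hm : 1 ≤ (m : ℝ)) :
    (Measure.pi fun _ : Fin m => stdGaussian V).real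
      {a | ¬HasTailBound a 48 (Module.finrank ℝ V + Real.log m)} ≤ 2 / m := by
  obtain ⟨s, hcard, hs⟩ := exists_isHalfNet_card_le_exp V
  set d : ℝ := (Module.finrank ℝ V : ℝ)
  have hm0 : (0 : ℝ) < m := by linarith
  let σ : ℝ := 2 * d + 3 * Real.log m
  let E (p : ℕ × V) : Set (Fin m → V) :=
    {a | 4 * (2 * (m * Real.exp (-((2 ^ p.1) ^ 2 / 4))) + σ) <
      ∑ ℓ, max (|⟪a ℓ, p.2⟫| - 2 ^ p.1) 0 ^ 2}
  have hsub : {a : Fin m → V | ¬HasTailBound a 48 (d + Real.log m)} ⊆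
      ⋃ p ∈ Finset.range (m + 1) ×ˢ s, E p := fun a ha => by
    contrapose! ha
    simp only [Set.mem_iUnion₂, not_exists, Finset.mem_product] at ha
    exact not_not.2 <| hs.hasTailBound fun i hi v hv =>
      not_lt.1 (ha (i, v) ⟨hi, hv⟩)
  have hexp : Real.exp (-σ) = Real.exp (-(2 * d)) * (m : ℝ)⁻¹ ^ 3 := by
    rw [show -σ = -(2 * d) + (3 : ℕ) * -Real.log m by simp only [σ]; push_cast; ring,
      Real.exp_add, Real.exp_nat_mul, Real.exp_neg (Real.log m), Real.exp_log hm0]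
  calc _ ≤ (Finset.range (m + 1) ×ˢ s).card * Real.exp (-σ) :=
      measureReal_le_card_mul_of_subset_biUnion hsub fun p hp =>
        measureReal_lt_sum_max_sq_le (hs.norm_le_one _ (Finset.mem_product.1 hp).2)
          (by positivity) σ
    _ ≤ (m + m) * Real.exp (2 * d) * (Real.exp (-(2 * d)) * (m : ℝ)⁻¹ ^ 3) := by
      rw [Finset.card_product, Finset.card_range, hexp]
      push_cast
      gcongr
    _ = 2 / m * (m : ℝ)⁻¹ := by
      rw [Real.exp_neg]
      field_simp
      norm_num
    _ ≤ 2 / m := mul_le_of_le_one_right (by positivity) (inv_le_one_of_one_le₀ hm)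

end TailProbability

section Operator

variable {V : Type*} [NormedAddCommGroup V] [InnerProductSpace ℝ V]

lemma IsHalfNet.norm_add_half_smul_le {s : Finset V} (hs : IsHalfNet s) {v v' : V} (hv : v ∈ s)
    (hv' : v' ∈ s) : ‖v + (1 / 2 : ℝ) • v'‖ ≤ 3 / 2 := by
  refine (norm_add_le _ _).trans ?_
  rw [norm_smul, Real.norm_of_nonneg (by norm_num)]
  linarith [hs.norm_le_one v hv, hs.norm_le_one v' hv']

lemma IsHalfNet.opNorm_le {s : Finset V} (hs : IsHalfNet s) {T : V →L[ℝ] V}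
    (hT : (T : V →ₗ[ℝ] V).IsSymmetric) {τ : ℝ} (hτ : 0 ≤ τ)
    (h : ∀ v ∈ s, ∀ v' ∈ s, |⟪T (v + (1 / 2 : ℝ) • v'), v + (1 / 2 : ℝ) • v'⟫| ≤ τ) :
    ‖T‖ ≤ 16 / 3 * τ := by
  have key : ‖T‖ ≤ τ + 13 / 16 * ‖T‖ := by
    refine opNorm_le_of_abs_inner_le_of_norm_eq_one hT (by positivity) fun u hu => ?_
    obtain ⟨v, hv, w, hw, rfl⟩ := hs.exists_eq_add u hu.le
    obtain ⟨v', hv', w', hw', rfl⟩ := hs.exists_eq_add w hw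
    set p := v + (1 / 2 : ℝ) • v' with hp
    have hsplit : v + (1 / 2 : ℝ) • (v' + (1 / 2 : ℝ) • w') = p + (1 / 4 : ℝ) • w' := by
      rw [hp, smul_add, smul_smul, add_assoc]
      norm_num
    have hcross : ⟪T w', p⟫ = ⟪T p, w'⟫ := by
      rw [real_inner_comm, ← ContinuousLinearMap.coe_coe, hT p w']
    have hexpand : ⟪T (p + (1 / 4 : ℝ) • w'), p + (1 / 4 : ℝ) • w'⟫ =
        ⟪T p, p⟫ + 1 / 2 * ⟪T p, w'⟫ + 1 / 16 * ⟪T w', w'⟫ := by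
      simp only [map_add, map_smul, inner_add_left, inner_add_right, real_inner_smul_left,
        real_inner_smul_right, hcross]
      ring
    have hpw : |⟪T p, w'⟫| ≤ ‖T‖ * (3 / 2) * 1 :=
      (abs_real_inner_le_norm _ _).trans <| mul_le_mul
        (T.le_opNorm_of_le (hs.norm_add_half_smul_le hv hv')) hw' (norm_nonneg _) (by positivity)
    have hww : |⟪T w', w'⟫| ≤ ‖T‖ * 1 ^ 2 := (abs_inner_apply_self_le T w').trans (by gcongr)
    rw [hsplit, hexpand]
    have hpp := abs_le.1 (h v hv v' hv')
    rw [abs_le] at hpw hww ⊢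
    constructor <;> linarith [hpp.1, hpp.2, hpw.1, hpw.2, hww.1, hww.2]
  linarith

end Operator

section Truncation

variable {V : Type*} [NormedAddCommGroup V] [InnerProductSpace ℝ V] {m : ℕ} {x p : V} {B c : ℝ}

/-- The product `⟨a, x⟩² ⟨a, p⟩²` with its first factor truncated at level `B`; unlike the product
itself it has exponential moments. -/
def truncProduct (B : ℝ) (x p a : V) : ℝ := min (⟪a, x⟫ ^ 2) B * ⟪a, p⟫ ^ 2

lemma truncProduct_nonneg (hB : 0 ≤ B) (x p a : V) : 0 ≤ truncProduct B x p a :=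
  mul_nonneg (le_min (sq_nonneg _) hB) (sq_nonneg _)

lemma truncProduct_le (B : ℝ) (x p a : V) : truncProduct B x p a ≤ ⟪a, x⟫ ^ 2 * ⟪a, p⟫ ^ 2 :=
  mul_le_mul_of_nonneg_right (min_le_left _ _) (sq_nonneg _)

lemma sub_min_le_inv_mul_sq (hB : 0 < B) (y : ℝ) : y - min y B ≤ B⁻¹ * y ^ 2 := by
  rcases le_total y B with h | h
  · rw [min_eq_left h, sub_self]
    positivity
  · rw [min_eq_right h, inv_mul_eq_div, le_div_iff₀ hB]
    nlinarith

lemma inner_sq_mul_inner_sq_sub_truncProduct_le (hB : 0 < B) (x p a : V) :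
    ⟪a, x⟫ ^ 2 * ⟪a, p⟫ ^ 2 - truncProduct B x p a ≤
      B⁻¹ * (1 / 2 * ⟪a, x⟫ ^ 8 + 1 / 2 * ⟪a, p⟫ ^ 4) := by
  calc _ = (⟪a, x⟫ ^ 2 - min (⟪a, x⟫ ^ 2) B) * ⟪a, p⟫ ^ 2 := by
        rw [truncProduct]
        ring
    _ ≤ B⁻¹ * (⟪a, x⟫ ^ 2) ^ 2 * ⟪a, p⟫ ^ 2 := by
        gcongr
        exact sub_min_le_inv_mul_sq hB _
    _ = B⁻¹ * (⟪a, x⟫ ^ 4 * ⟪a, p⟫ ^ 2) := by ring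
    _ ≤ _ := by
        gcongr
        nlinarith [sq_nonneg (⟪a, x⟫ ^ 4 - ⟪a, p⟫ ^ 2)]

lemma pow_le_factorial_mul_exp {y : ℝ} (hy : 0 ≤ y) (hc : 0 < c) (k : ℕ) :
    y ^ k ≤ k.factorial * c ^ k * Real.exp (y / c) := by
  have h := Real.pow_div_factorial_le_exp (x := y / c) (by positivity) k
  rw [div_pow, div_div, div_le_iff₀ (by positivity)] at h
  linarith

lemma sq_truncProduct_mul_exp_le (hB : 0 ≤ B) (hc : 0 ≤ c) (hcB : c * B ≤ 1 / 36) (x p a : V) :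
    truncProduct B x p a ^ 2 * Real.exp |c * truncProduct B x p a| ≤
      1 / 2 * ⟪a, x⟫ ^ 8 + 1277952 * Real.exp (⟪a, (2 / 3 : ℝ) • p⟫ ^ 2 / 4) := by
  have htrunc := truncProduct_nonneg hB x p a
  set r := ⟪a, (2 / 3 : ℝ) • p⟫ with hr
  have hpr : ⟪a, p⟫ = 3 / 2 * r := by
    rw [hr, inner_smul_right]
    ring
  have hexponent : |c * truncProduct B x p a| ≤ r ^ 2 / 16 := by
    calc |c * truncProduct B x p a| = c * truncProduct B x p a := abs_of_nonneg (by positivity)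
      _ ≤ c * (B * ⟪a, p⟫ ^ 2) := by
          gcongr
          exact mul_le_mul_of_nonneg_right (min_le_right _ _) (sq_nonneg _)
      _ ≤ r ^ 2 / 16 := by
          rw [hpr]
          nlinarith [sq_nonneg r]
  have hfour := pow_le_factorial_mul_exp (sq_nonneg r) (c := 8) (by norm_num) 4
  norm_num [Nat.factorial] at hfour
  calc _ ≤ (⟪a, x⟫ ^ 2 * ⟪a, p⟫ ^ 2) ^ 2 * Real.exp (r ^ 2 / 16) := by
        gcongr
        exact truncProduct_le B x p a
    _ = ⟪a, x⟫ ^ 4 * ((3 / 2) ^ 4 * r ^ 4 * Real.exp (r ^ 2 / 16)) := by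
        rw [hpr]
        ring
    _ ≤ 1 / 2 * ⟪a, x⟫ ^ 8 + 1 / 2 * ((3 / 2) ^ 8 * r ^ 8 * Real.exp (r ^ 2 / 16) ^ 2) := by
        nlinarith [sq_nonneg (⟪a, x⟫ ^ 4 - (3 / 2) ^ 4 * r ^ 4 * Real.exp (r ^ 2 / 16))]
    _ ≤ 1 / 2 * ⟪a, x⟫ ^ 8 +
        1 / 2 * (26 * (98304 * Real.exp (r ^ 2 / 8)) * Real.exp (r ^ 2 / 16) ^ 2) := by
        gcongr
        · norm_num
        · linarith
    _ = 1 / 2 * ⟪a, x⟫ ^ 8 + 1277952 * Real.exp (r ^ 2 / 4) := by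
        rw [show r ^ 2 / 4 = r ^ 2 / 8 + (r ^ 2 / 16 + r ^ 2 / 16) by ring, Real.exp_add,
          Real.exp_add]
        ring

lemma sq_inner_sq_mul_exp_le (hc : |c| ≤ 1 / 8) (x a : V) :
    (⟪a, x⟫ ^ 2) ^ 2 * Real.exp |c * ⟪a, x⟫ ^ 2| ≤ 128 * Real.exp (⟪a, x⟫ ^ 2 / 4) := by
  set y := ⟪a, x⟫ ^ 2
  have hy : 0 ≤ y := sq_nonneg _
  have htwo := pow_le_factorial_mul_exp hy (c := 8) (by norm_num) 2
  norm_num at htwo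
  calc y ^ 2 * Real.exp |c * y| ≤ 128 * Real.exp (y / 8) * Real.exp (y / 8) := by
        gcongr
        rw [abs_mul, abs_of_nonneg hy]
        nlinarith
    _ = 128 * Real.exp (y / 4) := by
        rw [show y / 4 = y / 8 + y / 8 by ring, Real.exp_add]
        ring

variable [FiniteDimensional ℝ V] [MeasurableSpace V] [BorelSpace V]

lemma measurable_truncProduct (B : ℝ) (x p : V) : Measurable (truncProduct B x p) := by
  unfold truncProduct
  fun_prop

lemma integrable_truncProduct (hB : 0 ≤ B) (x p : V) :
    Integrable (truncProduct B x p) (stdGaussian V) := by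
  refine (integrable_inner_sq_mul_inner_sq x p).mono'
    (measurable_truncProduct B x p).aestronglyMeasurable (ae_of_all _ fun a => ?_)
  rw [Real.norm_of_nonneg (truncProduct_nonneg hB x p a)]
  exact truncProduct_le B x p a

lemma abs_integral_truncProduct_sub_le (hB : 0 < B) (hx : ‖x‖ = 1) (hp : ‖p‖ ≤ 3 / 2) :
    |∫ a, truncProduct B x p a ∂stdGaussian V - (‖p‖ ^ 2 + 2 * ⟪x, p⟫ ^ 2)| ≤ 61 / B := by
  have hprod := integrable_inner_sq_mul_inner_sq x p
  have htrunc := integrable_truncProduct hB.le x p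
  have h8 := (integrable_inner_pow x 8).const_mul (1 / 2)
  have h4 := (integrable_inner_pow p 4).const_mul (1 / 2)
  have hp4 : ‖p‖ ^ 4 ≤ (3 / 2) ^ 4 := by gcongr
  have hdiff : ∫ a, truncProduct B x p a ∂stdGaussian V - (‖p‖ ^ 2 + 2 * ⟪x, p⟫ ^ 2) =
      -∫ a, (⟪a, x⟫ ^ 2 * ⟪a, p⟫ ^ 2 - truncProduct B x p a) ∂stdGaussian V := by
    rw [integral_sub hprod htrunc, integral_inner_sq_mul_inner_sq, hx]
    ring
  rw [hdiff, abs_neg, abs_of_nonneg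
    (integral_nonneg fun a => sub_nonneg.2 (truncProduct_le B x p a))]
  calc _ ≤ ∫ a, B⁻¹ * (1 / 2 * ⟪a, x⟫ ^ 8 + 1 / 2 * ⟪a, p⟫ ^ 4) ∂stdGaussian V :=
        integral_mono (hprod.sub htrunc) ((h8.add h4).const_mul _)
          (inner_sq_mul_inner_sq_sub_truncProduct_le hB x p)
    _ = B⁻¹ * (1 / 2 * 105 + 1 / 2 * (3 * ‖p‖ ^ 4)) := by
        rw [integral_const_mul, integral_add h8 h4, integral_const_mul, integral_const_mul,
          integral_inner_pow_eight, integral_inner_pow_four, hx, one_pow, mul_one]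
    _ ≤ B⁻¹ * 61 := by
        gcongr
        linarith
    _ = 61 / B := by ring

lemma integrable_sq_truncProduct_mul_exp (hB : 0 ≤ B) (hc : 0 ≤ c) (hcB : c * B ≤ 1 / 36) (x : V)
    (hp : ‖p‖ ≤ 3 / 2) :
    Integrable (fun a => truncProduct B x p a ^ 2 * Real.exp |c * truncProduct B x p a|)
      (stdGaussian V) := by
  have hp' : ‖(2 / 3 : ℝ) • p‖ ≤ 1 := by
    rw [norm_smul, Real.norm_of_nonneg (by norm_num)]
    linarith
  have hmeas := measurable_truncProduct B x p
  refine (((integrable_inner_pow x 8).const_mul (1 / 2)).add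
    ((integrable_exp_inner_sq_div_four hp').const_mul 1277952)).mono' (by fun_prop)
    (ae_of_all _ fun a => ?_)
  rw [Real.norm_of_nonneg (by positivity)]
  exact sq_truncProduct_mul_exp_le hB hc hcB x p a

lemma integral_sq_truncProduct_mul_exp_le (hB : 0 ≤ B) (hc : 0 ≤ c) (hcB : c * B ≤ 1 / 36)
    (hx : ‖x‖ = 1) (hp : ‖p‖ ≤ 3 / 2) :
    ∫ a, truncProduct B x p a ^ 2 * Real.exp |c * truncProduct B x p a| ∂stdGaussian V ≤
      2600000 := by
  have hp' : ‖(2 / 3 : ℝ) • p‖ ≤ 1 := by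
    rw [norm_smul, Real.norm_of_nonneg (by norm_num)]
    linarith
  have h8 := (integrable_inner_pow x 8).const_mul (1 / 2)
  have hexp := (integrable_exp_inner_sq_div_four hp').const_mul 1277952
  calc _ ≤ ∫ a, (1 / 2 * ⟪a, x⟫ ^ 8 + 1277952 * Real.exp (⟪a, (2 / 3 : ℝ) • p⟫ ^ 2 / 4))
        ∂stdGaussian V :=
        integral_mono (integrable_sq_truncProduct_mul_exp hB hc hcB x hp) (h8.add hexp)
          (sq_truncProduct_mul_exp_le hB hc hcB x p)
    _ = 1 / 2 * 105 + 1277952 * ∫ a, Real.exp (⟪a, (2 / 3 : ℝ) • p⟫ ^ 2 / 4) ∂stdGaussian V := by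
        rw [integral_add h8 hexp, integral_const_mul, integral_const_mul,
          integral_inner_pow_eight, hx, one_pow, mul_one]
    _ ≤ 2600000 := by linarith [integral_exp_inner_sq_div_four_le hp']

lemma measureReal_le_abs_mean_truncProduct_sub_le {τ : ℝ} (hB : 0 ≤ B) (hc : 0 ≤ c)
    (hcB : c * B ≤ 1 / 36) (hcτ : c * 2600000 ≤ τ / 2) (hx : ‖x‖ = 1) (hp : ‖p‖ ≤ 3 / 2)
    (hm : 0 < (m : ℝ)) :
    (Measure.pi fun _ : Fin m => stdGaussian V).real
      {a | τ ≤ |(m : ℝ)⁻¹ * ∑ ℓ, truncProduct B x p (a ℓ) -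
        ∫ a, truncProduct B x p a ∂stdGaussian V|} ≤ 2 * Real.exp (-(c * (τ / 2) * m)) := by
  refine (measureReal_pi_le_abs_mean_sub_le (measurable_truncProduct B x p)
    (integrable_truncProduct hB x p) (integrable_sq_truncProduct_mul_exp hB hc hcB x hp)
    (integral_sq_truncProduct_mul_exp_le hB hc hcB hx hp) hc hm τ).trans ?_
  gcongr
  calc m * (c ^ 2 * 2600000 - c * τ) = m * (c * (c * 2600000)) - m * (c * τ) := by ring
    _ ≤ m * (c * (τ / 2)) - m * (c * τ) := by gcongr
    _ = -(c * (τ / 2) * m) := by ring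

end Truncation

section SpectralConcentration

variable {V : Type*} [NormedAddCommGroup V] [InnerProductSpace ℝ V] [FiniteDimensional ℝ V]
  [MeasurableSpace V] [BorelSpace V] {m : ℕ} {x : V} {B c ε : ℝ}

lemma IsHalfNet.norm_spectralOp_sub_spikedId_le {s : Finset V} (hs : IsHalfNet s) (hB : 0 < B)
    (hε : 61 / B ≤ ε / 16) (hx : ‖x‖ = 1) {a : Fin m → V} (ha : ∀ ℓ, ⟪a ℓ, x⟫ ^ 2 ≤ B)
    (h : ∀ v ∈ s, ∀ v' ∈ s, |(m : ℝ)⁻¹ * ∑ ℓ, truncProduct B x (v + (1 / 2 : ℝ) • v') (a ℓ) -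
      ∫ a, truncProduct B x (v + (1 / 2 : ℝ) • v') a ∂stdGaussian V| ≤ ε / 16) :
    ‖spectralOp a x - spikedId x‖ ≤ ε := by
  have hε0 : 0 ≤ ε := by linarith [show 0 ≤ 61 / B by positivity]
  have hsymm : ((spectralOp a x - spikedId x : V →L[ℝ] V) : V →ₗ[ℝ] V).IsSymmetric :=
    (isSymmetric_spectralOp a x).sub (isSymmetric_spikedId x)
  refine (hs.opNorm_le hsymm (τ := ε / 8) (by positivity) fun v hv v' hv' => ?_).trans (by linarith)
  have hbias := abs_integral_truncProduct_sub_le hB hx (hs.norm_add_half_smul_le hv hv')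
  have hmean := h v hv v' hv'
  have htrunc (p : V) : ∑ ℓ, truncProduct B x p (a ℓ) = ∑ ℓ, ⟪a ℓ, x⟫ ^ 2 * ⟪a ℓ, p⟫ ^ 2 :=
    Finset.sum_congr rfl fun ℓ _ => by rw [truncProduct, min_eq_left (ha ℓ)]
  rw [htrunc] at hmean
  rw [_root_.sub_apply, inner_sub_left, inner_spectralOp_self, inner_spikedId_self]
  rw [abs_le] at hbias hmean ⊢
  constructor <;> linarith [hbias.1, hbias.2, hmean.1, hmean.2]

lemma measureReal_lt_norm_spectralOp_sub_spikedId_le (hB : 0 < B) (hε : 61 / B ≤ ε / 16)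
    (hc : 0 ≤ c) (hcB : c * B ≤ 1 / 36) (hcε : c * 2600000 ≤ ε / 32) (hx : ‖x‖ = 1)
    (hm : 1 ≤ (m : ℝ)) (hd : 4 * Module.finrank ℝ V + Real.log m ≤ c * (ε / 32) * m) :
    (Measure.pi fun _ : Fin m => stdGaussian V).real
      {a | (∀ ℓ, ⟪a ℓ, x⟫ ^ 2 ≤ B) ∧ ε < ‖spectralOp a x - spikedId x‖} ≤ 2 / m := by
  obtain ⟨s, hcard, hs⟩ := exists_isHalfNet_card_le_exp V
  set d : ℝ := (Module.finrank ℝ V : ℝ)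
  have hm0 : (0 : ℝ) < m := by linarith
  let E (q : V × V) : Set (Fin m → V) :=
    {a | ε / 16 ≤ |(m : ℝ)⁻¹ * ∑ ℓ, truncProduct B x (q.1 + (1 / 2 : ℝ) • q.2) (a ℓ) -
      ∫ a, truncProduct B x (q.1 + (1 / 2 : ℝ) • q.2) a ∂stdGaussian V|}
  have hsub : {a : Fin m → V | (∀ ℓ, ⟪a ℓ, x⟫ ^ 2 ≤ B) ∧ ε < ‖spectralOp a x - spikedId x‖} ⊆
      ⋃ q ∈ s ×ˢ s, E q := fun a ⟨htrunc, hlarge⟩ => by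
    by_contra hnot
    simp only [Set.mem_iUnion₂, not_exists, Finset.mem_product] at hnot
    exact hlarge.not_ge <| hs.norm_spectralOp_sub_spikedId_le hB hε hx htrunc fun v hv v' hv' =>
      (not_le.1 (hnot (v, v') ⟨hv, hv'⟩)).le
  calc _ ≤ (s ×ˢ s).card * (2 * Real.exp (-(c * (ε / 16 / 2) * m))) :=
        measureReal_le_card_mul_of_subset_biUnion hsub fun q hq =>
          measureReal_le_abs_mean_truncProduct_sub_le hB.le hc hcB (by linarith) hx
            (hs.norm_add_half_smul_le (Finset.mem_product.1 hq).1 (Finset.mem_product.1 hq).2) hm0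
    _ ≤ Real.exp (2 * d) * Real.exp (2 * d) * (2 * Real.exp (-(4 * d + Real.log m))) := by
        rw [Finset.card_product]
        push_cast
        gcongr
        linarith
    _ = 2 * Real.exp (2 * d + 2 * d + -(4 * d + Real.log m)) := by
        rw [Real.exp_add, Real.exp_add]
        ring
    _ = 2 / m := by
        rw [show 2 * d + 2 * d + -(4 * d + Real.log m) = -Real.log m by ring, Real.exp_neg,
          Real.exp_log hm0]
        ring

lemma measureReal_lt_abs_meanIntensity_sub_one_le (hε : 0 ≤ ε) (hε1 : ε ≤ 1) (hx : ‖x‖ = 1)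
    (hm : 1 ≤ (m : ℝ)) (hlog : 1024 * Real.log m ≤ ε ^ 2 * m) :
    (Measure.pi fun _ : Fin m => stdGaussian V).real {a | ε < |meanIntensity a x - 1|} ≤
      2 / m := by
  have hm0 : (0 : ℝ) < m := by linarith
  have hbound := sq_inner_sq_mul_exp_le (c := ε / 512)
    (by rw [abs_of_nonneg (by positivity)]; linarith) x
  have hexp := (integrable_exp_inner_sq_div_four hx.le).const_mul 128
  have hint : Integrable (fun a => (⟪a, x⟫ ^ 2) ^ 2 * Real.exp |ε / 512 * ⟪a, x⟫ ^ 2|)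
      (stdGaussian V) := by
    refine hexp.mono' (by fun_prop) (ae_of_all _ fun a => ?_)
    rw [Real.norm_of_nonneg (by positivity)]
    exact hbound a
  have hmoment : ∫ a, (⟪a, x⟫ ^ 2) ^ 2 * Real.exp |ε / 512 * ⟪a, x⟫ ^ 2| ∂stdGaussian V ≤ 256 := by
    refine (integral_mono hint hexp hbound).trans ?_
    rw [integral_const_mul]
    linarith [integral_exp_inner_sq_div_four_le hx.le]
  have hdev := measureReal_pi_le_abs_mean_sub_le (by fun_prop) (integrable_inner_pow x 2) hint
    hmoment (by positivity) hm0 ε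
  rw [integral_inner_pow_two, hx, one_pow] at hdev
  calc _ ≤ _ := measureReal_mono (Set.ofPred_subset_ofPred.2 fun a ha => le_of_lt ha)
    _ ≤ _ := hdev
    _ ≤ 2 * Real.exp (-Real.log m) := by
        gcongr
        linarith
    _ = 2 / m := by
        rw [Real.exp_neg, Real.exp_log hm0]
        ring

end SpectralConcentration

section Measurability

variable {V : Type*} [NormedAddCommGroup V] [InnerProductSpace ℝ V]
  [SecondCountableTopology V] [MeasurableSpace V] [BorelSpace V] {m : ℕ}

lemma measurable_sampleCov_apply {Ω : Type*} [MeasurableSpace Ω] {a : Ω → Fin m → V}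
    {c : Ω → Fin m → ℝ} {u : Ω → V} (ha : Measurable a) (hc : Measurable c) (hu : Measurable u) :
    Measurable fun ω => sampleCov (a ω) (c ω) (u ω) := by
  simp only [sampleCov_apply]
  fun_prop

lemma measurable_spectralOp_apply (x : V) {u : (Fin m → V) → V} (hu : Measurable u) :
    Measurable fun a => spectralOp a x (u a) :=
  measurable_sampleCov_apply measurable_id (by fun_prop) hu

lemma measurable_lossGradient (x : V) {u : (Fin m → V) → V} (hu : Measurable u) :
    Measurable fun a => lossGradient a x (u a) :=
  measurable_sampleCov_apply measurable_id (by fun_prop) hu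

lemma measurable_meanIntensity (x : V) : Measurable fun a : Fin m → V => meanIntensity a x := by
  unfold meanIntensity
  fun_prop

lemma measurable_powerIter_spectralOp (x : V) (k : ℕ) :
    Measurable fun a : Fin m → V => powerIter (spectralOp a x) x k := by
  induction k with
  | zero => exact measurable_const
  | succ k ih =>
    simp only [powerIter_succ, powerStep]
    have h := measurable_spectralOp_apply x ih
    fun_prop

lemma measurable_proxyFlow (α : ℝ) (x : V) (k : ℕ) :
    Measurable fun a : Fin m → V => proxyFlow α a x k := by
  have hmean := measurable_meanIntensity (m := m) x
  induction k with
  | zero =>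
    have h := measurable_powerIter_spectralOp (m := m) x m
    exact (hmean.sqrt.div h.norm).smul h
  | succ k ih =>
    simp only [proxyFlow_succ, wirtingerStep]
    exact ih.sub ((hmean.const_div α).smul (measurable_lossGradient x ih))

end Measurability

lemma pow_mul_le_one_of_le {m : ℕ} {T : ℝ} (hm : 1280000 ≤ (m : ℝ)) (hT : T ≤ m) :
    (799 / 800) ^ m * T ≤ 1 := by
  have hpow : (799 / 800 : ℝ) ^ m ≤ Real.exp (-(m / 800)) := by
    calc (799 / 800 : ℝ) ^ m ≤ Real.exp (-(1 / 800)) ^ m := by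
          gcongr
          linarith [Real.add_one_le_exp (-(1 / 800) : ℝ)]
      _ = Real.exp (-(m / 800)) := by
          rw [← Real.exp_nat_mul]
          ring_nf
  have hexp : (m : ℝ) ≤ Real.exp (m / 800) := by
    nlinarith [Real.quadratic_le_exp_of_nonneg (x := (m : ℝ) / 800) (by positivity)]
  calc (799 / 800 : ℝ) ^ m * T ≤ (799 / 800) ^ m * m := by gcongr
    _ ≤ Real.exp (-(m / 800)) * Real.exp (m / 800) := by gcongr
    _ = 1 := by rw [← Real.exp_add, neg_add_cancel, Real.exp_zero]

section GoodEvent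

variable {V : Type*} [NormedAddCommGroup V] [InnerProductSpace ℝ V] {m : ℕ} {x : V} {N : ℝ}

lemma regime_of_mul_log_le (hL : 10 ^ 9 ≤ Real.log m) (hLN : Real.log m ≤ N)
    (hN : N * Real.log m ≤ m / 10 ^ 18) :
    Regime m (104 * √(Real.log m)) (104 * √N) (1 / 40000) where
  one_le_incoherence := by
    linarith [Real.one_le_sqrt.2 (by linarith : 1 ≤ Real.log m)]
  incoherence_le := by gcongr
  radius_pos := by norm_num
  radius_le := by norm_num
  sq_mul_sq_le := by
    rw [mul_pow, mul_pow, Real.sq_sqrt (by linarith), Real.sq_sqrt (by linarith)]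
    linarith
  pow_mul_le := by
    have hm : 10 ^ 18 * (10 ^ 9 * N) ≤ m := by nlinarith
    refine pow_mul_le_one_of_le (by linarith) ?_
    rw [← Real.sqrt_sq (by norm_num : (0 : ℝ) ≤ 104), ← Real.sqrt_mul (by norm_num)]
    refine Real.sqrt_le_left (by positivity) |>.2 ?_
    nlinarith

lemma HasTailBound.goodSample {a : Fin m → V} (htail : HasTailBound a 48 N)
    (hL : 10 ^ 9 ≤ Real.log m) (hLN : Real.log m ≤ N) (hN : N * Real.log m ≤ m / 10 ^ 18)
    (hspec : ‖spectralOp a x - spikedId x‖ ≤ 1 / 640000)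
    (hmean : |meanIntensity a x - 1| ≤ 1 / 640000)
    (hincoh : ∀ ℓ, |⟪a ℓ, x⟫| ≤ 104 * √(Real.log m))
    (hpower : ∀ ℓ, |⟪a ℓ, powerIter (spectralOp (leaveOneOut a ℓ) x) x m⟫| ≤
      104 * √(Real.log m) * ‖powerIter (spectralOp (leaveOneOut a ℓ) x) x m‖)
    (hflow : ∀ ℓ, ∀ k ≤ m, |⟪a ℓ, proxyFlow (1 / 200) (leaveOneOut a ℓ) x k - x⟫| ≤
      104 * √(Real.log m) * ‖proxyFlow (1 / 200) (leaveOneOut a ℓ) x k - x‖) :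
    GoodSample a x (104 * √(Real.log m)) (104 * √N) (1 / 40000) := by
  have hm := (regime_of_mul_log_le hL hLN hN).sampleSize_pos
  have hS := (regime_of_mul_log_le hL hLN hN).one_le_incoherence
  have hS2 : (104 * √(Real.log m)) ^ 2 * N = 104 ^ 2 * (N * Real.log m) := by
    rw [mul_pow, Real.sq_sqrt (by linarith)]
    ring
  exact {
    norm_spectralOp_sub_le := hspec.trans_eq (by norm_num)
    abs_meanIntensity_sub_one_le := hmean.trans_eq (by norm_num)
    abs_inner_le := hincoh
    norm_le := fun ℓ => by
      convert htail.norm_le hm (by norm_num) (by linarith) hLN (by linarith) ℓ using 2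
      norm_num
    norm_spectralOp_le := fun g hg hgS => by
      refine (htail.norm_spectralOp_le hm (by norm_num) (by linarith) hLN (by linarith)
        (by norm_num) (by norm_num) hS (by rw [hS2]; linarith) hg hgS).trans ?_
      have hquot : 72 * 48 * (104 ^ 2 * (N * Real.log m)) / m ≤ 1 / 10000 := by
        rw [div_le_iff₀ hm]
        linarith
      rw [hS2]
      linarith
    abs_inner_proxyFlow_le := hflow
    abs_inner_powerIter_le := hpower }

variable [FiniteDimensional ℝ V] [MeasurableSpace V] [BorelSpace V]

lemma measureReal_exists_lt_abs_inner_leaveOneOut_le {ι : Type*} (s : Finset ι)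
    {F : ι → (Fin m → V) → V} (hF : ∀ i, Measurable (F i)) {t : ℝ} (ht : 0 ≤ t)
    (hm : 1 ≤ (m : ℝ)) (htm : 16 * Real.log m ≤ t ^ 2) (hs : (s.card : ℝ) ≤ 2 * m) :
    (Measure.pi fun _ : Fin m => stdGaussian V).real
      {a | ∃ ℓ, ∃ i ∈ s, t * ‖F i (leaveOneOut a ℓ)‖ < |⟪a ℓ, F i (leaveOneOut a ℓ)⟫|} ≤
        4 / m := by
  have hm0 : 0 < (m : ℝ) := by linarith
  have hexp : Real.exp (-(t ^ 2 / 4)) ≤ (m : ℝ)⁻¹ ^ 4 := by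
    calc Real.exp (-(t ^ 2 / 4)) ≤ Real.exp ((4 : ℕ) * -Real.log m) := by
          gcongr
          push_cast
          linarith
      _ = (m : ℝ)⁻¹ ^ 4 := by rw [Real.exp_nat_mul, Real.exp_neg, Real.exp_log hm0]
  have hsub : {a : Fin m → V | ∃ ℓ, ∃ i ∈ s,
      t * ‖F i (leaveOneOut a ℓ)‖ < |⟪a ℓ, F i (leaveOneOut a ℓ)⟫|} ⊆
        ⋃ p ∈ (Finset.univ : Finset (Fin m)) ×ˢ s, {a : Fin m → V |
          t * ‖F p.2 (leaveOneOut a p.1)‖ < |⟪a p.1, F p.2 (leaveOneOut a p.1)⟫|} := by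
    rintro a ⟨ℓ, i, hi, h⟩
    exact Set.mem_iUnion₂.2 ⟨(ℓ, i), Finset.mem_product.2 ⟨Finset.mem_univ ℓ, hi⟩, h⟩
  calc _ ≤ ((Finset.univ : Finset (Fin m)) ×ˢ s).card * (2 * (m : ℝ)⁻¹ ^ 4) :=
        measureReal_le_card_mul_of_subset_biUnion hsub fun p _ =>
          (measureReal_lt_abs_inner_leaveOneOut_le (hF p.2) p.1 ht).trans (by gcongr)
    _ ≤ m * (2 * m) * (2 * (m : ℝ)⁻¹ ^ 4) := by
        rw [Finset.card_product, Finset.card_univ, Fintype.card_fin]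
        push_cast
        gcongr
    _ = 4 / m * (m : ℝ)⁻¹ := by
        field_simp
        norm_num
    _ ≤ 4 / m := mul_le_of_le_one_right (by positivity) (inv_le_one_of_one_le₀ hm)

lemma measureReal_lt_norm_spectralOp_sub_spikedId_le_of_log (hx : ‖x‖ = 1)
    (hL : 10 ^ 9 ≤ Real.log m)
    (hN : (Module.finrank ℝ V + Real.log m) * Real.log m ≤ m / 10 ^ 18) :
    (Measure.pi fun _ : Fin m => stdGaussian V).real
      {a | (∀ ℓ, |⟪a ℓ, x⟫| ≤ 104 * √(Real.log m)) ∧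
        1 / 640000 < ‖spectralOp a x - spikedId x‖} ≤ 2 / m := by
  have hm := (regime_of_mul_log_le hL (by simp) hN).sampleSize_pos
  have hlogm := Real.log_le_sub_one_of_pos hm
  refine (measureReal_mono (Set.ofPred_subset_ofPred.2 fun a ha => And.imp_left (fun h ℓ => ?_) ha)
    (measure_ne_top _ _)).trans (measureReal_lt_norm_spectralOp_sub_spikedId_le
      (B := 104 ^ 2 * Real.log m) (c := 1 / (36 * (104 ^ 2 * Real.log m))) (by linarith) ?_
        (by positivity) ?_ ?_ hx (by linarith) ?_)
  · rw [← Real.sq_sqrt (by linarith : 0 ≤ Real.log m), ← mul_pow, ← sq_abs]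
    gcongr
    exact h ℓ
  · rw [div_le_iff₀ (by linarith)]
    linarith
  · have : 0 < Real.log m := by linarith
    refine le_of_eq ?_
    field_simp
  · rw [div_mul_eq_mul_div, div_le_iff₀ (by linarith)]
    linarith
  · rw [div_mul_eq_mul_div, div_mul_eq_mul_div, le_div_iff₀ (by linarith)]
    nlinarith

theorem measureReal_not_goodSample_le (hx : ‖x‖ = 1) (hL : 10 ^ 9 ≤ Real.log m)
    (hN : (Module.finrank ℝ V + Real.log m) * Real.log m ≤ m / 10 ^ 18) :
    (Measure.pi fun _ : Fin m => stdGaussian V).real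
      {a | ¬GoodSample a x (104 * √(Real.log m)) (104 * √(Module.finrank ℝ V + Real.log m))
        (1 / 40000)} ≤ 18 / m := by
  have hLN : Real.log m ≤ Module.finrank ℝ V + Real.log m := by simp
  have hm0 := (regime_of_mul_log_le hL hLN hN).sampleSize_pos
  have hm : 1 ≤ (m : ℝ) := by linarith [Real.log_le_sub_one_of_pos hm0]
  have ht : 0 ≤ 104 * √(Real.log m) := by positivity
  have htm : 16 * Real.log m ≤ (104 * √(Real.log m)) ^ 2 := by
    rw [mul_pow, Real.sq_sqrt (by linarith)]
    linarith
  have htail := measureReal_not_hasTailBound_le (V := V) hm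
  have hmean := measureReal_lt_abs_meanIntensity_sub_one_le (ε := 1 / 640000) (by norm_num)
    (by norm_num) hx hm (by nlinarith)
  have hspec := measureReal_lt_norm_spectralOp_sub_spikedId_le_of_log hx hL hN
  have hself := measureReal_exists_lt_abs_inner_leaveOneOut_le {()}
    (fun _ => measurable_const (a := x)) ht hm htm (by simp; linarith)
  have hpower := measureReal_exists_lt_abs_inner_leaveOneOut_le {()}
    (fun _ => measurable_powerIter_spectralOp x m) ht hm htm (by simp; linarith)
  have hflow := measureReal_exists_lt_abs_inner_leaveOneOut_le (Finset.range (m + 1))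
    (fun k => (measurable_proxyFlow (1 / 200) x k).sub_const x) ht hm htm (by simp; linarith)
  have hunion {A B : Set (Fin m → V)} {p q : ℝ}
      (hA : (Measure.pi fun _ : Fin m => stdGaussian V).real A ≤ p)
      (hB : (Measure.pi fun _ : Fin m => stdGaussian V).real B ≤ q) :=
    (measureReal_union_le A B).trans (add_le_add hA hB)
  refine (measureReal_mono (fun a ha => ?_) (measure_ne_top _ _)).trans
    ((hunion htail (hunion hmean (hunion hspec (hunion hself (hunion hpower hflow))))).trans ?_)
  · contrapose! ha
    simp only [Set.mem_union, not_or, Set.mem_ofPred_eq, not_not, not_and, not_exists, not_lt,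
      Finset.mem_singleton, Finset.mem_range_succ_iff, forall_const, hx, mul_one] at ha ⊢
    obtain ⟨htail, hmean, hspec, hself, hpower, hflow⟩ := ha
    exact htail.goodSample hL hLN hN (hspec hself) hmean hself hpower hflow
  · exact le_of_eq (by ring)

end GoodEvent

section Scaling

variable {V : Type*} [NormedAddCommGroup V] [InnerProductSpace ℝ V] {m : ℕ} {a : Fin m → V}
  {x z : V} {α c d : ℝ}

lemma meanIntensity_smul (a : Fin m → V) (x : V) (d : ℝ) :
    meanIntensity a (d • x) = d ^ 2 * meanIntensity a x := by
  simp only [meanIntensity, real_inner_smul_right, mul_pow, ← Finset.mul_sum]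
  ring

lemma spectralOp_smul (a : Fin m → V) (x : V) (d : ℝ) :
    spectralOp a (d • x) = d ^ 2 • spectralOp a x := by
  simp only [spectralOp, real_inner_smul_right, mul_pow, ← map_smul]
  rfl

lemma lossGradient_smul_smul (hcd : c ^ 2 = d ^ 2) (a : Fin m → V) (x z : V) :
    lossGradient a (d • x) (c • z) = (c * d ^ 2) • lossGradient a x z := by
  simp only [lossGradient, real_inner_smul_right, mul_pow, hcd, ← mul_sub, map_smul, mul_smul]
  congr 1
  exact congrArg (· z) (map_smul (sampleCov a) (d ^ 2) fun ℓ => ⟪a ℓ, z⟫ ^ 2 - ⟪a ℓ, x⟫ ^ 2)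

lemma wirtingerStep_smul_smul (hd : d ≠ 0) (hcd : c ^ 2 = d ^ 2) (α : ℝ) (a : Fin m → V)
    (x z : V) : wirtingerStep α a (d • x) (c • z) = c • wirtingerStep α a x z := by
  rw [wirtingerStep, wirtingerStep, lossGradient_smul_smul hcd, meanIntensity_smul, smul_sub,
    smul_smul, smul_smul]
  congr 2
  rw [div_mul_eq_mul_div, mul_left_comm, mul_comm α, mul_div_assoc,
    mul_div_mul_left _ _ (pow_ne_zero 2 hd)]

lemma IsSpectralInit.smul_smul (h : IsSpectralInit a x z) (hd : d ≠ 0) (hcd : c ^ 2 = d ^ 2) :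
    IsSpectralInit a (d • x) (c • z) := by
  obtain ⟨lam, hlam, htop⟩ := h.exists_top_eigenvalue
  have hd2 : 0 < d ^ 2 := by positivity
  refine ⟨⟨d ^ 2 * lam, ?_, fun μ w hw hμ => ?_⟩, ?_⟩
  · rw [spectralOp_smul, _root_.smul_apply, map_smul, hlam]
    module
  · have hscaled : spectralOp a x w = (μ / d ^ 2) • w := by
      rw [div_eq_inv_mul, mul_smul, ← hμ, spectralOp_smul, _root_.smul_apply,
        inv_smul_smul₀ hd2.ne']
    rw [← div_le_iff₀' hd2]
    exact htop _ w hw hscaled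
  · rw [norm_smul, mul_pow, Real.norm_eq_abs, sq_abs, hcd, h.norm_sq_eq, meanIntensity_smul]

/-- Every Wirtinger flow with stepsize `α / ‖z₀‖²` and spectral initialization starts within
relative distance `1 / 8` of `±x` and converges to `±x` linearly at rate `ρ`. -/
def FlowConverges (α ρ : ℝ) (a : Fin m → V) (x : V) : Prop :=
  ∀ z : ℕ → V, IsSpectralInit a x (z 0) → (∀ k, z (k + 1) = wirtingerStep α a x (z k)) →
    min ‖z 0 - x‖ ‖z 0 + x‖ ≤ 1 / 8 * ‖x‖ ∧
      ∀ k, min ‖z k - x‖ ‖z k + x‖ ≤ ρ ^ k * min ‖z 0 - x‖ ‖z 0 + x‖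

lemma flowConverges_zero (α ρ : ℝ) (a : Fin m → V) : FlowConverges α ρ a 0 := fun z hinit hz => by
  have hzero (k : ℕ) : z k = 0 := by
    induction k with
    | zero => simpa [meanIntensity] using hinit.norm_sq_eq
    | succ k ih => simp [hz, ih, wirtingerStep]
  simp [hzero]

lemma min_norm_sub_norm_add_of_inner_nonneg (h : 0 ≤ ⟪x, z⟫) :
    min ‖z - x‖ ‖z + x‖ = ‖z - x‖ := by
  refine min_eq_left (le_of_sq_le_sq ?_ (norm_nonneg _))
  rw [norm_sub_sq_real, norm_add_sq_real, real_inner_comm]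
  linarith

lemma GoodSample.flowConverges [FiniteDimensional ℝ V] {S T δ : ℝ} (R : Regime m S T δ)
    (G : GoodSample a (‖x‖⁻¹ • x) S T δ) (hx : x ≠ 0) :
    FlowConverges (1 / 200) (799 / 800) a x := fun z hinit hz => by
  wlog hxz : 0 ≤ ⟪x, z 0⟫ generalizing z
  · have hneg (k : ℕ) : min ‖-z k - x‖ ‖-z k + x‖ = min ‖z k - x‖ ‖z k + x‖ := by
      rw [min_comm, ← norm_neg (z k - x), ← norm_neg (z k + x), neg_sub', neg_add', sub_neg_eq_add]
    have h := this (fun k => -z k)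
      (by simpa using hinit.smul_smul (c := -1) (d := 1) one_ne_zero (by norm_num))
      (fun k => by simpa [hz] using
        (wirtingerStep_smul_smul (c := -1) one_ne_zero (by norm_num) (1 / 200) a x (z k)).symm)
      (by rw [inner_neg_right]; linarith)
    simpa only [hneg] using h
  set d := ‖x‖⁻¹
  have hd : 0 < d := inv_pos.2 (norm_pos_iff.2 hx)
  have hunit : ‖d • x‖ = 1 := norm_smul_inv_norm (𝕜 := ℝ) hx
  have hinit' := hinit.smul_smul hd.ne' (rfl : d ^ 2 = d ^ 2)
  have hsign : 0 ≤ ⟪d • x, d • z 0⟫ := by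
    rw [real_inner_smul_left, real_inner_smul_right]
    positivity
  have hscale (k : ℕ) : ‖d • z k - d • x‖ = d * ‖z k - x‖ := by
    rw [← smul_sub, norm_smul, Real.norm_of_nonneg hd.le]
  rw [min_norm_sub_norm_add_of_inner_nonneg hxz]
  refine ⟨?_, fun k => (min_le_left _ _).trans ?_⟩
  · have hclose := (G.norm_spectralInit_sub_le R hunit hinit' hsign).1
    rw [hscale, inv_mul_le_iff₀ (norm_pos_iff.2 hx), mul_comm] at hclose
    exact hclose.trans (mul_le_mul_of_nonneg_right (by linarith [R.radius_le, R.radius_pos])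
      (norm_nonneg x))
  · have hpow := G.norm_sub_le_pow R hunit (z := fun k => d • z k) hinit' hsign
      (fun k => by rw [hz, wirtingerStep_smul_smul hd.ne' rfl]) k
    rw [hscale, hscale, mul_left_comm] at hpow
    exact le_of_mul_le_mul_left hpow hd

end Scaling

section SampleSize

lemma ten_pow_mul_le_exp {y : ℝ} (hy : 10 ^ 8 ≤ y) : 10 ^ 24 * y ≤ Real.exp y := by
  have hexp := Real.pow_div_factorial_le_exp y (by linarith) 5
  have hpow : (10 ^ 8) ^ 4 * y ≤ y ^ 4 * y := by gcongr
  norm_num [Nat.factorial] at hexp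
  linarith

variable {n M : ℝ}

lemma le_log_of_exp_mul_le {C : ℝ} (hn : 2 ≤ n) (h : Real.exp C * n * Real.log n ≤ M) :
    C ≤ Real.log M := by
  have hlog : 1 / 2 ≤ Real.log n := by
    linarith [Real.log_two_gt_d9, Real.log_le_log (by norm_num) hn]
  have hone : 1 ≤ n * Real.log n := by nlinarith
  have hexp : Real.exp C ≤ M := by
    refine le_trans ?_ h
    rw [mul_assoc]
    exact le_mul_of_one_le_right (Real.exp_pos C).le hone
  exact (Real.le_log_iff_exp_le ((Real.exp_pos C).trans_le hexp)).2 hexp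

lemma add_log_mul_log_le (hn : 2 ≤ n) (h : Real.exp (10 ^ 9) * n * Real.log n ≤ M) :
    (n + Real.log M) * Real.log M ≤ M / 10 ^ 18 := by
  have hL := le_log_of_exp_mul_le hn h
  have hM : 0 < M := by
    refine lt_of_lt_of_le ?_ h
    have := Real.log_pos (by linarith : 1 < n)
    positivity
  have hsqrt : √M = Real.exp (Real.log M / 2) := by
    rw [Real.exp_half, Real.exp_log hM]
  have hlog_le : 10 ^ 23 * Real.log M ≤ √M := by
    rw [hsqrt]
    linarith [ten_pow_mul_le_exp (y := Real.log M / 2) (by linarith)]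
  have hMsq : √M * √M = M := Real.mul_self_sqrt hM.le
  have hsq : Real.log M * Real.log M ≤ M / 10 ^ 20 := by nlinarith
  have hmul : n * Real.log M ≤ M / 10 ^ 20 := by
    rcases le_total M (n ^ 2) with hcase | hcase
    · have hlog : Real.log M ≤ 2 * Real.log n := by
        simpa using Real.log_le_log hM hcase
      have hconst : (10 : ℝ) ^ 30 ≤ Real.exp (10 ^ 9) := by
        linarith [ten_pow_mul_le_exp (y := 10 ^ 9) (by norm_num)]
      have hnlog : 10 ^ 30 * (n * Real.log n) ≤ Real.exp (10 ^ 9) * (n * Real.log n) := by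
        have := Real.log_nonneg (by linarith : 1 ≤ n)
        gcongr
      nlinarith
    · have hn' : n ≤ √M := Real.le_sqrt_of_sq_le hcase
      nlinarith
  linarith

end SampleSize

section Concentration

variable {V : Type*} [NormedAddCommGroup V] [InnerProductSpace ℝ V] [FiniteDimensional ℝ V]
  [MeasurableSpace V] [BorelSpace V] {m : ℕ}

theorem measureReal_not_flowConverges_le (x : V)
    (hm : Real.exp (10 ^ 9) * Module.finrank ℝ V * Real.log (Module.finrank ℝ V) ≤ m) :
    (Measure.pi fun _ : Fin m => stdGaussian V).real {a | ¬FlowConverges (1 / 200) (799 / 800) a x}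
      ≤ 18 * (Module.finrank ℝ V : ℝ)⁻¹ := by
  rcases eq_or_ne x 0 with rfl | hx
  · simp [flowConverges_zero]
  have hpos : 0 < Module.finrank ℝ V := Module.finrank_pos_iff_exists_ne_zero.2 ⟨x, hx⟩
  rcases Nat.lt_or_ge (Module.finrank ℝ V) 2 with hlt | htwo
  · obtain hone : Module.finrank ℝ V = 1 := by omega
    rw [hone, Nat.cast_one, inv_one, mul_one]
    exact measureReal_le_one.trans (by norm_num)
  have htwo' : (2 : ℝ) ≤ Module.finrank ℝ V := by exact_mod_cast htwo
  have hL := le_log_of_exp_mul_le htwo' hm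
  have hN := add_log_mul_log_le htwo' hm
  have hdim : (Module.finrank ℝ V : ℝ) ≤ m := by nlinarith
  have hunit : ‖‖x‖⁻¹ • x‖ = 1 := norm_smul_inv_norm (𝕜 := ℝ) hx
  have R := regime_of_mul_log_le hL (by linarith) hN
  calc (Measure.pi fun _ : Fin m => stdGaussian V).real
        {a | ¬FlowConverges (1 / 200) (799 / 800) a x}
    _ ≤ 18 / m :=
        (measureReal_mono (Set.compl_subset_compl.2 fun a (hgood : GoodSample a _ _ _ _) =>
          hgood.flowConverges R hx)).trans (measureReal_not_goodSample_le hunit hL hN)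
    _ ≤ 18 * (Module.finrank ℝ V : ℝ)⁻¹ := by
        rw [div_eq_mul_inv]
        gcongr

end Concentration

section Coordinates

variable {n m : ℕ}

lemma l2norm_eq_norm_toLp (u : Fin n → ℝ) : l2norm u = ‖WithLp.toLp 2 u‖ := by
  simp [l2norm, EuclideanSpace.norm_eq]

lemma signDist_eq_min_norm_toLp (u v : Fin n → ℝ) :
    signDist u v = min ‖WithLp.toLp 2 u - WithLp.toLp 2 v‖ ‖WithLp.toLp 2 u + WithLp.toLp 2 v‖ := by
  rw [signDist, l2norm_eq_norm_toLp, l2norm_eq_norm_toLp, WithLp.toLp_sub, WithLp.toLp_add]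

lemma sum_mul_eq_inner_toLp (u v : Fin n → ℝ) :
    ∑ i, u i * v i = ⟪WithLp.toLp 2 u, WithLp.toLp 2 v⟫ := by
  simp [EuclideanSpace.inner_toLp_toLp, dotProduct, mul_comm]

lemma toLp_smul_sum_vecMulVec_mulVec (a : Fin m → Fin n → ℝ) (c : Fin m → ℝ) (u : Fin n → ℝ) :
    WithLp.toLp 2 (((1 / (m : ℝ)) • ∑ ℓ, c ℓ • vecMulVec (a ℓ) (a ℓ)) *ᵥ u) =
      sampleCov (fun ℓ => WithLp.toLp 2 (a ℓ)) c (WithLp.toLp 2 u) := by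
  simp only [sampleCov_apply, ← sum_mul_eq_inner_toLp, one_div, smul_mulVec, sum_mulVec,
    vecMulVec_mulVec, op_smul_eq_smul, smul_smul, WithLp.toLp_smul, WithLp.toLp_sum, dotProduct]

lemma meanIntensity_toLp (a : Fin m → Fin n → ℝ) (x : Fin n → ℝ) :
    meanIntensity (fun ℓ => WithLp.toLp 2 (a ℓ)) (WithLp.toLp 2 x) =
      (1 / (m : ℝ)) * ∑ ℓ, (∑ i, a ℓ i * x i) ^ 2 := by
  simp only [meanIntensity, sum_mul_eq_inner_toLp, one_div]

lemma wirtingerStep_toLp (α : ℝ) (a : Fin m → Fin n → ℝ) (x z : Fin n → ℝ) :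
    wirtingerStep α (fun ℓ => WithLp.toLp 2 (a ℓ)) (WithLp.toLp 2 x) (WithLp.toLp 2 z) =
      WithLp.toLp 2 (z - (α / ((1 / (m : ℝ)) * ∑ ℓ, (∑ i, a ℓ i * x i) ^ 2) / m) •
        ∑ ℓ, (((∑ i, a ℓ i * z i) ^ 2 - (∑ i, a ℓ i * x i) ^ 2) * ∑ i, a ℓ i * z i) • a ℓ) := by
  simp only [wirtingerStep, lossGradient, sampleCov_apply, meanIntensity_toLp,
    ← sum_mul_eq_inner_toLp, WithLp.toLp_sub, WithLp.toLp_smul, WithLp.toLp_sum, smul_smul,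
    div_eq_mul_inv]

lemma isSpectralInit_toLp {a : Fin m → Fin n → ℝ} {x z : Fin n → ℝ}
    (htop : ∃ lam : ℝ,
      ((1 / (m : ℝ)) • ∑ ℓ, ((∑ i, a ℓ i * x i) ^ 2) • vecMulVec (a ℓ) (a ℓ)) *ᵥ z = lam • z ∧
      ∀ (μ : ℝ) (w : Fin n → ℝ), w ≠ 0 →
        ((1 / (m : ℝ)) • ∑ ℓ, ((∑ i, a ℓ i * x i) ^ 2) • vecMulVec (a ℓ) (a ℓ)) *ᵥ w = μ • w →
          μ ≤ lam)
    (hnorm : l2norm z ^ 2 = (1 / (m : ℝ)) * ∑ ℓ, (∑ i, a ℓ i * x i) ^ 2) :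
    IsSpectralInit (fun ℓ => WithLp.toLp 2 (a ℓ)) (WithLp.toLp 2 x) (WithLp.toLp 2 z) := by
  have hop (w : Fin n → ℝ) (μ : ℝ) :
      spectralOp (fun ℓ => WithLp.toLp 2 (a ℓ)) (WithLp.toLp 2 x) (WithLp.toLp 2 w) =
          μ • WithLp.toLp 2 w ↔
        ((1 / (m : ℝ)) • ∑ ℓ, ((∑ i, a ℓ i * x i) ^ 2) • vecMulVec (a ℓ) (a ℓ)) *ᵥ w = μ • w := by
    rw [spectralOp, ← toLp_smul_sum_vecMulVec_mulVec, ← WithLp.toLp_smul,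
      (WithLp.toLp_injective 2).eq_iff]
    simp only [sum_mul_eq_inner_toLp]
  obtain ⟨lam, hz, hmax⟩ := htop
  refine ⟨⟨lam, (hop z lam).2 hz, fun μ w hw hμ => ?_⟩, ?_⟩
  · exact hmax μ (WithLp.ofLp w) ((WithLp.ofLp_eq_zero 2).not.2 hw) ((hop _ μ).1 hμ)
  · rw [← l2norm_eq_norm_toLp, hnorm, meanIntensity_toLp]

lemma measurePreserving_toLp_gaussianVectors (n m : ℕ) :
    MeasurePreserving (fun (a : Fin m → Fin n → ℝ) ℓ => WithLp.toLp 2 (a ℓ)) (gaussianVectors n m)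
      (Measure.pi fun _ => stdGaussian (EuclideanSpace ℝ (Fin n))) :=
  measurePreserving_pi _ _ fun _ => ⟨by fun_prop, map_pi_eq_stdGaussian⟩

lemma gaussianVectors_not_flowConverges_le (x : Fin n → ℝ)
    (hm : Real.exp (10 ^ 9) * n * Real.log n ≤ m) :
    gaussianVectors n m {a | ¬FlowConverges (1 / 200) (799 / 800) (fun ℓ => WithLp.toLp 2 (a ℓ))
      (WithLp.toLp 2 x)} ≤ ENNReal.ofReal (18 * (n : ℝ)⁻¹) := by
  refine ((measurePreserving_toLp_gaussianVectors n m).measure_preimage_le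
    {a | ¬FlowConverges (1 / 200) (799 / 800) a (WithLp.toLp 2 x)}).trans ?_
  have h := measureReal_not_flowConverges_le (m := m) (WithLp.toLp 2 x)
    (by rwa [finrank_euclideanSpace_fin])
  rw [finrank_euclideanSpace_fin] at h
  rw [← ofReal_measureReal]
  exact ENNReal.ofReal_le_ofReal h

end Coordinates

end WirtingerFlow

/-- Wirtinger flow with spectral initialization and a suitable constant
stepsize `α_k = α/‖z₀‖₂²` converges linearly (up to global sign) to `x` from
`m ≥ C n log n` Gaussian phaseless measurements, with probability `≥ 1 − C' n^{−c}`. -/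
theorem wirtinger_flow : ∃ C C' c α ρ : ℝ,
    0 < C ∧ 0 < C' ∧ 0 < c ∧ 0 < α ∧ 0 < ρ ∧ ρ < 1 ∧
    ∀ (n m : ℕ) (x : Fin n → ℝ), (C * n * Real.log n ≤ m) →
      gaussianVectors n m
          {a : Fin m → Fin n → ℝ |
            ¬ ∀ z : ℕ → (Fin n → ℝ),
              -- z₀ is a top eigenvector of (1/m) Σ_ℓ y_ℓ a_ℓ a_ℓᵀ ...
              (∃ lam : ℝ,
                ((1 / (m : ℝ)) • ∑ ℓ, ((∑ i, a ℓ i * x i) ^ 2) •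
                    Matrix.vecMulVec (a ℓ) (a ℓ)).mulVec (z 0) = lam • z 0 ∧
                ∀ (μ' : ℝ) (w : Fin n → ℝ), w ≠ 0 →
                  ((1 / (m : ℝ)) • ∑ ℓ, ((∑ i, a ℓ i * x i) ^ 2) •
                      Matrix.vecMulVec (a ℓ) (a ℓ)).mulVec w = μ' • w → μ' ≤ lam) →
              -- ... rescaled so that ‖z₀‖₂² = (1/m) Σ_ℓ y_ℓ
              (l2norm (z 0)) ^ 2 = (1 / (m : ℝ)) * ∑ ℓ, (∑ i, a ℓ i * x i) ^ 2 →
              -- Wirtinger flow iteration with stepsize α_k = α/‖z₀‖₂²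
              (∀ k, z (k + 1) = z k - (α / (l2norm (z 0)) ^ 2 / m) •
                  ∑ ℓ, (((∑ i, a ℓ i * z k i) ^ 2 - (∑ i, a ℓ i * x i) ^ 2)
                      * (∑ i, a ℓ i * z k i)) • a ℓ) →
              signDist (z 0) x ≤ (1 / 8) * l2norm x ∧
              ∀ k, signDist (z k) x ≤ ρ ^ k * signDist (z 0) x}
        ≤ ENNReal.ofReal (C' * (n : ℝ) ^ (-c : ℝ)) := by
  refine ⟨Real.exp (10 ^ 9), 18, 1, 1 / 200, 799 / 800, Real.exp_pos _, by norm_num, by norm_num,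
    by norm_num, by norm_num, by norm_num, fun n m x hm => ?_⟩
  rw [Real.rpow_neg_one]
  refine (measure_mono (Set.compl_subset_compl.2 fun a hconv z htop hnorm hstep => ?_)).trans
    (WirtingerFlow.gaussianVectors_not_flowConverges_le x hm)
  obtain ⟨hinit, hlin⟩ := hconv (fun k => WithLp.toLp 2 (z k))
    (WirtingerFlow.isSpectralInit_toLp htop hnorm)
    (fun k => by rw [WirtingerFlow.wirtingerStep_toLp, hstep, hnorm])
  simp only [WirtingerFlow.signDist_eq_min_norm_toLp, WirtingerFlow.l2norm_eq_norm_toLp]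
  exact ⟨hinit, hlin⟩
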